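/- Let $K$ be an algebraically closed field and let $\Gamma$ be a finite Brauer tree of multiplicity one, i.e. a finite tree with a cyclic ordering of the edges at each vertex. Let $Q$ be its Brauer quiver: the vertices of $Q$ are the edges of $\Gamma$, and for every vertex $x$ of $\Gamma$ and every edge $i$ at $x$ there is an arrow from $i$ to the edge following $i$ in the cyclic order at $x$ (a loop if $x$ is a leaf), so that $Q$ is a union of oriented cycles, one for each vertex of $\Gamma$, and each vertex of $Q$ lies on two of them. Let $A=KQ/I$ be the basic Brauer tree algebra, where $I$ is generated by all products of two composable arrows from different cycles and by the differences of the two full turns (one in each cycle) starting at the same vertex of $Q$. An $A$-cycle is a maximal ordered set of nonrepeating arrows of $Q$ such that the product of any two neighbouring arrows is nonzero in $A$. Let $T=(P_0\xrightarrow{f}P_1)$, with $P_0=\bigoplus_{i\in I}Ae_i$ in degree $0$ and $P_1=\bigoplus_{j\in J}Ae_j$ in degree $1$ for sets $I,J$ of vertices of $Q$, be an indecomposable partial tilting complex (that is, $\mathrm{Hom}_{D^b(A)}(T,T[k])=0$ for $k\neq 0$) which is the minimal projective presentation of an indecomposable non-projective left $A$-module not isomorphic to $P/\mathrm{soc}(P)$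 for any indecomposable projective module $P$. The diagram of $T$ is the subgraph of $Q$ consisting of the vertices in $I\cup J$, called marked, and, for all $i\in I$, $j\in J$ such that the component $Ae_i\to Ae_j$ of $f$ is nonzero, of the directed path (with its vertices and arrows) from $i$ to $j$ inside a cycle of $Q$, making less than a full turn. For two such complexes $T,S$, the restriction of $T$ with respect to $S$ is the intersection of the diagram of $T$ with the union of the $A$-cycles that contain at least one marked vertex of $S$. Let $T_i$ and $T_j$ be two such complexes, and suppose that the intersection of their diagrams (common vertices and common arrows) is connected and has more than one vertex, and that both end points of the intersection (its vertices incident to exactly one of its arrows) are sinks of the intersection. Then $$\mathrm{Hom}_{D^b(A)}(T_i,T_j[-1])=0=\mathrm{Hom}_{D^b(A)}(T_j,T_i[-1])$$ if and only if (1) neither the restriction of $T_i$ with respect to $T_j$ is contained in the restriction of $T_j$ with respect to $T_i$, nor the restriction of $T_j$ with respect to $T_i$ is contained in the restriction of $T_i$ with respect to $T_j$; or (2) the diagrams of $T_i$ and $T_j$ have a common vertex which has degree one in both of them. -/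

import Mathlib

open CategoryTheory

universe u v w

/-- A Brauer tree of multiplicity one: a tree together with a cyclic ordering of the edges at
each vertex.  A dart `d` of the tree is an edge together with the choice of one of its end points
`d.fst`; `next d` is the edge following it in the cyclic order at `d.fst`. -/
structure BrauerTree (V : Type v) where
  graph : SimpleGraph V
  isTree : graph.IsTree
  next : Equiv.Perm graph.Dart
  next_fst : ∀ d, (next d).fst = d.fst
  next_cyclic : ∀ d d', d.fst = d'.fst → next.SameCycle d d'

namespace BrauerTree

variable {V : Type v} (Γ : BrauerTree V)

/-- The vertices of the Brauer quiver are the edges of the tree. -/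
abbrev Edge : Type v := Γ.graph.edgeSet

/-- The arrows of the Brauer quiver: the arrow `d` goes from the edge of `d` to the edge that
follows it around `d.fst`.  (At a leaf this is a loop.) -/
abbrev Arrow : Type v := Γ.graph.Dart

variable {Γ}

/-- The source of an arrow of the quiver. -/
def src (d : Γ.Arrow) : Γ.Edge := ⟨d.edge, d.edge_mem⟩

/-- The target of an arrow of the quiver. -/
def tgt (d : Γ.Arrow) : Γ.Edge := src (Γ.next d)

/-- The arrow `d` lies on the directed path of the quiver that goes from `i` to `j` inside one
oriented cycle (the arrows around one vertex of the tree) without completing a full turn. -/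
def OnPath (i j : Γ.Edge) (d : Γ.Arrow) : Prop :=
  ∃ (d₀ : Γ.Arrow) (k m : ℕ), k < m ∧ m < Function.minimalPeriod Γ.next d₀ ∧
    src d₀ = i ∧ src ((Γ.next ^ m) d₀) = j ∧ d = (Γ.next ^ k) d₀

variable (K : Type u) [Field K] (Γ)

/-- The free algebra on the vertices (trivial paths) and the arrows of the quiver. -/
abbrev Free : Type _ := FreeAlgebra K (Γ.Edge ⊕ Γ.Arrow)

variable {Γ}

/-- The generator of the free algebra given by a vertex. -/
def freeVertex (i : Γ.Edge) : Γ.Free K := FreeAlgebra.ι K (Sum.inl i)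

/-- The generator of the free algebra given by an arrow. -/
def freeArrow (d : Γ.Arrow) : Γ.Free K := FreeAlgebra.ι K (Sum.inr d)

/-- The full turn starting with the arrow `d`: the product of the arrows around `d.fst`, each of
them once, beginning with `d`. -/
noncomputable def freeTurn (d : Γ.Arrow) : Γ.Free K :=
  ((List.range (Function.minimalPeriod Γ.next d)).map
    fun k => freeArrow K ((Γ.next ^ k) d)).prod

variable (Γ)

/-- The relations of the basic Brauer tree algebra.  The first five families present the path
algebra of the quiver (a path `a` followed by `b` is the product `a * b`), the last two are the
Brauer relations with multiplicity one. -/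
inductive Rel : Γ.Free K → Γ.Free K → Prop
  | idem (i : Γ.Edge) : Rel (freeVertex K i * freeVertex K i) (freeVertex K i)
  | orth (i j : Γ.Edge) (h : i ≠ j) : Rel (freeVertex K i * freeVertex K j) 0
  | one : Rel (∑ᶠ i : Γ.Edge, freeVertex K i) 1
  | src_mul (d : Γ.Arrow) : Rel (freeVertex K (src d) * freeArrow K d) (freeArrow K d)
  | mul_tgt (d : Γ.Arrow) : Rel (freeArrow K d * freeVertex K (tgt d)) (freeArrow K d)
  /-- An arrow followed by the arrow of the other cycle through its target is zero. -/
  | zero (d : Γ.Arrow) : Rel (freeArrow K d * freeArrow K (Γ.next d).symm) 0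
  /-- The two full turns at a vertex of the quiver agree. -/
  | turn (d : Γ.Arrow) : Rel (freeTurn K d) (freeTurn K d.symm)

/-- The basic Brauer tree algebra of `Γ` (multiplicity one) over `K`. -/
def Alg : Type _ := RingQuot (Γ.Rel K)

noncomputable instance : Ring (Γ.Alg K) := RingQuot.instRing (Γ.Rel K)

noncomputable instance : Algebra K (Γ.Alg K) := RingQuot.instAlgebra (Γ.Rel K)

/-- The quotient map from the free algebra. -/
noncomputable def toAlg : Γ.Free K →ₐ[K] Γ.Alg K := RingQuot.mkAlgHom K (Γ.Rel K)

variable {Γ}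

/-- The idempotent `e_i`. -/
noncomputable def idemp (i : Γ.Edge) : Γ.Alg K := Γ.toAlg K (freeVertex K i)

/-- The class of an arrow in the algebra. -/
noncomputable def arrow (d : Γ.Arrow) : Γ.Alg K := Γ.toAlg K (freeArrow K d)

/-- The indecomposable projective left module `A e_i`. -/
noncomputable abbrev Proj (i : Γ.Edge) : Ideal (Γ.Alg K) := Ideal.span {idemp K i}

/-- A nonempty sequence of nonrepeating arrows such that the product of any two neighbouring
ones is nonzero in the algebra. -/
def IsArrowChain (L : List Γ.Arrow) : Prop :=
  L ≠ [] ∧ L.Nodup ∧ L.IsChain fun d d' => arrow K d * arrow K d' ≠ 0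

/-- An `A`-cycle: a maximal ordered set of nonrepeating arrows such that the product of any two
neighbouring ones is nonzero. -/
def IsACycle (L : List Γ.Arrow) : Prop :=
  IsArrowChain K L ∧ ∀ L', IsArrowChain K L' → L <:+: L' → L' = L

variable (Γ)

/-- A subdiagram of the quiver: a set of vertices and a set of arrows. -/
@[ext]
structure Subdiagram where
  verts : Set Γ.Edge
  arrows : Set Γ.Arrow

variable {Γ}

namespace Subdiagram

instance : Inter Γ.Subdiagram := ⟨fun D E => ⟨D.verts ∩ E.verts, D.arrows ∩ E.arrows⟩⟩

instance : HasSubset Γ.Subdiagram := ⟨fun D E => D.verts ⊆ E.verts ∧ D.arrows ⊆ E.arrows⟩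

/-- The subdiagram is nonempty and any two of its vertices are joined by an undirected path of
its arrows. -/
def Connected (D : Γ.Subdiagram) : Prop :=
  D.verts.Nonempty ∧ ∀ x ∈ D.verts, ∀ y ∈ D.verts,
    Relation.EqvGen (fun a b => ∃ d ∈ D.arrows, src d = a ∧ tgt d = b) x y

/-- The vertex `x` of the subdiagram is incident to exactly one of its arrows. -/
def IsDegreeOne (D : Γ.Subdiagram) (x : Γ.Edge) : Prop :=
  x ∈ D.verts ∧ {d ∈ D.arrows | src d = x ∨ tgt d = x}.ncard = 1

/-- The vertex `x` of the subdiagram receives an arrow of it, and no arrow of it leaves `x`. -/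
def IsSink (D : Γ.Subdiagram) (x : Γ.Edge) : Prop :=
  x ∈ D.verts ∧ (∃ d ∈ D.arrows, tgt d = x) ∧ ∀ d ∈ D.arrows, src d ≠ x

end Subdiagram

/-- The socle of a module: the sum of its simple submodules. -/
def socle (R : Type*) [Ring R] (M : Type*) [AddCommGroup M] [Module R M] : Submodule R M :=
  sSup {S | IsSimpleModule R S}

variable (Γ)

/-- A homomorphism `P₀ = ⨁_{i ∈ I} A e_i ⟶ P₁ = ⨁_{j ∈ J} A e_j`, where `I` and `J` are sets of
vertices of the quiver. -/
structure TwoTerm where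
  I : Finset Γ.Edge
  J : Finset Γ.Edge
  f : (∀ i : I, Proj K i.1) →ₗ[Γ.Alg K] (∀ j : J, Proj K j.1)

variable {Γ} {K}

namespace TwoTerm

/-- The term `P₀`. -/
abbrev P₀ (T : Γ.TwoTerm K) : Type _ := ∀ i : T.I, Proj K i.1

/-- The term `P₁`. -/
abbrev P₁ (T : Γ.TwoTerm K) : Type _ := ∀ j : T.J, Proj K j.1

/-- The presented module `M = coker (P₀ ⟶ P₁)`. -/
abbrev M (T : Γ.TwoTerm K) : Type _ := T.P₁ ⧸ LinearMap.range T.f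

/-- The cochain complex `P₀ ⟶ P₁` of left modules, with `P₀` in degree `0` and `P₁` in
degree `1`. -/
noncomputable def complex (T : Γ.TwoTerm K) : CochainComplex (ModuleCat (Γ.Alg K)) ℤ :=
  HomologicalComplex.double (c := ComplexShape.up ℤ) (i₀ := 0) (i₁ := 1)
    (ModuleCat.ofHom T.f) (by simp)

/-- The complex as an object of the derived category.  The bounded derived category of finitely
generated modules is a full subcategory, so that morphisms may be computed here. -/
noncomputable def obj (T : Γ.TwoTerm K) [HasDerivedCategory.{w} (ModuleCat (Γ.Alg K))] :
    DerivedCategory (ModuleCat (Γ.Alg K)) :=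
  DerivedCategory.Q.obj T.complex

/-- The complex `P₀ ⟶ P₁` is the minimal projective presentation of an indecomposable
nonprojective module that is not isomorphic to `P / soc P` for an indecomposable
projective `P`. -/
structure IsPresentation (T : Γ.TwoTerm K) : Prop where
  range_le : LinearMap.range T.f ≤ Module.jacobson (Γ.Alg K) T.P₁
  ker_le : LinearMap.ker T.f ≤ Module.jacobson (Γ.Alg K) T.P₀
  indecomposable : Indecomposable (ModuleCat.of (Γ.Alg K) T.M)
  not_projective : ¬ Module.Projective (Γ.Alg K) T.M
  not_quot_socle : ∀ i : Γ.Edge,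
    IsEmpty (T.M ≃ₗ[Γ.Alg K] (Proj K i ⧸ socle (Γ.Alg K) (Proj K i)))

/-- `T` is an indecomposable partial tilting complex. -/
def IsIndecPartialTilting (T : Γ.TwoTerm K)
    [HasDerivedCategory.{w} (ModuleCat (Γ.Alg K))] : Prop :=
  Indecomposable T.obj ∧ ∀ k : ℤ, k ≠ 0 → ∀ φ : T.obj ⟶ T.obj⟦k⟧, φ = 0

open Classical in
/-- The component `A e_i ⟶ A e_j` of the differential. -/
noncomputable def component (T : Γ.TwoTerm K) (i : T.I) (j : T.J) :
    Proj K i.1 →ₗ[Γ.Alg K] Proj K j.1 :=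
  LinearMap.proj j ∘ₗ T.f ∘ₗ LinearMap.single (Γ.Alg K) (fun i : T.I => Proj K i.1) i

/-- The marked vertices of the diagram of `T`. -/
def marked (T : Γ.TwoTerm K) : Set Γ.Edge := {x | x ∈ T.I ∨ x ∈ T.J}

/-- The arrows of the diagram of `T`: those on the paths from `i ∈ I` to `j ∈ J` such that the
component of the differential from `A e_i` to `A e_j` is nonzero. -/
def diagramArrows (T : Γ.TwoTerm K) : Set Γ.Arrow :=
  {d | ∃ (i : T.I) (j : T.J), T.component i j ≠ 0 ∧ OnPath i.1 j.1 d}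

/-- The diagram of `T`: the marked vertices, and the paths belonging to the nonzero components of
the differential. -/
def diagram (T : Γ.TwoTerm K) : Γ.Subdiagram where
  verts := {x | x ∈ T.marked ∨ ∃ d ∈ T.diagramArrows, src d = x ∨ tgt d = x}
  arrows := T.diagramArrows

/-- The restriction of (the diagram of) `T` with respect to `S`: the intersection of the diagram
of `T` with the union of the `A`-cycles containing at least one marked vertex of `S`. -/
def restriction (T S : Γ.TwoTerm K) : Γ.Subdiagram where
  verts := {x ∈ T.diagram.verts | ∃ L : List Γ.Arrow, IsACycle K L ∧
    (∃ m ∈ S.marked, ∃ d ∈ L, src d = m ∨ tgt d = m) ∧ ∃ d ∈ L, src d = x ∨ tgt d = x}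
  arrows := {a ∈ T.diagram.arrows | ∃ L : List Γ.Arrow, IsACycle K L ∧
    (∃ m ∈ S.marked, ∃ d ∈ L, src d = m ∨ tgt d = m) ∧ a ∈ L}

end TwoTerm

end BrauerTree

section DoubleComplex

open HomologicalComplex Limits

variable {C : Type*} [Category* C] [Abelian C]

theorem CochainComplex.isStrictlyLE_double {X₀ X₁ : C} (f : X₀ ⟶ X₁)
    (h : (ComplexShape.up ℤ).Rel 0 1) :
    CochainComplex.IsStrictlyLE (double f h) 1 := by
  rw [CochainComplex.isStrictlyLE_iff]
  intro i hi
  exact isZero_double_X f h i (by lia) (by lia)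

theorem CochainComplex.projective_double_X {X₀ X₁ : C} [Projective X₀] [Projective X₁]
    (f : X₀ ⟶ X₁) (h : (ComplexShape.up ℤ).Rel 0 1) (n : ℤ) :
    Projective ((double f h).X n) := by
  by_cases h0 : n = 0
  · subst h0
    exact Projective.of_iso (doubleXIso₀ f h).symm inferInstance
  by_cases h1 : n = 1
  · subst h1
    exact Projective.of_iso (doubleXIso₁ f h (by lia)).symm inferInstance
  have hz := isZero_double_X f h n h0 h1
  exact ⟨fun _ _ _ => ⟨0, hz.eq_of_src _ _⟩⟩

/-- Chain maps from a two-term complex in degrees `0`, `1` to a complex living in degrees `≥ 1` are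
morphisms between the terms of degree one. -/
theorem CochainComplex.double_hom_eq_zero_iff {X₀ X₁ Y₀ Y₁ : C} (f : X₀ ⟶ X₁) (g : Y₀ ⟶ Y₁)
    (h : (ComplexShape.up ℤ).Rel 0 1) (N : CochainComplex C ℤ) (hN : IsZero (N.X 0))
    (e₁ : N.X 1 ≅ Y₀) (e₂ : N.X 2 ≅ Y₁) (hd : N.d 1 2 = -(e₁.hom ≫ g ≫ e₂.inv)) :
    (∀ φ : double f h ⟶ N, φ = 0) ↔ ∀ α : X₁ ⟶ Y₀, f ≫ α = 0 → α ≫ g = 0 → α = 0 := by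
  have h01 : (0 : ℤ) ≠ 1 := by lia
  constructor
  · intro H α hf hg
    have hd' : ∀ k, (ComplexShape.up ℤ).Rel 1 k → (α ≫ e₁.inv) ≫ N.d 1 k = 0 := by
      intro k hk
      obtain rfl : 2 = k := by have : (1 : ℤ) + 1 = k := hk; lia
      simp [hd, reassoc_of% hg]
    have e1 := congrArg (fun φ => φ.f 1)
      (H (mkHomFromDouble h h01 0 (α ≫ e₁.inv) (by simp [reassoc_of% hf]) hd'))
    rw [mkHomFromDouble_f₁] at e1
    simpa using e1
  · intro H φ
    have z0 : φ.f 0 = 0 := hN.eq_of_tgt _ _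
    have c01 := φ.comm 0 1
    have c12 := φ.comm 1 2
    have hα : (doubleXIso₁ f h h01).inv ≫ φ.f 1 ≫ e₁.hom = 0 := by
      apply H
      · rw [z0, zero_comp, double_d f h h01] at c01
        have := congrArg (fun x => (doubleXIso₀ f h).inv ≫ x ≫ e₁.hom) c01
        simpa using this.symm
      · rw [hd, double_d_eq_zero₀ f h 1 2 (by lia), zero_comp] at c12
        have := congrArg (fun x => (doubleXIso₁ f h h01).inv ≫ x ≫ e₂.hom) c12
        simpa using this
    apply from_double_hom_ext
    · rw [z0]; rfl
    · simpa using hα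

theorem CochainComplex.double_shift_hom_eq_zero_iff {X₀ X₁ Y₀ Y₁ : C} (f : X₀ ⟶ X₁) (g : Y₀ ⟶ Y₁)
    (h : (ComplexShape.up ℤ).Rel 0 1) :
    (∀ φ : double f h ⟶ (CategoryTheory.shiftFunctor (CochainComplex C ℤ) (-1 : ℤ)).obj
      (double g h), φ = 0) ↔
      ∀ α : X₁ ⟶ Y₀, f ≫ α = 0 → α ≫ g = 0 → α = 0 := by
  have h01 : (0 : ℤ) ≠ 1 := by lia
  have hz : IsZero ((double g h).X (-1)) := isZero_double_X g h (-1) (by lia) (by lia)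
  have e : (-1 : ℤ).negOnePow • (double g h).d 0 1 =
      -((doubleXIso₀ g h).hom ≫ g ≫ (doubleXIso₁ g h h01).inv) := by
    rw [← double_d g h h01]; simp
  exact CochainComplex.double_hom_eq_zero_iff f g h
    ((CategoryTheory.shiftFunctor (CochainComplex C ℤ) (-1 : ℤ)).obj (double g h)) hz
    (doubleXIso₀ g h : (double g h).X 0 ≅ Y₀) (doubleXIso₁ g h h01 : (double g h).X 1 ≅ Y₁) e

theorem CochainComplex.eq_zero_of_homotopy_double_shift {X₀ X₁ Y₀ Y₁ : C} (f : X₀ ⟶ X₁)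
    (g : Y₀ ⟶ Y₁) (h : (ComplexShape.up ℤ).Rel 0 1)
    (φ : double f h ⟶ (CategoryTheory.shiftFunctor (CochainComplex C ℤ) (-1 : ℤ)).obj
      (double g h)) (H : Homotopy φ 0) : φ = 0 := by
  have hz : ∀ i j : ℤ, H.hom i j = 0 := by
    intro i j
    by_cases hij : (ComplexShape.up ℤ).Rel j i
    · have hij' : j + 1 = i := hij
      by_cases hi : i = 0 ∨ i = 1
      · exact (isZero_double_X g h (j + -1) (by lia) (by lia)).eq_of_tgt _ _
      · exact (isZero_double_X f h i (by lia) (by lia)).eq_of_src _ _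
    · exact H.zero i j hij
  refine HomologicalComplex.hom_ext _ _ fun n => ?_
  have hH : H.hom = 0 := funext₂ hz
  rw [H.comm n, hH, map_zero, map_zero]
  exact (add_zero _).trans (add_zero _)

theorem DerivedCategory.double_hom_shift_eq_zero_iff [HasDerivedCategory.{w} C]
    {X₀ X₁ Y₀ Y₁ : C} [Projective X₀] [Projective X₁] (f : X₀ ⟶ X₁) (g : Y₀ ⟶ Y₁)
    (h : (ComplexShape.up ℤ).Rel 0 1) :
    (∀ φ : DerivedCategory.Q.obj (double f h) ⟶
      (DerivedCategory.Q.obj (double g h))⟦(-1 : ℤ)⟧, φ = 0) ↔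
      ∀ α : X₁ ⟶ Y₀, f ≫ α = 0 → α ≫ g = 0 → α = 0 := by
  rw [← CochainComplex.double_shift_hom_eq_zero_iff f g h]
  have := CochainComplex.isStrictlyLE_double f h
  have := CochainComplex.projective_double_X f h
  have : CochainComplex.IsKProjective (double f h) :=
    CochainComplex.isKProjective_of_projective _ 1
  have hb := CochainComplex.IsKProjective.Qh_map_bijective (double f h)
    ((HomotopyCategory.quotient C (ComplexShape.up ℤ)).obj
      ((CategoryTheory.shiftFunctor (CochainComplex C ℤ) (-1 : ℤ)).obj (double g h)))
  let e := (DerivedCategory.Q (C := C)).commShiftIso (-1 : ℤ)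
  constructor
  · intro H φ
    apply CochainComplex.eq_zero_of_homotopy_double_shift
    apply HomotopyCategory.homotopyOfEq
    apply hb.1
    have h1 : DerivedCategory.Q.map φ = 0 := by
      have := H (DerivedCategory.Q.map φ ≫ e.hom.app _)
      rw [← cancel_mono (e.hom.app (double g h)), this]
      simp
    have h2 := DerivedCategory.quotientCompQhIso_hom_naturality φ
    rw [h1, comp_zero] at h2
    rw [← cancel_mono ((DerivedCategory.quotientCompQhIso C).hom.app _), h2]
    simp
  · intro H φ
    obtain ⟨ψ, hψ⟩ := hb.2 ((DerivedCategory.quotientCompQhIso C).hom.app _ ≫ φ ≫ e.inv.app _ ≫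
      (DerivedCategory.quotientCompQhIso C).inv.app _)
    obtain ⟨ψ, rfl⟩ := (HomotopyCategory.quotient _ _).map_surjective ψ
    rw [H ψ] at hψ
    simp only [Functor.map_zero] at hψ
    have h3 : (DerivedCategory.quotientCompQhIso C).hom.app (double f h) ≫ φ = 0 := by
      rw [← cancel_mono (e.inv.app _ ≫ (DerivedCategory.quotientCompQhIso C).inv.app _)]
      rw [zero_comp, Category.assoc]
      exact hψ.symm
    rw [← cancel_epi ((DerivedCategory.quotientCompQhIso C).hom.app (double f h)), h3, comp_zero]

end DoubleComplex

namespace BrauerTree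

section Quiver

variable {V : Type v} {Γ : BrauerTree V}

instance [Finite V] : Finite Γ.Arrow :=
  Finite.of_injective (fun d : Γ.Arrow => d.toProd) SimpleGraph.Dart.toProd_injective

theorem src_eq_src_iff {d d' : Γ.Arrow} : src d = src d' ↔ d = d' ∨ d = d'.symm := by
  rw [src, src, Subtype.mk.injEq, SimpleGraph.dart_edge_eq_iff]

theorem src_symm (d : Γ.Arrow) : src d.symm = src d := src_eq_src_iff.2 (Or.inr rfl)

theorem exists_src_eq (i : Γ.Edge) : ∃ d : Γ.Arrow, src d = i := by
  obtain ⟨e, he⟩ := i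
  induction e using Sym2.ind with
  | _ x y => exact ⟨⟨(x, y), he⟩, rfl⟩

theorem fst_next_pow (d : Γ.Arrow) (k : ℕ) : ((Γ.next ^ k) d).fst = d.fst := by
  induction k with
  | zero => rfl
  | succ k ih => rw [pow_succ', Equiv.Perm.mul_apply, Γ.next_fst, ih]

theorem next_pow_succ (d : Γ.Arrow) (k : ℕ) :
    (Γ.next ^ (k + 1)) d = Γ.next ((Γ.next ^ k) d) := by
  rw [pow_succ', Equiv.Perm.mul_apply]

theorem next_pow_add (d : Γ.Arrow) (k l : ℕ) :
    (Γ.next ^ l) ((Γ.next ^ k) d) = (Γ.next ^ (k + l)) d := by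
  rw [add_comm, pow_add, Equiv.Perm.mul_apply]

/-- The number of edges at the vertex `d.fst`. -/
noncomputable def per (d : Γ.Arrow) : ℕ := Function.minimalPeriod Γ.next d

theorem next_pow_per (d : Γ.Arrow) : (Γ.next ^ per d) d = d := by
  have := Function.isPeriodicPt_minimalPeriod Γ.next d
  rwa [Function.IsPeriodicPt, Function.IsFixedPt, Equiv.Perm.iterate_eq_pow] at this

theorem per_pos [Finite V] (d : Γ.Arrow) : 0 < per d := by
  apply Function.minimalPeriod_pos_of_mem_periodicPts
  obtain ⟨n, hn, h⟩ := (isOfFinOrder_of_finite Γ.next).exists_pow_eq_one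
  refine ⟨n, hn, ?_⟩
  rw [Function.IsPeriodicPt, Function.IsFixedPt, Equiv.Perm.iterate_eq_pow, h]
  rfl

theorem next_pow_inj {d : Γ.Arrow} {k l : ℕ} (hk : k < per d) (hl : l < per d)
    (h : (Γ.next ^ k) d = (Γ.next ^ l) d) : k = l := by
  simp only [← Equiv.Perm.iterate_eq_pow] at h
  exact Function.iterate_injOn_Iio_minimalPeriod hk hl h

theorem next_pow_ne {d : Γ.Arrow} {k : ℕ} (h0 : 0 < k) (hk : k < per d) :
    (Γ.next ^ k) d ≠ d := by
  intro h
  have := next_pow_inj (l := 0) hk (by lia) (by simpa using h)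
  lia

theorem exists_next_pow_eq [Finite V] {d d' : Γ.Arrow} (h : d.fst = d'.fst) :
    ∃ k < per d, (Γ.next ^ k) d = d' := by
  obtain ⟨i, hi⟩ := (Γ.next_cyclic d d' h).exists_nat_pow_eq
  refine ⟨i % per d, Nat.mod_lt _ (per_pos d), ?_⟩
  rw [← hi, ← Equiv.Perm.iterate_eq_pow, ← Equiv.Perm.iterate_eq_pow]
  exact Function.iterate_mod_minimalPeriod_eq

theorem per_eq [Finite V] {d d' : Γ.Arrow} (h : d.fst = d'.fst) : per d = per d' := by
  obtain ⟨k, -, rfl⟩ := exists_next_pow_eq h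
  rw [per, per, ← Equiv.Perm.iterate_eq_pow]
  have hd : d ∈ Function.periodicPts Γ.next :=
    Function.minimalPeriod_pos_iff_mem_periodicPts.1 (per_pos d)
  exact (Function.minimalPeriod_apply_iterate hd k).symm

theorem per_next_pow [Finite V] (d : Γ.Arrow) (k : ℕ) : per ((Γ.next ^ k) d) = per d :=
  per_eq (fst_next_pow d k)

theorem per_next [Finite V] (d : Γ.Arrow) : per (Γ.next d) = per d :=
  per_eq (Γ.next_fst d)

open Classical in
/-- The number of steps from `d` to `d'` in the cyclic order around their common vertex. -/
noncomputable def dist [Finite V] (d d' : Γ.Arrow) : ℕ :=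
  if h : d.fst = d'.fst then (exists_next_pow_eq h).choose else 0

theorem dist_lt [Finite V] (d d' : Γ.Arrow) : dist d d' < per d := by
  unfold dist
  split_ifs with h
  · exact (exists_next_pow_eq h).choose_spec.1
  · exact per_pos d

theorem next_pow_dist [Finite V] {d d' : Γ.Arrow} (h : d.fst = d'.fst) :
    (Γ.next ^ dist d d') d = d' := by
  rw [dist, dif_pos h]
  exact (exists_next_pow_eq h).choose_spec.2

theorem dist_eq [Finite V] {d d' : Γ.Arrow} {k : ℕ} (hk : k < per d)
    (h : (Γ.next ^ k) d = d') : dist d d' = k := by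
  have hf : d.fst = d'.fst := by rw [← h, fst_next_pow]
  exact next_pow_inj (dist_lt d d') hk ((next_pow_dist hf).trans h.symm)

theorem dist_pos [Finite V] {d d' : Γ.Arrow} (h : d.fst = d'.fst) (hne : d ≠ d') :
    0 < dist d d' := by
  rcases Nat.eq_zero_or_pos (dist d d') with h0 | h0
  · have := next_pow_dist h
    rw [h0] at this
    exact absurd this hne
  · exact h0

/-- Around one vertex, the steps from `d` to `d'` and from `d'` to `d` make a full turn. -/
theorem dist_add_dist_comm [Finite V] {d d' : Γ.Arrow} (h : d.fst = d'.fst) (hne : d ≠ d') :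
    dist d d' + dist d' d = per d := by
  have h1 := dist_lt d d'
  have h3 := dist_pos h hne
  have : dist d' d = per d - dist d d' := by
    apply dist_eq
    · rw [← per_eq h]; lia
    · have := next_pow_add d (dist d d') (per d - dist d d')
      rwa [next_pow_dist h, Nat.add_sub_cancel' h1.le, next_pow_per] at this
  lia

theorem dist_add [Finite V] {a b c : Γ.Arrow} (h : a.fst = b.fst) (h' : b.fst = c.fst)
    (hlt : dist a b + dist b c < per a) : dist a c = dist a b + dist b c := by
  apply dist_eq hlt
  rw [← next_pow_add, next_pow_dist h, next_pow_dist h']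

theorem dist_sub [Finite V] {a b c : Γ.Arrow} (h : a.fst = b.fst) (h' : b.fst = c.fst)
    (hle : dist a b ≤ dist a c) : dist b c = dist a c - dist a b := by
  apply dist_eq
  · rw [← per_eq h]; have := dist_lt a c; lia
  · have := next_pow_add a (dist a b) (dist a c - dist a b)
    rwa [next_pow_dist h, Nat.add_sub_cancel' hle, next_pow_dist (h.trans h')] at this

end Quiver

section Algebra

variable {V : Type v} {Γ : BrauerTree V} (K : Type u) [Field K]

theorem toAlg_rel {x y : Γ.Free K} (h : Γ.Rel K x y) : Γ.toAlg K x = Γ.toAlg K y :=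
  RingQuot.mkAlgHom_rel K h

theorem idemp_mul_self (i : Γ.Edge) : idemp K i * idemp K i = idemp K i := by
  rw [idemp, ← map_mul]; exact toAlg_rel K (.idem i)

theorem idemp_mul_of_ne {i j : Γ.Edge} (h : i ≠ j) : idemp K i * idemp K j = 0 := by
  rw [idemp, idemp, ← map_mul, toAlg_rel K (.orth i j h), map_zero]

theorem idemp_src_mul_arrow (d : Γ.Arrow) : idemp K (src d) * arrow K d = arrow K d := by
  rw [idemp, arrow, ← map_mul]; exact toAlg_rel K (.src_mul d)

theorem arrow_mul_idemp_tgt (d : Γ.Arrow) : arrow K d * idemp K (tgt d) = arrow K d := by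
  rw [idemp, arrow, ← map_mul]; exact toAlg_rel K (.mul_tgt d)

theorem arrow_mul_arrow_symm (d : Γ.Arrow) : arrow K d * arrow K (Γ.next d).symm = 0 := by
  rw [arrow, arrow, ← map_mul, toAlg_rel K (.zero d), map_zero]

theorem idemp_mul_arrow {i : Γ.Edge} {d : Γ.Arrow} (h : i ≠ src d) :
    idemp K i * arrow K d = 0 := by
  rw [← idemp_src_mul_arrow, ← mul_assoc, idemp_mul_of_ne K h, zero_mul]

theorem arrow_mul_idemp {i : Γ.Edge} {d : Γ.Arrow} (h : tgt d ≠ i) :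
    arrow K d * idemp K i = 0 := by
  rw [← arrow_mul_idemp_tgt, mul_assoc, idemp_mul_of_ne K h, mul_zero]

theorem arrow_mul_arrow {d d' : Γ.Arrow} (h : d' ≠ Γ.next d) : arrow K d * arrow K d' = 0 := by
  by_cases hs : src d' = tgt d
  · rcases src_eq_src_iff.1 hs with h' | h'
    · exact absurd h' h
    · rw [h', arrow_mul_arrow_symm]
  · rw [← idemp_src_mul_arrow K d', ← mul_assoc, arrow_mul_idemp K (Ne.symm hs), zero_mul]

/-- The path of length `k` around `d.fst` that starts with the arrow `d`. -/
noncomputable def path (d : Γ.Arrow) : ℕ → Γ.Alg K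
  | 0 => idemp K (src d)
  | k + 1 => path d k * arrow K ((Γ.next ^ k) d)

theorem path_succ (d : Γ.Arrow) (k : ℕ) :
    path K d (k + 1) = path K d k * arrow K ((Γ.next ^ k) d) := rfl

theorem idemp_src_mul_path (d : Γ.Arrow) (k : ℕ) :
    idemp K (src d) * path K d k = path K d k := by
  induction k with
  | zero => exact idemp_mul_self K _
  | succ k ih => rw [path_succ, ← mul_assoc, ih]

theorem path_mul_idemp_src (d : Γ.Arrow) (k : ℕ) :
    path K d k * idemp K (src ((Γ.next ^ k) d)) = path K d k := by
  cases k with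
  | zero => exact idemp_mul_self K _
  | succ k => rw [path_succ, mul_assoc, next_pow_succ, ← tgt, arrow_mul_idemp_tgt]

theorem idemp_mul_path {i : Γ.Edge} {d : Γ.Arrow} (h : i ≠ src d) (k : ℕ) :
    idemp K i * path K d k = 0 := by
  rw [← idemp_src_mul_path, ← mul_assoc, idemp_mul_of_ne K h, zero_mul]

theorem path_mul_idemp {i : Γ.Edge} {d : Γ.Arrow} {k : ℕ} (h : src ((Γ.next ^ k) d) ≠ i) :
    path K d k * idemp K i = 0 := by
  rw [← path_mul_idemp_src, mul_assoc, idemp_mul_of_ne K h, mul_zero]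

theorem path_mul_path (d : Γ.Arrow) (k l : ℕ) :
    path K d k * path K ((Γ.next ^ k) d) l = path K d (k + l) := by
  induction l with
  | zero => exact path_mul_idemp_src K d k
  | succ l ih => rw [path_succ, ← mul_assoc, ih, next_pow_add, ← add_assoc, path_succ]

theorem path_one (d : Γ.Arrow) : path K d 1 = arrow K d := idemp_src_mul_arrow K d

theorem path_succ' (d : Γ.Arrow) (k : ℕ) :
    path K d (k + 1) = arrow K d * path K (Γ.next d) k := by
  rw [← path_one, add_comm k 1]
  exact (path_mul_path K d 1 k).symm

theorem path_mul_arrow_of_ne {d d' : Γ.Arrow} {k : ℕ} (hk : 0 < k)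
    (h : d' ≠ (Γ.next ^ k) d) : path K d k * arrow K d' = 0 := by
  obtain ⟨k, rfl⟩ := Nat.exists_eq_succ_of_ne_zero hk.ne'
  rw [path_succ, mul_assoc, arrow_mul_arrow, mul_zero]
  rwa [← next_pow_succ]

theorem path_mul_path_of_ne {d d' : Γ.Arrow} {k l : ℕ} (hk : 0 < k) (hl : 0 < l)
    (h : d' ≠ (Γ.next ^ k) d) : path K d k * path K d' l = 0 := by
  obtain ⟨l, rfl⟩ := Nat.exists_eq_succ_of_ne_zero hl.ne'
  rw [path_succ', ← mul_assoc, path_mul_arrow_of_ne K hk h, zero_mul]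

theorem toAlg_prod_range (d : Γ.Arrow) (k : ℕ) :
    idemp K (src d) * Γ.toAlg K ((List.range k).map
      fun m => freeArrow K ((Γ.next ^ m) d)).prod = path K d k := by
  induction k with
  | zero => simp [path]
  | succ k ih =>
    rw [List.range_succ, List.map_append, List.prod_append, map_mul, ← mul_assoc, ih]
    simp [path_succ, arrow]

variable [Finite V]

theorem toAlg_freeTurn (d : Γ.Arrow) : Γ.toAlg K (freeTurn K d) = path K d (per d) := by
  rw [← toAlg_prod_range, freeTurn, ← per]
  obtain ⟨k, hk⟩ := Nat.exists_eq_succ_of_ne_zero (per_pos d).ne'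
  rw [hk, List.range_succ_eq_map, List.map_cons, List.prod_cons, map_mul, ← mul_assoc]
  congr 1
  exact (idemp_src_mul_arrow K d).symm

theorem path_per_symm (d : Γ.Arrow) :
    path K d (per d) = path K d.symm (per d.symm) := by
  rw [← toAlg_freeTurn, ← toAlg_freeTurn]; exact toAlg_rel K (.turn d)

theorem path_eq_zero {d : Γ.Arrow} {k : ℕ} (h : per d < k) : path K d k = 0 := by
  obtain ⟨m, rfl⟩ := Nat.exists_eq_add_of_lt h
  rw [show per d + m + 1 = per d + (m + 1) by lia, ← path_mul_path, path_per_symm,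
    path_mul_path_of_ne K (per_pos _) (Nat.succ_pos m)]
  rw [next_pow_per, next_pow_per]
  exact fun h => d.symm_ne h.symm

/-- The full turn starting at the vertex `i` of the quiver. -/
noncomputable def soc (i : Γ.Edge) : Γ.Alg K :=
  path K (exists_src_eq i).choose (per (exists_src_eq i).choose)

theorem path_per (d : Γ.Arrow) : path K d (per d) = soc K (src d) := by
  have h := (exists_src_eq (src d)).choose_spec
  rw [soc]
  rcases src_eq_src_iff.1 h with h | h
  · rw [h]
  · rw [h, path_per_symm]

theorem idemp_mul_soc (i : Γ.Edge) : idemp K i * soc K i = soc K i := by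
  obtain ⟨d, rfl⟩ := exists_src_eq i
  rw [← path_per, idemp_src_mul_path]

theorem soc_mul_idemp (i : Γ.Edge) : soc K i * idemp K i = soc K i := by
  obtain ⟨d, rfl⟩ := exists_src_eq i
  have := path_mul_idemp_src K d (per d)
  rwa [next_pow_per, path_per] at this

/-- The arrow `d` times a full turn is zero. -/
theorem path_mul_soc {d : Γ.Arrow} {k : ℕ} (hk : 0 < k) (i : Γ.Edge) :
    path K d k * soc K i = 0 := by
  obtain ⟨d', rfl⟩ := exists_src_eq i
  rw [← path_per]
  by_cases h : d' = (Γ.next ^ k) d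
  · subst h
    rw [path_mul_path, path_eq_zero]
    rw [per_next_pow]; lia
  · exact path_mul_path_of_ne K hk (per_pos _) h

theorem soc_mul_path {d : Γ.Arrow} {k : ℕ} (hk : 0 < k) (i : Γ.Edge) :
    soc K i * path K d k = 0 := by
  obtain ⟨d', rfl⟩ := exists_src_eq i
  rw [← path_per]
  by_cases h : d = d'
  · subst h
    have := path_mul_path K d (per d) k
    rw [next_pow_per] at this
    rw [this, path_eq_zero K (by lia)]
  · exact path_mul_path_of_ne K (per_pos _) hk (by rwa [next_pow_per])

theorem finsum_idemp : ∑ᶠ i : Γ.Edge, idemp K i = 1 := by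
  have h := toAlg_rel K (Rel.one (Γ := Γ) (K := K))
  rw [map_one] at h
  rw [← h]
  have := (Γ.toAlg K).toAddMonoidHom.map_finsum (f := fun i : Γ.Edge => freeVertex K i)
    (Set.toFinite _)
  exact this.symm

/-- The algebra is spanned by the paths around the vertices of the tree. -/
theorem span_path : Submodule.span K
    (Set.range fun p : Γ.Arrow × ℕ => path K p.1 p.2) = ⊤ := by
  rw [eq_top_iff]
  set S := Submodule.span K (Set.range fun p : Γ.Arrow × ℕ => path K p.1 p.2) with hS
  have hpath : ∀ d k, path K d k ∈ S := fun d k => Submodule.subset_span ⟨(d, k), rfl⟩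
  have hidem : ∀ i, idemp K i ∈ S := by
    intro i
    obtain ⟨d, rfl⟩ := exists_src_eq i
    exact hpath d 0
  have h1 : (1 : Γ.Alg K) ∈ S := by
    rw [← finsum_idemp K]
    exact finsum_induction (· ∈ S) S.zero_mem (fun _ _ => S.add_mem) hidem
  have hmul : ∀ (y : Γ.Alg K), (∀ d k, path K d k * y ∈ S) → ∀ x ∈ S, x * y ∈ S := by
    intro y hy x hx
    induction hx using Submodule.span_induction with
    | mem x hx => obtain ⟨⟨d, k⟩, rfl⟩ := hx; exact hy d k
    | zero => rw [zero_mul]; exact S.zero_mem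
    | add x y _ _ hx hy => rw [add_mul]; exact S.add_mem hx hy
    | smul c x _ hx => rw [smul_mul_assoc]; exact S.smul_mem c hx
  have hfree : ∀ y : Γ.Free K, ∀ x ∈ S, x * Γ.toAlg K y ∈ S := by
    intro y
    induction y using FreeAlgebra.induction with
    | grade0 r =>
      intro x hx
      rw [AlgHom.commutes, ← Algebra.commutes, ← Algebra.smul_def]
      exact S.smul_mem r hx
    | grade1 g =>
      rcases g with i | a
      · refine hmul _ fun d k => ?_
        change path K d k * idemp K i ∈ S
        by_cases h : src ((Γ.next ^ k) d) = i
        · rw [← h, path_mul_idemp_src]; exact hpath d k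
        · rw [path_mul_idemp K h]; exact S.zero_mem
      · refine hmul _ fun d k => ?_
        change path K d k * arrow K a ∈ S
        by_cases h : a = (Γ.next ^ k) d
        · rw [h, ← path_succ]; exact hpath d (k + 1)
        · rcases Nat.eq_zero_or_pos k with rfl | hk
          · by_cases h' : src d = src a
            · change idemp K (src d) * arrow K a ∈ S
              rw [h', idemp_src_mul_arrow, ← path_one]; exact hpath a 1
            · change idemp K (src d) * arrow K a ∈ S
              rw [idemp_mul_arrow K h']; exact S.zero_mem
          · rw [path_mul_arrow_of_ne K hk h]; exact S.zero_mem
    | mul a b ha hb =>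
      intro x hx
      rw [map_mul, ← mul_assoc]
      exact hb _ (ha x hx)
    | add a b ha hb =>
      intro x hx
      rw [map_add, mul_add]
      exact S.add_mem (ha x hx) (hb x hx)
  intro y _
  obtain ⟨y, rfl⟩ := RingQuot.mkAlgHom_surjective K (Γ.Rel K) y
  have := hfree y 1 h1
  rwa [one_mul] at this

end Algebra

end BrauerTree

namespace BrauerTree

section Representation

variable {V : Type v} (Γ : BrauerTree V) (K : Type u) [Field K]

/-- The index type of the regular representation: trivial paths, full turns, and the paths of
length `k` starting with the arrow `d`. -/
abbrev RepIndex : Type v := Γ.Edge ⊕ Γ.Edge ⊕ (Γ.Arrow × ℕ)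

variable {Γ}

/-- The source of a path. -/
def RepIndex.source : Γ.RepIndex → Γ.Edge
  | Sum.inl i => i
  | Sum.inr (Sum.inl i) => i
  | Sum.inr (Sum.inr p) => src p.1

open Classical in
/-- The vector of the regular representation belonging to the path of length `k` that starts
with `d`. -/
noncomputable def repPath (d : Γ.Arrow) (k : ℕ) : Γ.RepIndex →₀ K :=
  if k = 0 then Finsupp.single (Sum.inl (src d)) 1
  else if k < per d then Finsupp.single (Sum.inr (Sum.inr (d, k))) 1
  else if k = per d then Finsupp.single (Sum.inr (Sum.inl (src d))) 1
  else 0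

theorem repPath_zero (d : Γ.Arrow) : repPath K d 0 = Finsupp.single (Sum.inl (src d)) 1 :=
  if_pos rfl

theorem repPath_of_lt {d : Γ.Arrow} {k : ℕ} (h0 : 0 < k) (h : k < per d) :
    repPath K d k = Finsupp.single (Sum.inr (Sum.inr (d, k))) 1 := by
  rw [repPath, if_neg h0.ne', if_pos h]

theorem repPath_per [Finite V] (d : Γ.Arrow) :
    repPath K d (per d) = Finsupp.single (Sum.inr (Sum.inl (src d))) 1 := by
  rw [repPath, if_neg (per_pos d).ne', if_neg (lt_irrefl _), if_pos rfl]

theorem repPath_of_gt {d : Γ.Arrow} {k : ℕ} (h : per d < k) : repPath K d k = 0 := by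
  rw [repPath, if_neg (by lia), if_neg (by lia), if_neg (by lia)]

open Classical in
/-- The action of a vertex in the regular representation. -/
noncomputable def repVertex (i : Γ.Edge) : Module.End K (Γ.RepIndex →₀ K) :=
  Finsupp.linearCombination K fun x => if x.source = i then Finsupp.single x (1 : K) else 0

open Classical in
/-- The action of an arrow in the regular representation. -/
noncomputable def repArrow (a : Γ.Arrow) : Module.End K (Γ.RepIndex →₀ K) :=
  Finsupp.linearCombination K fun x => match x with
    | Sum.inl i => if tgt a = i then repPath K a 1 else 0
    | Sum.inr (Sum.inl _) => 0
    | Sum.inr (Sum.inr p) =>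
      if Γ.next a = p.1 ∧ 0 < p.2 ∧ p.2 < per p.1 then repPath K a (p.2 + 1) else 0

theorem repVertex_single (i : Γ.Edge) (x : Γ.RepIndex) (h : x.source = i) :
    repVertex K i (Finsupp.single x 1) = Finsupp.single x 1 := by
  simp [repVertex, h]

theorem repVertex_single_of_ne (i : Γ.Edge) (x : Γ.RepIndex) (h : x.source ≠ i) :
    repVertex K i (Finsupp.single x 1) = 0 := by
  simp [repVertex, h]

theorem repVertex_src_repPath (d : Γ.Arrow) (k : ℕ) :
    repVertex K (src d) (repPath K d k) = repPath K d k := by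
  unfold repPath
  split_ifs
  · exact repVertex_single K _ _ rfl
  · exact repVertex_single K _ _ rfl
  · exact repVertex_single K _ _ rfl
  · exact map_zero _

theorem repArrow_inl (a : Γ.Arrow) :
    repArrow K a (Finsupp.single (Sum.inl (tgt a)) 1) = repPath K a 1 := by
  simp [repArrow]

theorem repArrow_inl_of_ne {a : Γ.Arrow} {i : Γ.Edge} (h : tgt a ≠ i) :
    repArrow K a (Finsupp.single (Sum.inl i) 1) = 0 := by
  simp [repArrow, h]

theorem repArrow_soc (a : Γ.Arrow) (i : Γ.Edge) :
    repArrow K a (Finsupp.single (Sum.inr (Sum.inl i)) 1) = 0 := by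
  simp [repArrow]

theorem repArrow_path_of_not {a d : Γ.Arrow} {k : ℕ}
    (h : ¬ (Γ.next a = d ∧ 0 < k ∧ k < per d)) :
    repArrow K a (Finsupp.single (Sum.inr (Sum.inr (d, k))) 1) = 0 := by
  simp only [repArrow, Finsupp.linearCombination_single, one_smul]
  exact if_neg h

theorem repArrow_path {a : Γ.Arrow} {k : ℕ} (h0 : 0 < k) (hk : k < per (Γ.next a)) :
    repArrow K a (Finsupp.single (Sum.inr (Sum.inr (Γ.next a, k))) 1) = repPath K a (k + 1) := by
  simp only [repArrow, Finsupp.linearCombination_single, one_smul]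
  exact if_pos ⟨trivial, h0, hk⟩

theorem repArrow_repPath [Finite V] (a : Γ.Arrow) (k : ℕ) :
    repArrow K a (repPath K (Γ.next a) k) = repPath K a (k + 1) := by
  rcases Nat.eq_zero_or_pos k with rfl | h0
  · rw [repPath_zero]; exact repArrow_inl K a
  rcases lt_trichotomy k (per (Γ.next a)) with h | h | h
  · rw [repPath_of_lt K h0 h, repArrow_path K h0 h]
  · subst h
    rw [repPath_per, repArrow_soc, per_next, repPath_of_gt K (Nat.lt_succ_self _)]
  · rw [repPath_of_gt K h, map_zero, repPath_of_gt]
    rw [per_next] at h; lia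

theorem repArrow_repPath_of_ne [Finite V] {a d : Γ.Arrow} {k : ℕ} (h0 : 0 < k)
    (hd : d ≠ Γ.next a) : repArrow K a (repPath K d k) = 0 := by
  rcases lt_trichotomy k (per d) with h | h | h
  · rw [repPath_of_lt K h0 h, repArrow_path_of_not]
    exact fun h => hd h.1.symm
  · subst h
    rw [repPath_per, repArrow_soc]
  · rw [repPath_of_gt K h, map_zero]

theorem end_ext {f g : Module.End K (Γ.RepIndex →₀ K)}
    (h : ∀ x, f (Finsupp.single x 1) = g (Finsupp.single x 1)) : f = g :=
  Finsupp.lhom_ext' fun x => LinearMap.ext_ring (h x)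

theorem repVertex_mul_self (i : Γ.Edge) : repVertex K i * repVertex K i = repVertex K i := by
  refine end_ext K fun x => ?_
  by_cases h : x.source = i
  · simp [repVertex_single K i x h]
  · simp [repVertex_single_of_ne K i x h]

theorem repVertex_mul_of_ne {i j : Γ.Edge} (hij : i ≠ j) :
    repVertex K i * repVertex K j = 0 := by
  refine end_ext K fun x => ?_
  by_cases h : x.source = j
  · rw [Module.End.mul_apply, repVertex_single K j x h,
      repVertex_single_of_ne K i x (h ▸ hij.symm), LinearMap.zero_apply]
  · simp [repVertex_single_of_ne K j x h]

theorem finsum_repVertex [Finite V] : ∑ᶠ i : Γ.Edge, repVertex K i = 1 := by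
  refine end_ext K fun x => ?_
  have h1 := (LinearMap.applyₗ (R := K) (M₂ := Γ.RepIndex →₀ K)
    (Finsupp.single x (1 : K))).toAddMonoidHom.map_finsum (f := fun i : Γ.Edge => repVertex K i)
    (Set.toFinite _)
  refine h1.trans ?_
  rw [finsum_eq_single _ x.source]
  · exact repVertex_single K _ x rfl
  · exact fun j hj => repVertex_single_of_ne K _ x hj.symm

theorem repVertex_mul_repArrow (a : Γ.Arrow) :
    repVertex K (src a) * repArrow K a = repArrow K a := by
  refine end_ext K fun x => ?_
  rw [Module.End.mul_apply]
  rcases x with i | i | ⟨d, k⟩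
  · by_cases h : tgt a = i
    · subst h; rw [repArrow_inl, repVertex_src_repPath]
    · rw [repArrow_inl_of_ne K h, map_zero]
  · rw [repArrow_soc, map_zero]
  · by_cases h : Γ.next a = d ∧ 0 < k ∧ k < per d
    · obtain ⟨rfl, h⟩ := h
      rw [repArrow_path K h.1 h.2, repVertex_src_repPath]
    · rw [repArrow_path_of_not K h, map_zero]

theorem repArrow_mul_repVertex (a : Γ.Arrow) :
    repArrow K a * repVertex K (tgt a) = repArrow K a := by
  refine end_ext K fun x => ?_
  rw [Module.End.mul_apply]
  by_cases hx : x.source = tgt a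
  · rw [repVertex_single K _ x hx]
  · rw [repVertex_single_of_ne K _ x hx, map_zero]
    rcases x with i | i | ⟨d, k⟩
    · exact (repArrow_inl_of_ne K (Ne.symm hx)).symm
    · rw [repArrow_soc]
    · rw [repArrow_path_of_not]
      rintro ⟨rfl, -⟩
      exact hx rfl

theorem repArrow_mul_symm [Finite V] (a : Γ.Arrow) :
    repArrow K a * repArrow K (Γ.next a).symm = 0 := by
  have key : ∀ k, 0 < k → repArrow K a (repPath K (Γ.next a).symm k) = 0 := fun k hk =>
    repArrow_repPath_of_ne K hk (Γ.next a).symm_ne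
  refine end_ext K fun x => ?_
  rw [Module.End.mul_apply, LinearMap.zero_apply]
  rcases x with i | i | ⟨d, k⟩
  · by_cases h : tgt (Γ.next a).symm = i
    · subst h; rw [repArrow_inl, key 1 one_pos]
    · rw [repArrow_inl_of_ne K h, map_zero]
  · rw [repArrow_soc, map_zero]
  · by_cases h : Γ.next (Γ.next a).symm = d ∧ 0 < k ∧ k < per d
    · obtain ⟨rfl, h⟩ := h
      rw [repArrow_path K h.1 h.2, key _ (Nat.succ_pos k)]
    · rw [repArrow_path_of_not K h, map_zero]

theorem repArrow_prod_repPath [Finite V] (d : Γ.Arrow) (k m : ℕ) :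
    ((List.range k).map fun m => repArrow K ((Γ.next ^ m) d)).prod
      (repPath K ((Γ.next ^ k) d) m) = repPath K d (m + k) := by
  induction k generalizing m with
  | zero => simp
  | succ k ih =>
    rw [List.range_succ, List.map_append, List.prod_append, Module.End.mul_apply,
      List.map_singleton, List.prod_singleton, next_pow_succ, repArrow_repPath, ih]
    congr 1; lia

/-- The action of a full turn in the regular representation. -/
noncomputable def repTurn (d : Γ.Arrow) : Module.End K (Γ.RepIndex →₀ K) :=
  ((List.range (per d)).map fun m => repArrow K ((Γ.next ^ m) d)).prod

theorem repTurn_repPath [Finite V] (d : Γ.Arrow) (m : ℕ) :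
    repTurn K d (repPath K d m) = repPath K d (m + per d) := by
  have := repArrow_prod_repPath K d (per d) m
  rwa [next_pow_per] at this

theorem repTurn_eq_zero [Finite V] {d : Γ.Arrow} {x : Γ.RepIndex →₀ K}
    (h : ∀ a, Γ.next a = d → repArrow K a x = 0) : repTurn K d x = 0 := by
  obtain ⟨k, hk⟩ := Nat.exists_eq_succ_of_ne_zero (per_pos d).ne'
  rw [repTurn, hk, List.range_succ, List.map_append, List.prod_append, Module.End.mul_apply,
      List.map_singleton, List.prod_singleton, h, map_zero]
  have := next_pow_per d
  rwa [hk, next_pow_succ] at this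

theorem repTurn_inl [Finite V] (d : Γ.Arrow) :
    repTurn K d (Finsupp.single (Sum.inl (src d)) 1) =
      Finsupp.single (Sum.inr (Sum.inl (src d))) 1 := by
  rw [← repPath_zero, repTurn_repPath, zero_add, repPath_per]

theorem repTurn_inl_of_ne [Finite V] {d : Γ.Arrow} {i : Γ.Edge} (h : src d ≠ i) :
    repTurn K d (Finsupp.single (Sum.inl i) 1) = 0 := by
  refine repTurn_eq_zero K fun a ha => repArrow_inl_of_ne K ?_
  rwa [tgt, ha]

theorem repTurn_inr [Finite V] (d : Γ.Arrow) (x : Γ.Edge ⊕ (Γ.Arrow × ℕ)) :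
    repTurn K d (Finsupp.single (Sum.inr x) 1) = 0 := by
  rcases x with i | ⟨d', k⟩
  · exact repTurn_eq_zero K fun a _ => repArrow_soc K a i
  · by_cases h : d = d' ∧ 0 < k ∧ k < per d'
    · obtain ⟨rfl, h0, hk⟩ := h
      rw [← repPath_of_lt K h0 hk, repTurn_repPath, repPath_of_gt]
      lia
    · refine repTurn_eq_zero K fun a ha => repArrow_path_of_not K ?_
      rwa [ha]

theorem repTurn_symm [Finite V] (d : Γ.Arrow) : repTurn K d = repTurn K d.symm := by
  refine end_ext K fun x => ?_
  rcases x with i | x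
  · by_cases h : src d = i
    · subst h
      have := repTurn_inl K d.symm
      rw [src_symm] at this
      rw [repTurn_inl, this]
    · rw [repTurn_inl_of_ne K h, repTurn_inl_of_ne]
      rwa [src_symm]
  · rw [repTurn_inr, repTurn_inr]

variable (Γ) in
/-- The regular representation on the free algebra. -/
noncomputable def repFree : Γ.Free K →ₐ[K] Module.End K (Γ.RepIndex →₀ K) :=
  FreeAlgebra.lift K (Sum.elim (repVertex K) (repArrow K))

theorem repFree_vertex (i : Γ.Edge) : repFree Γ K (freeVertex K i) = repVertex K i := by
  simp [repFree, freeVertex]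

theorem repFree_arrow (a : Γ.Arrow) : repFree Γ K (freeArrow K a) = repArrow K a := by
  simp [repFree, freeArrow]

theorem repFree_turn (d : Γ.Arrow) : repFree Γ K (freeTurn K d) = repTurn K d := by
  rw [freeTurn, map_list_prod, List.map_map, repTurn, per]
  congr 1
  refine List.map_congr_left fun k _ => ?_
  exact repFree_arrow K _

theorem repFree_rel [Finite V] {x y : Γ.Free K} (h : Γ.Rel K x y) :
    repFree Γ K x = repFree Γ K y := by
  cases h with
  | idem i => rw [map_mul, repFree_vertex, repVertex_mul_self]
  | orth i j h => rw [map_mul, repFree_vertex, repFree_vertex, repVertex_mul_of_ne K h, map_zero]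
  | one =>
    rw [map_one, ← finsum_repVertex]
    refine ((repFree Γ K).toAddMonoidHom.map_finsum (f := fun i : Γ.Edge => freeVertex K i)
      (Set.toFinite _)).trans ?_
    exact finsum_congr fun i => repFree_vertex K i
  | src_mul d => rw [map_mul, repFree_vertex, repFree_arrow, repVertex_mul_repArrow]
  | mul_tgt d => rw [map_mul, repFree_vertex, repFree_arrow, repArrow_mul_repVertex]
  | zero d => rw [map_mul, repFree_arrow, repFree_arrow, repArrow_mul_symm, map_zero]
  | turn d => rw [repFree_turn, repFree_turn, repTurn_symm]

variable (Γ) in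
/-- The regular representation of the Brauer tree algebra. -/
noncomputable def rep [Finite V] : Γ.Alg K →ₐ[K] Module.End K (Γ.RepIndex →₀ K) :=
  RingQuot.liftAlgHom K ⟨repFree Γ K, fun _ _ h => repFree_rel K h⟩

theorem rep_toAlg [Finite V] (x : Γ.Free K) : rep Γ K (Γ.toAlg K x) = repFree Γ K x :=
  RingQuot.liftAlgHom_mkAlgHom_apply ..

theorem rep_idemp [Finite V] (i : Γ.Edge) : rep Γ K (idemp K i) = repVertex K i :=
  (rep_toAlg K _).trans (repFree_vertex K i)

theorem rep_arrow [Finite V] (a : Γ.Arrow) : rep Γ K (arrow K a) = repArrow K a :=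
  (rep_toAlg K _).trans (repFree_arrow K a)

variable (Γ) in
/-- The coordinates of an element of the Brauer tree algebra with respect to the basis of paths. -/
noncomputable def coords [Finite V] : Γ.Alg K →ₗ[K] (Γ.RepIndex →₀ K) :=
  LinearMap.applyₗ (∑ᶠ i : Γ.Edge, Finsupp.single (Sum.inl i) (1 : K)) ∘ₗ (rep Γ K).toLinearMap

theorem coords_idemp [Finite V] (i : Γ.Edge) :
    coords Γ K (idemp K i) = Finsupp.single (Sum.inl i) 1 := by
  change rep Γ K (idemp K i) (∑ᶠ i : Γ.Edge, Finsupp.single (Sum.inl i) (1 : K)) = _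
  rw [rep_idemp]
  refine ((repVertex K i).toAddMonoidHom.map_finsum
    (f := fun i : Γ.Edge => Finsupp.single (Sum.inl i) (1 : K)) (Set.toFinite _)).trans ?_
  rw [finsum_eq_single _ i]
  · exact repVertex_single K _ _ rfl
  · exact fun j hj => repVertex_single_of_ne K _ _ hj

theorem coords_path [Finite V] (d : Γ.Arrow) (k : ℕ) :
    coords Γ K (path K d k) = repPath K d k := by
  induction k generalizing d with
  | zero => rw [repPath_zero]; exact coords_idemp K _
  | succ k ih =>
    have := ih (Γ.next d)
    change rep Γ K _ _ = _ at this
    change rep Γ K _ _ = _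
    rw [path_succ', map_mul, Module.End.mul_apply, this, rep_arrow, repArrow_repPath]

end Representation

end BrauerTree

namespace BrauerTree

section Coordinates

variable {V : Type v} {Γ : BrauerTree V} (K : Type u) [Field K]

/-- The target of a path. -/
def RepIndex.target : Γ.RepIndex → Γ.Edge
  | Sum.inl i => i
  | Sum.inr (Sum.inl i) => i
  | Sum.inr (Sum.inr p) => src ((Γ.next ^ p.2) p.1)

/-- The sum of the idempotents belonging to a set of vertices of the quiver. -/
noncomputable def idempSum (I : Finset Γ.Edge) : Γ.Alg K := ∑ i ∈ I, idemp K i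

section

variable {K}

theorem alg_mul_sum {ι : Type*} (s : Finset ι) (f : ι → Γ.Alg K) (x : Γ.Alg K) :
    x * ∑ i ∈ s, f i = ∑ i ∈ s, x * f i := by exact Finset.mul_sum s f x

theorem alg_sum_mul {ι : Type*} (s : Finset ι) (f : ι → Γ.Alg K) (x : Γ.Alg K) :
    (∑ i ∈ s, f i) * x = ∑ i ∈ s, f i * x := by exact Finset.sum_mul s f x

theorem alg_sum_sub {ι : Type*} (s : Finset ι) (f g : ι → Γ.Alg K) :
    ∑ i ∈ s, (f i - g i) = ∑ i ∈ s, f i - ∑ i ∈ s, g i := by exact Finset.sum_sub_distrib f g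

theorem idemp_mul_idempSum {I : Finset Γ.Edge} {i : Γ.Edge} (h : i ∈ I) :
    idemp K i * idempSum K I = idemp K i := by
  rw [idempSum, alg_mul_sum, Finset.sum_eq_single i, idemp_mul_self]
  · exact fun j _ hj => idemp_mul_of_ne K hj.symm
  · exact fun h' => absurd h h'

theorem idemp_mul_idempSum_of_notMem {I : Finset Γ.Edge} {i : Γ.Edge} (h : i ∉ I) :
    idemp K i * idempSum K I = 0 := by
  rw [idempSum, alg_mul_sum]
  exact Finset.sum_eq_zero fun j hj => idemp_mul_of_ne K fun e => h (e ▸ hj)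

theorem idempSum_mul_idemp {I : Finset Γ.Edge} {i : Γ.Edge} (h : i ∈ I) :
    idempSum K I * idemp K i = idemp K i := by
  rw [idempSum, alg_sum_mul, Finset.sum_eq_single i, idemp_mul_self]
  · exact fun j _ hj => idemp_mul_of_ne K hj
  · exact fun h' => absurd h h'

theorem idempSum_mul_idemp_of_notMem {I : Finset Γ.Edge} {i : Γ.Edge} (h : i ∉ I) :
    idempSum K I * idemp K i = 0 := by
  rw [idempSum, alg_sum_mul]
  exact Finset.sum_eq_zero fun j hj => idemp_mul_of_ne K fun e => h (e ▸ hj)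

theorem idempSum_mul_idempSum (I : Finset Γ.Edge) :
    idempSum K I * idempSum K I = idempSum K I := by
  conv_lhs => rw [idempSum, alg_sum_mul]
  exact Finset.sum_congr rfl fun i hi => idemp_mul_idempSum hi

end

variable [Finite V]

noncomputable instance : Fintype Γ.Arrow := Fintype.ofFinite _

noncomputable instance : Fintype Γ.Edge := Fintype.ofFinite _

theorem path_induction {p : Γ.Alg K → Prop} (hpath : ∀ d k, p (path K d k)) (h0 : p 0)
    (hadd : ∀ x y, p x → p y → p (x + y)) (hsmul : ∀ (c : K) x, p x → p (c • x))
    (x : Γ.Alg K) : p x := by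
  have hx : x ∈ Submodule.span K (Set.range fun p : Γ.Arrow × ℕ => path K p.1 p.2) := by
    rw [span_path]; trivial
  induction hx using Submodule.span_induction with
  | mem x hx => obtain ⟨⟨d, k⟩, rfl⟩ := hx; exact hpath d k
  | zero => exact h0
  | add x y _ _ hx hy => exact hadd x y hx hy
  | smul c x _ hx => exact hsmul c x hx

theorem source_of_repPath_ne_zero {d : Γ.Arrow} {k : ℕ} {y : Γ.RepIndex}
    (h : repPath K d k y ≠ 0) : y.source = src d ∧ y.target = src ((Γ.next ^ k) d) := by
  classical
  rcases Nat.eq_zero_or_pos k with rfl | h0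
  · rw [repPath_zero, Finsupp.single_apply] at h
    obtain rfl : Sum.inl (src d) = y := by by_contra h'; exact h (if_neg h')
    exact ⟨rfl, rfl⟩
  rcases lt_trichotomy k (per d) with hk | hk | hk
  · rw [repPath_of_lt K h0 hk, Finsupp.single_apply] at h
    obtain rfl : Sum.inr (Sum.inr (d, k)) = y := by by_contra h'; exact h (if_neg h')
    exact ⟨rfl, rfl⟩
  · subst hk
    rw [repPath_per, Finsupp.single_apply] at h
    obtain rfl : Sum.inr (Sum.inl (src d)) = y := by by_contra h'; exact h (if_neg h')
    exact ⟨rfl, by rw [next_pow_per]; rfl⟩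
  · rw [repPath_of_gt K hk] at h
    exact absurd rfl h

theorem coords_idemp_mul_of_ne {i : Γ.Edge} {y : Γ.RepIndex} (h : y.source ≠ i)
    (x : Γ.Alg K) : coords Γ K (idemp K i * x) y = 0 := by
  induction x using path_induction with
  | hpath d k =>
    by_cases hi : i = src d
    · subst hi
      rw [idemp_src_mul_path, coords_path]
      by_contra h'
      exact h (source_of_repPath_ne_zero K h').1
    · rw [idemp_mul_path K hi, map_zero]; rfl
  | h0 => rw [mul_zero, map_zero]; rfl
  | hadd x y hx hy => rw [mul_add, map_add, Finsupp.add_apply, hx, hy, add_zero]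
  | hsmul c x hx => rw [mul_smul_comm, map_smul, Finsupp.smul_apply, hx, smul_zero]

theorem coords_mul_idemp_of_ne {i : Γ.Edge} {y : Γ.RepIndex} (h : y.target ≠ i)
    (x : Γ.Alg K) : coords Γ K (x * idemp K i) y = 0 := by
  induction x using path_induction with
  | hpath d k =>
    by_cases hi : src ((Γ.next ^ k) d) = i
    · subst hi
      rw [path_mul_idemp_src, coords_path]
      by_contra h'
      exact h (source_of_repPath_ne_zero K h').2
    · rw [path_mul_idemp K hi, map_zero]; rfl
  | h0 => rw [zero_mul, map_zero]; rfl
  | hadd x y hx hy => rw [add_mul, map_add, Finsupp.add_apply, hx, hy, add_zero]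
  | hsmul c x hx => rw [smul_mul_assoc, map_smul, Finsupp.smul_apply, hx, smul_zero]

/-- The coefficient of an element of the algebra at the trivial path at `i`. -/
noncomputable def coefOne (i : Γ.Edge) : Γ.Alg K →ₗ[K] K :=
  Finsupp.lapply (Sum.inl i) ∘ₗ coords Γ K

/-- The coefficient of an element of the algebra at the full turn at `i`. -/
noncomputable def coefSoc (i : Γ.Edge) : Γ.Alg K →ₗ[K] K :=
  Finsupp.lapply (Sum.inr (Sum.inl i)) ∘ₗ coords Γ K

open Classical in
/-- The path from `a` to `b` around their common vertex, and zero if there is none. -/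
noncomputable def arc (a b : Γ.Arrow) : Γ.Alg K :=
  if a.fst = b.fst ∧ a ≠ b then path K a (dist a b) else 0

open Classical in
/-- The coefficient of an element of the algebra at the path from `a` to `b`. -/
noncomputable def coef (a b : Γ.Arrow) : Γ.Alg K →ₗ[K] K :=
  if a.fst = b.fst ∧ a ≠ b then Finsupp.lapply (Sum.inr (Sum.inr (a, dist a b))) ∘ₗ coords Γ K
  else 0

theorem arc_eq {a b : Γ.Arrow} (h : a.fst = b.fst) (hne : a ≠ b) :
    arc K a b = path K a (dist a b) := if_pos ⟨h, hne⟩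

theorem arc_eq_zero {a b : Γ.Arrow} (h : ¬ (a.fst = b.fst ∧ a ≠ b)) : arc K a b = 0 := if_neg h

theorem coef_apply {a b : Γ.Arrow} (h : a.fst = b.fst) (hne : a ≠ b) (x : Γ.Alg K) :
    coef K a b x = coords Γ K x (Sum.inr (Sum.inr (a, dist a b))) := by
  rw [coef, if_pos ⟨h, hne⟩]; rfl

theorem coef_eq_zero {a b : Γ.Arrow} (h : ¬ (a.fst = b.fst ∧ a ≠ b)) (x : Γ.Alg K) :
    coef K a b x = 0 := by
  rw [coef, if_neg h]; rfl

theorem path_eq_arc {d : Γ.Arrow} {k : ℕ} (h0 : 0 < k) (hk : k < per d) :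
    path K d k = arc K d ((Γ.next ^ k) d) := by
  rw [arc_eq K (fst_next_pow d k).symm (next_pow_ne h0 hk).symm, dist_eq hk rfl]

theorem coords_arc {a b : Γ.Arrow} (h : a.fst = b.fst) (hne : a ≠ b) :
    coords Γ K (arc K a b) = Finsupp.single (Sum.inr (Sum.inr (a, dist a b))) 1 := by
  rw [arc_eq K h hne, coords_path, repPath_of_lt K (dist_pos h hne) (dist_lt a b)]

theorem coords_soc (i : Γ.Edge) :
    coords Γ K (soc K i) = Finsupp.single (Sum.inr (Sum.inl i)) 1 := by
  obtain ⟨d, rfl⟩ := exists_src_eq i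
  rw [← path_per, coords_path, repPath_per]

theorem coef_arc_self {a b : Γ.Arrow} (h : a.fst = b.fst) (hne : a ≠ b) :
    coef K a b (arc K a b) = 1 := by
  rw [coef_apply K h hne, coords_arc K h hne, Finsupp.single_eq_same]

theorem coef_arc_of_ne {a b a' b' : Γ.Arrow} (h : a ≠ a' ∨ b ≠ b') :
    coef K a b (arc K a' b') = 0 := by
  classical
  by_cases hab : a.fst = b.fst ∧ a ≠ b
  swap
  · exact coef_eq_zero K hab _
  by_cases hab' : a'.fst = b'.fst ∧ a' ≠ b'
  swap
  · rw [arc_eq_zero K hab', map_zero]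
  rw [coef_apply K hab.1 hab.2, coords_arc K hab'.1 hab'.2, Finsupp.single_apply, if_neg]
  intro e
  simp only [Sum.inr.injEq, Prod.mk.injEq] at e
  obtain ⟨rfl, e⟩ := e
  have := next_pow_dist hab.1
  rw [← e, next_pow_dist hab'.1] at this
  exact h.elim (fun h => h rfl) fun h => h this.symm

theorem coef_soc (a b : Γ.Arrow) (i : Γ.Edge) : coef K a b (soc K i) = 0 := by
  classical
  by_cases hab : a.fst = b.fst ∧ a ≠ b
  · rw [coef_apply K hab.1 hab.2, coords_soc, Finsupp.single_apply, if_neg (by simp)]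
  · exact coef_eq_zero K hab _

theorem coef_idemp (a b : Γ.Arrow) (i : Γ.Edge) : coef K a b (idemp K i) = 0 := by
  classical
  by_cases hab : a.fst = b.fst ∧ a ≠ b
  · rw [coef_apply K hab.1 hab.2, coords_idemp, Finsupp.single_apply, if_neg (by simp)]
  · exact coef_eq_zero K hab _

theorem coefSoc_soc_self (i : Γ.Edge) : coefSoc K i (soc K i) = 1 := by
  change coords Γ K (soc K i) _ = _
  rw [coords_soc, Finsupp.single_eq_same]

theorem coefSoc_soc_of_ne {i j : Γ.Edge} (h : i ≠ j) : coefSoc K i (soc K j) = 0 := by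
  classical
  change coords Γ K (soc K j) _ = _
  rw [coords_soc, Finsupp.single_apply, if_neg (by simpa using h.symm)]

theorem coefSoc_arc (i : Γ.Edge) (a b : Γ.Arrow) : coefSoc K i (arc K a b) = 0 := by
  classical
  by_cases hab : a.fst = b.fst ∧ a ≠ b
  · change coords Γ K (arc K a b) _ = _
    rw [coords_arc K hab.1 hab.2, Finsupp.single_apply, if_neg (by simp)]
  · rw [arc_eq_zero K hab, map_zero]

theorem soc_ne_zero (i : Γ.Edge) : soc K i ≠ 0 := by
  intro h
  have := coefSoc_soc_self K i
  rw [h, map_zero] at this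
  exact zero_ne_one this

theorem idemp_src_mul_arc (a b : Γ.Arrow) : idemp K (src a) * arc K a b = arc K a b := by
  unfold arc
  split_ifs
  · exact idemp_src_mul_path K _ _
  · exact mul_zero _

theorem arc_mul_idemp_src (a b : Γ.Arrow) : arc K a b * idemp K (src b) = arc K a b := by
  by_cases hab : a.fst = b.fst ∧ a ≠ b
  · rw [arc_eq K hab.1 hab.2]
    have := path_mul_idemp_src K a (dist a b)
    rwa [next_pow_dist hab.1] at this
  · rw [arc_eq_zero K hab, zero_mul]

theorem arc_mul_arc_of_ne (a : Γ.Arrow) {b b' : Γ.Arrow} (c : Γ.Arrow) (h : b ≠ b') :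
    arc K a b * arc K b' c = 0 := by
  by_cases hab : a.fst = b.fst ∧ a ≠ b
  swap
  · rw [arc_eq_zero K hab, zero_mul]
  by_cases hbc : b'.fst = c.fst ∧ b' ≠ c
  swap
  · rw [arc_eq_zero K hbc, mul_zero]
  rw [arc_eq K hab.1 hab.2, arc_eq K hbc.1 hbc.2]
  apply path_mul_path_of_ne K (dist_pos hab.1 hab.2) (dist_pos hbc.1 hbc.2)
  rw [next_pow_dist hab.1]
  exact h.symm

theorem arc_mul_arc {a b c : Γ.Arrow} (h : a.fst = b.fst) (h' : b.fst = c.fst)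
    (hab : a ≠ b) (hbc : b ≠ c) : arc K a b * arc K b c = path K a (dist a b + dist b c) := by
  rw [arc_eq K h hab, arc_eq K h' hbc, ← path_mul_path, next_pow_dist h]

theorem arc_mul_arc_of_lt {a b c : Γ.Arrow} (h : a.fst = b.fst) (h' : b.fst = c.fst)
    (hab : a ≠ b) (hbc : b ≠ c) (hlt : dist a b + dist b c < per a) :
    arc K a b * arc K b c = arc K a c := by
  rw [arc_mul_arc K h h' hab hbc, ← dist_add h h' hlt, arc_eq K (h.trans h')]
  rintro rfl
  have := dist_add_dist_comm h hab
  lia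

theorem arc_mul_arc_of_gt {a b c : Γ.Arrow} (h : a.fst = b.fst) (h' : b.fst = c.fst)
    (hab : a ≠ b) (hbc : b ≠ c) (hlt : per a < dist a b + dist b c) :
    arc K a b * arc K b c = 0 := by
  rw [arc_mul_arc K h h' hab hbc, path_eq_zero K hlt]

theorem arc_mul_arc_self {a b : Γ.Arrow} (h : a.fst = b.fst) (hab : a ≠ b) :
    arc K a b * arc K b a = soc K (src a) := by
  rw [arc_mul_arc K h h.symm hab hab.symm, dist_add_dist_comm h hab, path_per]

/-- The expansion of an element of the algebra in the basis of paths. -/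
theorem eq_sum_coef (x : Γ.Alg K) :
    x = ∑ i, coefOne K i x • idemp K i + ∑ i, coefSoc K i x • soc K i +
      ∑ a, ∑ b, coef K a b x • arc K a b := by
  classical
  induction x using path_induction with
  | hpath d k =>
    rcases Nat.eq_zero_or_pos k with rfl | h0
    · have e1 : ∀ i, coefOne K i (idemp K (src d)) = if src d = i then 1 else 0 := by
        intro i
        change coords Γ K (idemp K (src d)) _ = _
        rw [coords_idemp, Finsupp.single_apply]; simp
      have e2 : ∀ i, coefSoc K i (idemp K (src d)) = 0 := by
        intro i
        change coords Γ K (idemp K (src d)) _ = _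
        rw [coords_idemp, Finsupp.single_apply]; simp
      simp [path, e1, e2, coef_idemp]
    rcases lt_trichotomy k (per d) with hk | hk | hk
    · rw [path_eq_arc K h0 hk]
      set b := (Γ.next ^ k) d
      have hf : d.fst = b.fst := (fst_next_pow d k).symm
      have hne : d ≠ b := (next_pow_ne h0 hk).symm
      have e1 : ∀ i, coefOne K i (arc K d b) = 0 := by
        intro i
        change coords Γ K (arc K d b) _ = _
        rw [coords_arc K hf hne, Finsupp.single_apply]; simp
      rw [Finset.sum_eq_single d, Finset.sum_eq_single b]
      · simp [e1, coefSoc_arc, coef_arc_self K hf hne]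
      · intro c _ hc
        rw [coef_arc_of_ne K (Or.inr hc), zero_smul]
      · simp
      · intro c _ hc
        exact Finset.sum_eq_zero fun b' _ => by rw [coef_arc_of_ne K (Or.inl hc), zero_smul]
      · simp
    · subst hk
      have e1 : ∀ i, coefOne K i (soc K (src d)) = 0 := by
        intro i
        change coords Γ K (soc K (src d)) _ = _
        rw [coords_soc, Finsupp.single_apply]; simp
      have e2 : ∀ i, coefSoc K i (soc K (src d)) = if src d = i then 1 else 0 := by
        intro i
        change coords Γ K (soc K (src d)) _ = _
        rw [coords_soc, Finsupp.single_apply]; simp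
      rw [path_per]
      simp [e1, e2, coef_soc]
    · simp [path_eq_zero K hk]
  | h0 => simp
  | hadd x y hx hy =>
    conv_lhs => rw [hx, hy]
    simp only [map_add, add_smul, Finset.sum_add_distrib]
    abel
  | hsmul c x hx =>
    conv_lhs => rw [hx]
    simp only [map_smul, smul_add, Finset.smul_sum, smul_eq_mul, mul_smul]

variable {K}

theorem mem_of_coords_ne_zero {I J : Finset Γ.Edge} {x : Γ.Alg K}
    (hl : idempSum K I * x = x) (hr : x * idempSum K J = x) {y : Γ.RepIndex}
    (h : coords Γ K x y ≠ 0) : y.source ∈ I ∧ y.target ∈ J := by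
  constructor
  · by_contra h'
    rw [← hl, idempSum, alg_sum_mul, map_sum, Finsupp.finsetSum_apply] at h
    exact h (Finset.sum_eq_zero fun i hi => coords_idemp_mul_of_ne K (fun e => h' (e ▸ hi)) x)
  · by_contra h'
    rw [← hr, idempSum, alg_mul_sum, map_sum, Finsupp.finsetSum_apply] at h
    exact h (Finset.sum_eq_zero fun i hi => coords_mul_idemp_of_ne K (fun e => h' (e ▸ hi)) x)

theorem mem_of_coef_ne_zero {I J : Finset Γ.Edge} {x : Γ.Alg K}
    (hl : idempSum K I * x = x) (hr : x * idempSum K J = x) {a b : Γ.Arrow}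
    (h : coef K a b x ≠ 0) : a.fst = b.fst ∧ a ≠ b ∧ src a ∈ I ∧ src b ∈ J := by
  by_cases hab : a.fst = b.fst ∧ a ≠ b
  · rw [coef_apply K hab.1 hab.2] at h
    have := mem_of_coords_ne_zero hl hr h
    refine ⟨hab.1, hab.2, this.1, ?_⟩
    have h2 := this.2
    simp only [RepIndex.target] at h2
    rwa [next_pow_dist hab.1] at h2
  · exact absurd (coef_eq_zero K hab x) h

/-- An element without components at trivial paths and full turns is a combination of arcs. -/
theorem eq_sum_arc {I J : Finset Γ.Edge} (hIJ : Disjoint I J) {x : Γ.Alg K}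
    (hl : idempSum K I * x = x) (hr : x * idempSum K J = x) :
    x = ∑ a, ∑ b, coef K a b x • arc K a b := by
  conv_lhs => rw [eq_sum_coef K x]
  rw [Finset.sum_eq_zero, Finset.sum_eq_zero, zero_add, zero_add]
  · intro i _
    suffices coefSoc K i x = 0 by rw [this, zero_smul]
    by_contra h
    have := mem_of_coords_ne_zero hl hr (y := Sum.inr (Sum.inl i)) h
    exact Finset.disjoint_left.1 hIJ this.1 this.2
  · intro i _
    suffices coefOne K i x = 0 by rw [this, zero_smul]
    by_contra h
    have := mem_of_coords_ne_zero hl hr (y := Sum.inl i) h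
    exact Finset.disjoint_left.1 hIJ this.1 this.2

end Coordinates

end BrauerTree

namespace BrauerTree

section Projectives

variable {V : Type v} {Γ : BrauerTree V} {K : Type u} [Field K]

theorem mem_proj_iff {i : Γ.Edge} {x : Γ.Alg K} : x ∈ Proj K i ↔ x * idemp K i = x := by
  rw [Ideal.mem_span_singleton']
  constructor
  · rintro ⟨a, rfl⟩
    rw [mul_assoc, idemp_mul_self]
  · exact fun h => ⟨x, h⟩

/-- The generator `e_i` of `A e_i`. -/
noncomputable def projGen (i : Γ.Edge) : Proj K i := ⟨idemp K i, mem_proj_iff.2 (idemp_mul_self K i)⟩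

theorem smul_projGen {i : Γ.Edge} (x : Proj K i) : (x : Γ.Alg K) • projGen i = x :=
  Subtype.ext (mem_proj_iff.1 x.2)

/-- The direct sum of the projective modules belonging to a finite set of vertices. -/
abbrev ProjSum (K : Type u) [Field K] (I : Finset Γ.Edge) : Type _ := ∀ i : I, Proj K i.1

/-- The element of the algebra given by an element of `⨁ A e_i`. -/
noncomputable def total {I : Finset Γ.Edge} : ProjSum K I →ₗ[Γ.Alg K] Γ.Alg K where
  toFun x := ∑ i : I, (x i : Γ.Alg K)
  map_add' x y := by simp [Finset.sum_add_distrib]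
  map_smul' c x := by exact (alg_mul_sum _ _ _).symm

open Classical in
/-- The generator `e_i` of the summand `A e_i` of `⨁ A e_i`. -/
noncomputable def gen {I : Finset Γ.Edge} (i : I) : ProjSum K I :=
  Pi.single i (projGen i.1)

theorem gen_same {I : Finset Γ.Edge} (i : I) : ((gen i : ProjSum K I) i : Γ.Alg K) = idemp K i.1 := by
  simp [gen, projGen]

theorem gen_of_ne {I : Finset Γ.Edge} {i j : I} (h : j ≠ i) : ((gen i : ProjSum K I) j : Γ.Alg K) = 0 := by
  simp [gen, h]

theorem total_gen {I : Finset Γ.Edge} (i : I) : total (gen i) = idemp K i.1 := by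
  change ∑ j : I, ((gen i : ProjSum K I) j : Γ.Alg K) = _
  rw [Finset.sum_eq_single i, gen_same]
  · exact fun j _ hj => gen_of_ne hj
  · simp

theorem eq_sum_smul_gen {I : Finset Γ.Edge} (x : ProjSum K I) :
    x = ∑ i : I, (x i : Γ.Alg K) • gen i := by
  classical
  conv_lhs => rw [← Finset.univ_sum_single x]
  refine Finset.sum_congr rfl fun i _ => ?_
  rw [gen, ← Pi.single_smul, smul_projGen]

theorem total_mul_idemp {I : Finset Γ.Edge} (x : ProjSum K I) (i : I) :
    total x * idemp K i.1 = x i := by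
  change (∑ j : I, (x j : Γ.Alg K)) * idemp K i.1 = _
  rw [alg_sum_mul, Finset.sum_eq_single i]
  · exact mem_proj_iff.1 (x i).2
  · intro j _ hj
    rw [← mem_proj_iff.1 (x j).2, mul_assoc, idemp_mul_of_ne K, mul_zero]
    exact fun h => hj (Subtype.ext h)
  · simp

theorem total_mul_idempSum {I : Finset Γ.Edge} (x : ProjSum K I) :
    total x * idempSum K I = total x := by
  rw [idempSum, alg_mul_sum, ← Finset.sum_coe_sort]
  exact Finset.sum_congr rfl fun i _ => total_mul_idemp x i

theorem total_injective {I : Finset Γ.Edge} : Function.Injective (total (K := K) (I := I)) := by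
  intro x y h
  funext i
  apply Subtype.ext
  rw [← total_mul_idemp, ← total_mul_idemp, h]

instance (I : Finset Γ.Edge) : Module.Projective (Γ.Alg K) (ProjSum K I) := by
  refine Module.Projective.of_split (M := Γ.Alg K) total
    (LinearMap.pi fun i => LinearMap.toSpanSingleton (Γ.Alg K) (Proj K i.1) (projGen i.1)) ?_
  refine LinearMap.ext fun x => funext fun i => Subtype.ext ?_
  exact total_mul_idemp x i

/-- Right multiplication by an element of the algebra, as a homomorphism between direct sums of
projective modules. -/
noncomputable def mulRight (I J : Finset Γ.Edge) (α : Γ.Alg K) :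
    ProjSum K I →ₗ[Γ.Alg K] ProjSum K J where
  toFun x j := ⟨total x * α * idemp K j.1,
    mem_proj_iff.2 (by rw [mul_assoc _ (idemp K j.1), idemp_mul_self])⟩
  map_add' x y := by
    funext j; apply Subtype.ext
    simp [add_mul]
  map_smul' c x := by
    funext j; apply Subtype.ext
    simp [mul_assoc]

theorem total_mulRight {I J : Finset Γ.Edge} {α : Γ.Alg K} (h : α * idempSum K J = α)
    (x : ProjSum K I) : total (mulRight I J α x) = total x * α := by
  conv_rhs => rw [← h, idempSum, alg_mul_sum, alg_mul_sum, ← Finset.sum_coe_sort]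
  exact Finset.sum_congr rfl fun j _ => mul_assoc _ _ _

/-- The element of the algebra that describes a homomorphism between direct sums of projective
modules. -/
noncomputable def elt {I J : Finset Γ.Edge} (g : ProjSum K I →ₗ[Γ.Alg K] ProjSum K J) :
    Γ.Alg K := ∑ i : I, total (g (gen i))

theorem idemp_mul_elt {I J : Finset Γ.Edge} (g : ProjSum K I →ₗ[Γ.Alg K] ProjSum K J) (i : I) :
    idemp K i.1 * elt g = total (g (gen i)) := by
  have key : ∀ j : I, idemp K j.1 • gen j = (gen j : ProjSum K I) := by
    intro j
    apply total_injective
    rw [map_smul, total_gen, smul_eq_mul, idemp_mul_self]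
  rw [elt, alg_mul_sum, Finset.sum_eq_single i]
  · rw [← smul_eq_mul, ← map_smul, ← map_smul, key]
  · intro j _ hj
    rw [← key j, map_smul, map_smul, smul_eq_mul, ← mul_assoc, idemp_mul_of_ne K, zero_mul]
    exact fun h => hj (Subtype.ext h.symm)
  · simp

theorem elt_mul_idempSum {I J : Finset Γ.Edge} (g : ProjSum K I →ₗ[Γ.Alg K] ProjSum K J) :
    elt g * idempSum K J = elt g := by
  rw [elt, alg_sum_mul]
  exact Finset.sum_congr rfl fun i _ => total_mul_idempSum _

theorem idempSum_mul_elt {I J : Finset Γ.Edge} (g : ProjSum K I →ₗ[Γ.Alg K] ProjSum K J) :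
    idempSum K I * elt g = elt g := by
  rw [idempSum, alg_sum_mul, ← Finset.sum_coe_sort, elt]
  exact Finset.sum_congr rfl fun i _ => idemp_mul_elt g i

theorem total_apply {I J : Finset Γ.Edge} (g : ProjSum K I →ₗ[Γ.Alg K] ProjSum K J)
    (x : ProjSum K I) : total (g x) = total x * elt g := by
  conv_lhs => rw [eq_sum_smul_gen x, map_sum, map_sum]
  change _ = (∑ i : I, (x i : Γ.Alg K)) * elt g
  rw [alg_sum_mul]
  refine Finset.sum_congr rfl fun i _ => ?_
  rw [map_smul, map_smul, smul_eq_mul, ← idemp_mul_elt, ← mul_assoc, mem_proj_iff.1 (x i).2]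

theorem elt_mulRight {I J : Finset Γ.Edge} {α : Γ.Alg K} (h : idempSum K I * α = α)
    (h' : α * idempSum K J = α) : elt (mulRight I J α) = α := by
  rw [elt]
  conv_rhs => rw [← h, idempSum, alg_sum_mul, ← Finset.sum_coe_sort]
  refine Finset.sum_congr rfl fun i _ => ?_
  rw [total_mulRight h', total_gen]

theorem ext_elt {I J : Finset Γ.Edge} {g g' : ProjSum K I →ₗ[Γ.Alg K] ProjSum K J}
    (h : elt g = elt g') : g = g' := by
  ext1 x
  apply total_injective
  rw [total_apply, total_apply, h]

theorem elt_comp {I J L : Finset Γ.Edge} (g : ProjSum K I →ₗ[Γ.Alg K] ProjSum K J)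
    (g' : ProjSum K J →ₗ[Γ.Alg K] ProjSum K L) : elt (g' ∘ₗ g) = elt g * elt g' := by
  conv_lhs => rw [elt]
  rw [elt, alg_sum_mul]
  exact Finset.sum_congr rfl fun i _ => total_apply g' _

theorem elt_zero {I J : Finset Γ.Edge} :
    elt (0 : ProjSum K I →ₗ[Γ.Alg K] ProjSum K J) = 0 := by
  simp [elt]

namespace TwoTerm

/-- The element of the algebra that describes the differential. -/
noncomputable def F (T : Γ.TwoTerm K) : Γ.Alg K := elt T.f

/-- The morphisms `T ⟶ U[-1]` in the derived category vanish if and only if there is no nonzero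
element of `e_J A e_I` annihilated by the two differentials. -/
theorem hom_shift_eq_zero_iff [HasDerivedCategory.{w} (ModuleCat (Γ.Alg K))]
    (T U : Γ.TwoTerm K) :
    (∀ φ : T.obj ⟶ U.obj⟦(-1 : ℤ)⟧, φ = 0) ↔
      ∀ α : Γ.Alg K, idempSum K T.J * α = α → α * idempSum K U.I = α → T.F * α = 0 →
        α * U.F = 0 → α = 0 := by
  have hp : ∀ I : Finset Γ.Edge, Projective (ModuleCat.of (Γ.Alg K) (ProjSum K I)) := fun I =>
    (IsProjective.iff_projective (ProjSum K I)).1 inferInstance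
  have := hp T.I
  have := hp T.J
  refine (DerivedCategory.double_hom_shift_eq_zero_iff (ModuleCat.ofHom T.f)
    (ModuleCat.ofHom U.f) (by simp)).trans ?_
  constructor
  · intro H α h1 h2 h3 h4
    have := H (ModuleCat.ofHom (mulRight T.J U.I α)) ?_ ?_
    · have e : mulRight T.J U.I α = 0 := congrArg ModuleCat.Hom.hom this
      rw [← elt_mulRight h1 h2, e, elt_zero]
    · ext1
      apply ext_elt
      have e := elt_comp T.f (mulRight T.J U.I α)
      rw [elt_mulRight h1 h2, ← F, h3] at e
      exact e.trans elt_zero.symm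
    · ext1
      apply ext_elt
      have e := elt_comp (mulRight T.J U.I α) U.f
      rw [elt_mulRight h1 h2, ← F, h4] at e
      exact e.trans elt_zero.symm
  · intro H g h1 h2
    have e1 : U.f ∘ₗ g.hom = 0 := congrArg ModuleCat.Hom.hom h2
    have e2 : g.hom ∘ₗ T.f = 0 := congrArg ModuleCat.Hom.hom h1
    ext1
    apply ext_elt
    rw [H (elt g.hom) (idempSum_mul_elt _) (elt_mul_idempSum _), ← elt_zero (I := T.J) (J := U.I)]
    · rfl
    · rw [F, ← elt_comp, e2, elt_zero]
    · rw [F, ← elt_comp, e1, elt_zero]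

theorem component_ne_zero_iff (T : Γ.TwoTerm K) (i : T.I) (j : T.J) :
    T.component i j ≠ 0 ↔ idemp K i.1 * T.F * idemp K j.1 ≠ 0 := by
  have key : (T.component i j (projGen i.1) : Γ.Alg K) = idemp K i.1 * T.F * idemp K j.1 := by
    rw [F, idemp_mul_elt, total_mul_idemp]
    rfl
  rw [← key, not_iff_not]
  constructor
  · intro h; rw [h]; rfl
  · intro h
    have h' : T.component i j (projGen i.1) = 0 := Subtype.ext h
    refine LinearMap.ext fun x => ?_
    rw [← smul_projGen x, map_smul, h', smul_zero]
    rfl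

end TwoTerm

end Projectives

end BrauerTree

namespace BrauerTree

section Branches

variable {V : Type v} {Γ : BrauerTree V}

/-- The vertices of the tree beyond the edge of `d`, seen from `d.fst`. -/
def side (d : Γ.Arrow) : Set V := {u | (Γ.graph.deleteEdges {d.edge}).Reachable d.snd u}

/-- The branch of the tree at the vertex `d.fst` that begins with the edge of `d`. -/
def branch (d : Γ.Arrow) : Set Γ.Edge := {e | ∃ a : Γ.Arrow, src a = e ∧ a.snd ∈ side d}

theorem snd_mem_side (d : Γ.Arrow) : d.snd ∈ side d := SimpleGraph.Reachable.refl _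

theorem fst_notMem_side (d : Γ.Arrow) : d.fst ∉ side d := fun h =>
  SimpleGraph.isBridge_iff.1
    (SimpleGraph.isAcyclic_iff_forall_adj_isBridge.1 Γ.isTree.isAcyclic d.adj) h.symm

theorem eq_of_fst_notMem_side {a d : Γ.Arrow} (h : a.fst ∉ side d) (h' : a.snd ∈ side d) :
    a = d := by
  by_cases he : a.edge = d.edge
  · rcases (SimpleGraph.dart_edge_eq_iff a d).1 he with rfl | rfl
    · rfl
    · exact absurd (snd_mem_side d) h
  · refine absurd (SimpleGraph.Reachable.trans h' (SimpleGraph.Adj.reachable ?_)) h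
    rw [SimpleGraph.deleteEdges_adj]
    refine ⟨a.adj.symm, ?_⟩
    rw [Set.mem_singleton_iff, Sym2.eq_swap]
    exact he

theorem src_mem_branch (d : Γ.Arrow) : src d ∈ branch d := ⟨d, rfl, snd_mem_side d⟩

theorem src_mem_branch_of_snd {a d : Γ.Arrow} (h : a.snd ∈ side d) : src a ∈ branch d := ⟨a, rfl, h⟩

theorem src_mem_branch_of_fst {a d : Γ.Arrow} (h : a.fst ∈ side d) : src a ∈ branch d :=
  ⟨a.symm, src_symm a, h⟩

theorem snd_mem_side_of_mem_branch {a d : Γ.Arrow} (h : src a ∈ branch d) : a.snd ∈ side d ∨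
    a.fst ∈ side d := by
  obtain ⟨b, hb, h⟩ := h
  rcases src_eq_src_iff.1 hb with rfl | rfl
  · exact Or.inl h
  · exact Or.inr h

/-- An edge in a branch can only meet an edge outside of it at the root of the branch. -/
theorem eq_of_mem_branch_of_notMem {a b d : Γ.Arrow} (hab : a.fst = b.fst)
    (ha : src a ∈ branch d) (hb : src b ∉ branch d) : a = d := by
  have h : a.fst ∉ side d := fun h => hb (src_mem_branch_of_fst (hab ▸ h))
  exact eq_of_fst_notMem_side h ((snd_mem_side_of_mem_branch ha).resolve_right h)

theorem notMem_side_of_mem_side {d d' : Γ.Arrow} (hf : d.fst = d'.fst) (hne : d ≠ d') {u : V}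
    (hu : u ∈ side d') : u ∉ side d := by
  have key : ∀ x y (p : (Γ.graph.deleteEdges {d'.edge}).Walk x y), x ∈ side d' → x ∉ side d →
      y ∉ side d := by
    intro x y p
    induction p with
    | nil => exact fun _ h => h
    | @cons x z y hadj p ih =>
      intro hx hxd
      have hz : z ∈ side d' := SimpleGraph.Reachable.trans hx hadj.reachable
      refine ih hz fun hzd => ?_
      have hadj' : Γ.graph.Adj x z := (SimpleGraph.deleteEdges_adj.1 hadj).1
      have := eq_of_fst_notMem_side (a := ⟨(x, z), hadj'⟩) (d := d) hxd hzd
      have hx' : x = d'.fst := by rw [← hf, ← this]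
      exact fst_notMem_side d' (hx' ▸ hx)
  obtain ⟨p⟩ := hu
  refine key _ _ p (snd_mem_side d') fun h => ?_
  have hd : d'.fst ∉ side d := by rw [← hf]; exact fst_notMem_side d
  exact hne (eq_of_fst_notMem_side hd h).symm

/-- Different branches at one vertex are disjoint. -/
theorem eq_of_mem_branch {d d' : Γ.Arrow} (hf : d.fst = d'.fst) {e : Γ.Edge}
    (h : e ∈ branch d) (h' : e ∈ branch d') : d = d' := by
  by_contra hne
  obtain ⟨a, rfl, ha⟩ := h
  have ha' := notMem_side_of_mem_side hf.symm (Ne.symm hne) ha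
  have hfst := (snd_mem_side_of_mem_branch h').resolve_left ha'
  have e1 := eq_of_fst_notMem_side (notMem_side_of_mem_side hf hne hfst) ha
  have e2 : a.symm = d' := eq_of_fst_notMem_side (a := a.symm) ha' hfst
  have e3 : d'.snd = d.fst := by rw [← e2, ← e1]; rfl
  exact d'.adj.ne (hf.symm.trans e3.symm)

/-- The two branches that begin with one edge cover the tree. -/
theorem mem_branch_or_symm (d : Γ.Arrow) (e : Γ.Edge) : e ∈ branch d ∨ e ∈ branch d.symm := by
  have key : ∀ x y (p : Γ.graph.Walk x y), x ∈ side d ∪ side d.symm → y ∈ side d ∪ side d.symm := by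
    intro x y p
    induction p with
    | nil => exact id
    | @cons x z y hadj p ih =>
      intro hx
      apply ih
      by_contra hz
      rw [Set.mem_union, not_or] at hz
      rcases hx with hx | hx
      · have := eq_of_fst_notMem_side (a := ⟨(z, x), hadj.symm⟩) hz.1 hx
        exact hz.2 (by rw [← this]; exact snd_mem_side (SimpleGraph.Dart.symm ⟨(z, x), hadj.symm⟩))
      · have := eq_of_fst_notMem_side (a := ⟨(z, x), hadj.symm⟩) hz.2 hx
        refine hz.1 ?_
        rw [← d.symm_symm, ← this]
        exact snd_mem_side (SimpleGraph.Dart.symm ⟨(z, x), hadj.symm⟩)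
  obtain ⟨a, rfl⟩ := exists_src_eq e
  obtain ⟨p⟩ := Γ.isTree.connected.preconnected d.snd a.snd
  rcases key _ _ p (Or.inl (snd_mem_side d)) with h | h
  · exact Or.inl (src_mem_branch_of_snd h)
  · exact Or.inr (src_mem_branch_of_snd h)

end Branches

section Character

variable {V : Type v} {Γ : BrauerTree V} (K : Type u) [Field K]

open Classical in
/-- The one-dimensional representation at the vertex `i`, on the free algebra. -/
noncomputable def characterFree (i : Γ.Edge) : Γ.Free K →ₐ[K] K :=
  FreeAlgebra.lift K (Sum.elim (fun j => if i = j then 1 else 0) fun _ => 0)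

theorem characterFree_same (i : Γ.Edge) : characterFree K i (freeVertex K i) = 1 := by
  simp [characterFree, freeVertex]

theorem characterFree_of_ne {i j : Γ.Edge} (h : i ≠ j) :
    characterFree K i (freeVertex K j) = 0 := by
  simp [characterFree, freeVertex, h]

theorem characterFree_arrow (i : Γ.Edge) (a : Γ.Arrow) :
    characterFree K i (freeArrow K a) = 0 := by
  simp [characterFree, freeArrow]

variable [Finite V]

theorem characterFree_turn (i : Γ.Edge) (d : Γ.Arrow) :
    characterFree K i (freeTurn K d) = 0 := by
  obtain ⟨k, hk⟩ := Nat.exists_eq_succ_of_ne_zero (per_pos d).ne'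
  rw [freeTurn, ← per, hk, List.range_succ_eq_map, List.map_cons, List.prod_cons, map_mul,
    characterFree_arrow, zero_mul]

theorem characterFree_rel (i : Γ.Edge) {x y : Γ.Free K} (h : Γ.Rel K x y) :
    characterFree K i x = characterFree K i y := by
  cases h with
  | idem j =>
    by_cases h : i = j
    · subst h; rw [map_mul, characterFree_same, one_mul]
    · rw [map_mul, characterFree_of_ne K h, zero_mul]
  | orth j k h =>
    rw [map_mul, map_zero]
    by_cases h' : i = j
    · subst h'; rw [characterFree_of_ne K h, mul_zero]
    · rw [characterFree_of_ne K h', zero_mul]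
  | one =>
    rw [map_one]
    refine ((characterFree K i).toAddMonoidHom.map_finsum (f := fun i : Γ.Edge => freeVertex K i)
      (Set.toFinite _)).trans ?_
    rw [finsum_eq_single _ i]
    · exact characterFree_same K i
    · exact fun j hj => characterFree_of_ne K hj.symm
  | src_mul d => rw [map_mul, characterFree_arrow, mul_zero]
  | mul_tgt d => rw [map_mul, characterFree_arrow, zero_mul]
  | zero d => rw [map_mul, characterFree_arrow, zero_mul, map_zero]
  | turn d => rw [characterFree_turn, characterFree_turn]

/-- The one-dimensional representation at the vertex `i`. -/
noncomputable def character (i : Γ.Edge) : Γ.Alg K →ₐ[K] K :=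
  RingQuot.liftAlgHom K ⟨characterFree K i, fun _ _ h => characterFree_rel K i h⟩

theorem character_same (i : Γ.Edge) : character K i (idemp K i) = 1 :=
  (RingQuot.liftAlgHom_mkAlgHom_apply ..).trans (characterFree_same K i)

theorem character_of_ne {i j : Γ.Edge} (h : i ≠ j) : character K i (idemp K j) = 0 :=
  (RingQuot.liftAlgHom_mkAlgHom_apply ..).trans (characterFree_of_ne K h)

theorem character_idempSum {i : Γ.Edge} {I : Finset Γ.Edge} (h : i ∉ I) :
    character K i (idempSum K I) = 0 := by
  rw [idempSum, map_sum]
  exact Finset.sum_eq_zero fun j hj => character_of_ne K fun e => h (e ▸ hj)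

theorem character_path_succ (i : Γ.Edge) (d : Γ.Arrow) (k : ℕ) :
    character K i (path K d (k + 1)) = 0 := by
  rw [path_succ, map_mul]
  have : character K i (arrow K ((Γ.next ^ k) d)) = 0 :=
    (RingQuot.liftAlgHom_mkAlgHom_apply ..).trans (characterFree_arrow K i _)
  rw [this, mul_zero]

variable {K}

theorem mul_soc (i : Γ.Edge) (x : Γ.Alg K) : x * soc K i = character K i x • soc K i := by
  induction x using path_induction with
  | hpath d k =>
    cases k with
    | zero =>
      change idemp K (src d) * soc K i = character K i (idemp K (src d)) • soc K i
      by_cases h : i = src d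
      · subst h; rw [idemp_mul_soc, character_same, one_smul]
      · rw [character_of_ne K h, zero_smul, ← idemp_mul_soc, ← mul_assoc,
          idemp_mul_of_ne K (Ne.symm h), zero_mul]
    | succ k => rw [path_mul_soc K k.succ_pos, character_path_succ, zero_smul]
  | h0 => rw [zero_mul, map_zero, zero_smul]
  | hadd x y hx hy => rw [add_mul, hx, hy, map_add, add_smul]
  | hsmul c x hx => rw [smul_mul_assoc, hx, map_smul, smul_assoc]

theorem soc_mul (i : Γ.Edge) (x : Γ.Alg K) : soc K i * x = character K i x • soc K i := by
  induction x using path_induction with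
  | hpath d k =>
    cases k with
    | zero =>
      change soc K i * idemp K (src d) = character K i (idemp K (src d)) • soc K i
      by_cases h : i = src d
      · subst h; rw [soc_mul_idemp, character_same, one_smul]
      · rw [character_of_ne K h, zero_smul, ← soc_mul_idemp, mul_assoc,
          idemp_mul_of_ne K h, mul_zero]
    | succ k => rw [soc_mul_path K k.succ_pos, character_path_succ, zero_smul]
  | h0 => rw [mul_zero, map_zero, zero_smul]
  | hadd x y hx hy => rw [mul_add, hx, hy, map_add, add_smul]
  | hsmul c x hx => rw [mul_smul_comm, hx, map_smul, smul_assoc]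

/-- The Jacobson radical of a direct sum of projective modules is annihilated by the
one-dimensional representations. -/
theorem character_total_eq_zero {I : Finset Γ.Edge} {x : ProjSum K I}
    (hx : x ∈ Module.jacobson (Γ.Alg K) (ProjSum K I)) (i : Γ.Edge) :
    character K i (total x) = 0 := by
  have : RingHomSurjective (character K i).toRingHom := ⟨fun c => by
    refine ⟨algebraMap K _ c, ?_⟩
    exact (character K i).commutes c⟩
  let φ : ProjSum K I →ₛₗ[(character K i).toRingHom] K :=
    { toFun := fun x => character K i (total x)
      map_add' := fun x y => by rw [map_add, map_add]
      map_smul' := fun c x => by rw [map_smul, smul_eq_mul, map_mul]; rfl }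
  have hle : Module.jacobson (Γ.Alg K) (ProjSum K I) ≤ LinearMap.ker φ := by
    apply IsSemisimpleModule.jacobson_le_ker
  exact hle hx

end Character

section Indecomposable

open Limits in
/-- An idempotent endomorphism of an indecomposable module is zero or the identity. -/
theorem _root_.ModuleCat.eq_zero_or_eq_one_of_indecomposable {R M : Type*} [Ring R]
    [AddCommGroup M] [Module R M] (h : Indecomposable (ModuleCat.of R M))
    {e : Module.End R M} (he : IsIdempotentElem e) : e = 0 ∨ e = 1 := by
  have hc := LinearMap.IsIdempotentElem.isCompl he
  let E := Submodule.prodEquivOfIsCompl _ _ hc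
  have := h.2 _ _ (E.symm.toModuleIso ≪≫ (ModuleCat.biprodIsoProd (ModuleCat.of R _)
    (ModuleCat.of R _)).symm)
  rcases this with h | h
  · have hs := ModuleCat.subsingleton_of_isZero h
    left
    ext x
    exact congrArg Subtype.val (hs.elim (⟨e x, LinearMap.mem_range_self e x⟩ : LinearMap.range e) 0)
  · have hs := ModuleCat.subsingleton_of_isZero h
    right
    ext x
    have hx : x - e x ∈ LinearMap.ker e := by
      rw [LinearMap.mem_ker, map_sub, ← Module.End.mul_apply, he.eq, sub_self]
    have := congrArg Subtype.val (hs.elim (⟨x - e x, hx⟩ : LinearMap.ker e) 0)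
    exact (sub_eq_zero.1 this).symm

end Indecomposable

end BrauerTree

namespace BrauerTree

section Split

variable {V : Type v} {Γ : BrauerTree V} {K : Type u} [Field K]

theorem idempSum_mul_idempSum_of_disjoint {I J : Finset Γ.Edge} (h : Disjoint I J) :
    idempSum K I * idempSum K J = 0 := by
  conv_lhs => rw [idempSum, alg_sum_mul]
  exact Finset.sum_eq_zero fun i hi =>
    idemp_mul_idempSum_of_notMem (Finset.disjoint_left.1 h hi)

theorem idempSum_mul_of_subset {I J : Finset Γ.Edge} (h : I ⊆ J) :
    idempSum K I * idempSum K J = idempSum K I := by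
  conv_lhs => rw [idempSum, alg_sum_mul]
  exact Finset.sum_congr rfl fun i hi => idemp_mul_idempSum (h hi)

theorem mul_idempSum_of_subset {I J : Finset Γ.Edge} (h : I ⊆ J) :
    idempSum K J * idempSum K I = idempSum K I := by
  conv_lhs => rw [idempSum, idempSum, alg_mul_sum]
  exact Finset.sum_congr rfl fun i hi => idempSum_mul_idemp (h hi)

theorem idempSum_empty : idempSum K (∅ : Finset Γ.Edge) = 0 := Finset.sum_empty

namespace TwoTerm

variable {T : Γ.TwoTerm K}

/-- An endomorphism of the complex that induces an idempotent on `P₁` induces zero or the identity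
on the presented module. -/
theorem IsPresentation.range_of_idempotent (hT : T.IsPresentation) {E₀ E₁ : Γ.Alg K}
    (h0l : idempSum K T.I * E₀ = E₀) (h0r : E₀ * idempSum K T.I = E₀)
    (h1l : idempSum K T.J * E₁ = E₁) (h1r : E₁ * idempSum K T.J = E₁)
    (hidem : E₁ * E₁ = E₁) (hF : E₀ * T.F = T.F * E₁) :
    (∀ x : T.P₁, mulRight T.J T.J E₁ x ∈ LinearMap.range T.f) ∨
      ∀ x : T.P₁, x - mulRight T.J T.J E₁ x ∈ LinearMap.range T.f := by
  set φ : T.P₁ →ₗ[Γ.Alg K] T.P₁ := mulRight T.J T.J E₁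
  have hcomm : φ ∘ₗ T.f = T.f ∘ₗ mulRight T.I T.I E₀ := by
    apply ext_elt
    rw [elt_comp, elt_comp, elt_mulRight h1l h1r, elt_mulRight h0l h0r]
    exact hF.symm
  have hφ : φ ∘ₗ φ = φ := by
    apply ext_elt
    rw [elt_comp, elt_mulRight h1l h1r, hidem]
  have hle : LinearMap.range T.f ≤ (LinearMap.range T.f).comap φ := by
    rintro _ ⟨x, rfl⟩
    exact ⟨mulRight T.I T.I E₀ x, (LinearMap.congr_fun hcomm x).symm⟩
  let e : Module.End (Γ.Alg K) T.M := (LinearMap.range T.f).mapQ (LinearMap.range T.f) φ hle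
  have he : IsIdempotentElem e := by
    refine LinearMap.ext fun m => ?_
    obtain ⟨x, rfl⟩ := Submodule.Quotient.mk_surjective _ m
    exact congrArg (Submodule.Quotient.mk) (LinearMap.congr_fun hφ x)
  rcases ModuleCat.eq_zero_or_eq_one_of_indecomposable hT.indecomposable he with h | h
  · left
    intro x
    rw [← Submodule.Quotient.mk_eq_zero]
    exact LinearMap.congr_fun h (Submodule.Quotient.mk x)
  · right
    intro x
    rw [← Submodule.Quotient.eq]
    exact (LinearMap.congr_fun h (Submodule.Quotient.mk x)).symm

variable [Finite V]

/-- The elements of `e_I A` annihilated by the differential lie in the radical. -/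
theorem IsPresentation.character_eq_zero (hT : T.IsPresentation) {y : Γ.Alg K}
    (h : y * idempSum K T.I = y) (hF : y * T.F = 0) (i : Γ.Edge) : character K i y = 0 := by
  have hy : total (fun i : T.I => (⟨y * idemp K i.1,
      mem_proj_iff.2 (by rw [mul_assoc, idemp_mul_self])⟩ : Proj K i.1)) = y := by
    conv_rhs => rw [← h, idempSum, alg_mul_sum, ← Finset.sum_coe_sort]
    rfl
  rw [← hy]
  refine character_total_eq_zero (hT.ker_le ?_) i
  rw [LinearMap.mem_ker]
  apply total_injective
  rw [total_apply, hy, map_zero]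
  exact hF

theorem IsPresentation.character_range (hT : T.IsPresentation) {x : T.P₁}
    (h : x ∈ LinearMap.range T.f) (i : Γ.Edge) : character K i (total x) = 0 :=
  character_total_eq_zero (hT.range_le h) i

open Classical in
/-- A set `L` of vertices such that the complex is, up to the change of bases given by `n` and
`n'`, the direct sum of its parts inside and outside of `L`, contains all marked vertices
or none. -/
theorem IsPresentation.subset_or_disjoint (hT : T.IsPresentation) (L : Set Γ.Edge)
    {n n' : Γ.Alg K}
    (hnl : idempSum K (T.I.filter (· ∉ L)) * n = n) (hnr : n * idempSum K (T.I.filter (· ∈ L)) = n)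
    (hnl' : idempSum K (T.J.filter (· ∈ L)) * n' = n')
    (hnr' : n' * idempSum K (T.J.filter (· ∉ L)) = n')
    (hF : (idempSum K (T.I.filter (· ∈ L)) + n) * T.F =
      T.F * (idempSum K (T.J.filter (· ∈ L)) + n')) :
    (∀ x ∈ T.marked, x ∈ L) ∨ ∀ x ∈ T.marked, x ∉ L := by
  set ε₀ := idempSum K (T.I.filter (· ∈ L)) with hε₀
  set ε₁ := idempSum K (T.J.filter (· ∈ L)) with hε₁
  set ρ₀ := idempSum K (T.I.filter (· ∉ L)) with hρ₀
  set ρ₁ := idempSum K (T.J.filter (· ∉ L)) with hρ₁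
  have hdis : ρ₁ * ε₁ = 0 := idempSum_mul_idempSum_of_disjoint
    (Finset.disjoint_filter_filter_not T.J T.J (· ∈ L)).symm
  have h1 : n' * ε₁ = 0 := by rw [← hnr', mul_assoc, hdis, mul_zero]
  have h2 : n' * n' = 0 := by
    conv_lhs => rw [← hnl', mul_assoc, ← mul_assoc n', h1, zero_mul, mul_zero]
  have hε₁I : idempSum K T.J * ε₁ = ε₁ := mul_idempSum_of_subset (Finset.filter_subset _ _)
  have hε₁J : ε₁ * idempSum K T.J = ε₁ := idempSum_mul_of_subset (Finset.filter_subset _ _)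
  have hε₀I : idempSum K T.I * ε₀ = ε₀ := mul_idempSum_of_subset (Finset.filter_subset _ _)
  have hε₀J : ε₀ * idempSum K T.I = ε₀ := idempSum_mul_of_subset (Finset.filter_subset _ _)
  have hρ₀I : idempSum K T.I * ρ₀ = ρ₀ := mul_idempSum_of_subset (Finset.filter_subset _ _)
  have hρ₁J : ρ₁ * idempSum K T.J = ρ₁ := idempSum_mul_of_subset (Finset.filter_subset _ _)
  have hnI : idempSum K T.I * n = n := by rw [← hnl, ← mul_assoc, hρ₀I]
  have hnI' : n * idempSum K T.I = n := by rw [← hnr, mul_assoc, hε₀J]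
  have hnJ : idempSum K T.J * n' = n' := by rw [← hnl', ← mul_assoc, hε₁I]
  have hnJ' : n' * idempSum K T.J = n' := by rw [← hnr', mul_assoc, hρ₁J]
  have hidem : (ε₁ + n') * (ε₁ + n') = ε₁ + n' := by
    rw [add_mul, mul_add, mul_add, hnl', h1, h2, add_zero, add_zero, idempSum_mul_idempSum]
  have hχ : ∀ x, x ∈ L → character K x n = 0 := fun x hx => by
    rw [← hnl, map_mul, character_idempSum K (by simp [hx]), zero_mul]
  have hχ' : ∀ x, x ∉ L → character K x n = 0 := fun x hx => by
    rw [← hnr, map_mul, character_idempSum K (by simp [hx]), mul_zero]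
  have hψ : ∀ x, x ∈ L → character K x n' = 0 := fun x hx => by
    rw [← hnr', map_mul, character_idempSum K (by simp [hx]), mul_zero]
  have hψ' : ∀ x, x ∉ L → character K x n' = 0 := fun x hx => by
    rw [← hnl', map_mul, character_idempSum K (by simp [hx]), zero_mul]
  have htot : ∀ j : T.J, total (mulRight T.J T.J (ε₁ + n') (gen j)) = idemp K j.1 * (ε₁ + n') := by
    intro j
    rw [total_mulRight (by rw [add_mul, hε₁J, hnJ']), total_gen]
  rcases hT.range_of_idempotent (E₀ := ε₀ + n) (E₁ := ε₁ + n') (by rw [mul_add, hε₀I, hnI])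
    (by rw [add_mul, hε₀J, hnI']) (by rw [mul_add, hε₁I, hnJ]) (by rw [add_mul, hε₁J, hnJ'])
    hidem hF with H | H
  · right
    have hJ : ∀ x ∈ T.J, x ∉ L := by
      intro x hx hxL
      have := hT.character_range (H (gen ⟨x, hx⟩)) x
      rw [htot, mul_add, idemp_mul_idempSum (by simp [hx, hxL]), map_add, map_mul, hψ x hxL,
        mul_zero, add_zero, character_same] at this
      exact one_ne_zero this
    have hε₁0 : ε₁ = 0 := by
      rw [hε₁, Finset.filter_eq_empty_iff.2 fun x hx => hJ x hx, idempSum_empty]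
    have hn0 : n' = 0 := by rw [← hnl', hε₁0, zero_mul]
    rw [hε₁0, hn0, add_zero, mul_zero] at hF
    rintro x (hx | hx)
    · intro hxL
      have := hT.character_eq_zero (y := idemp K x * (ε₀ + n))
        (by rw [mul_assoc, add_mul, hε₀J, hnI']) (by rw [mul_assoc, hF, mul_zero]) x
      rw [mul_add, idemp_mul_idempSum (by simp [hx, hxL]), map_add, map_mul, hχ x hxL,
        mul_zero, add_zero, character_same] at this
      exact one_ne_zero this
    · exact hJ x hx
  · left
    have hJ : ∀ x ∈ T.J, x ∈ L := by
      intro x hx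
      by_contra hxL
      have := hT.character_range (H (gen ⟨x, hx⟩)) x
      rw [map_sub, htot, total_gen, mul_add, idemp_mul_idempSum_of_notMem (by simp [hxL]),
        zero_add, map_sub, map_mul, hψ' x hxL, mul_zero, sub_zero, character_same] at this
      exact one_ne_zero this
    have hρ₁0 : ρ₁ = 0 := by
      rw [hρ₁, Finset.filter_eq_empty_iff.2 fun x hx => not_not.2 (hJ x hx), idempSum_empty]
    have hn0 : n' = 0 := by rw [← hnr', hρ₁0, mul_zero]
    have hε₁1 : ε₁ = idempSum K T.J := by
      rw [hε₁, Finset.filter_true_of_mem hJ]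
    rw [hε₁1, hn0, add_zero, F, elt_mul_idempSum] at hF
    rintro x (hx | hx)
    · by_contra hxL
      have := hT.character_eq_zero (y := idemp K x * (idempSum K T.I - (ε₀ + n)))
        (by rw [mul_assoc, sub_mul, add_mul, hε₀J, hnI', idempSum_mul_idempSum])
        (by rw [mul_assoc, sub_mul, F, hF, idempSum_mul_elt, sub_self, mul_zero]) x
      rw [mul_sub, idemp_mul_idempSum hx, mul_add, idemp_mul_idempSum_of_notMem (by simp [hxL]),
        zero_add, map_sub, map_mul, hχ' x hxL, mul_zero, sub_zero,
        character_same] at this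
      exact one_ne_zero this
    · exact hJ x hx

end TwoTerm

end Split

end BrauerTree

namespace BrauerTree

namespace TwoTerm

variable {V : Type v} {Γ : BrauerTree V} {K : Type u} [Field K] [Finite V] {T : Γ.TwoTerm K}

/-- The coefficient of the differential at the path from `a` to `b`. -/
noncomputable def c (T : Γ.TwoTerm K) (a b : Γ.Arrow) : K := coef K a b T.F

theorem mem_of_c_ne_zero {a b : Γ.Arrow} (h : T.c a b ≠ 0) :
    a.fst = b.fst ∧ a ≠ b ∧ src a ∈ T.I ∧ src b ∈ T.J :=
  mem_of_coef_ne_zero (idempSum_mul_elt _) (elt_mul_idempSum _) h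

theorem F_eq_sum (h : Disjoint T.I T.J) : T.F = ∑ a, ∑ b, T.c a b • arc K a b :=
  eq_sum_arc h (idempSum_mul_elt _) (elt_mul_idempSum _)

theorem idempSum_mul_smul_arc {S : Finset Γ.Edge} {r : K} {a b : Γ.Arrow}
    (h : r ≠ 0 → src a ∈ S) : idempSum K S * (r • arc K a b) = r • arc K a b := by
  by_cases hr : r = 0
  · rw [hr, zero_smul, mul_zero]
  · rw [mul_smul_comm, ← idemp_src_mul_arc, ← mul_assoc, idempSum_mul_idemp (h hr)]

theorem smul_arc_mul_idempSum {S : Finset Γ.Edge} {r : K} {a b : Γ.Arrow}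
    (h : r ≠ 0 → src b ∈ S) : r • arc K a b * idempSum K S = r • arc K a b := by
  by_cases hr : r = 0
  · rw [hr, zero_smul, zero_mul]
  · rw [smul_mul_assoc, ← arc_mul_idemp_src, mul_assoc, idemp_mul_idempSum (h hr)]

theorem idempSum_mul_smul_arc_of_notMem {S : Finset Γ.Edge} {r : K} {a b : Γ.Arrow}
    (h : src a ∉ S) : idempSum K S * (r • arc K a b) = 0 := by
  rw [mul_smul_comm, ← idemp_src_mul_arc, ← mul_assoc, idempSum_mul_idemp_of_notMem h, zero_mul,
    smul_zero]

theorem smul_arc_mul_idempSum_of_notMem {S : Finset Γ.Edge} {r : K} {a b : Γ.Arrow}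
    (h : src b ∉ S) : r • arc K a b * idempSum K S = 0 := by
  rw [smul_mul_assoc, ← arc_mul_idemp_src, mul_assoc, idemp_mul_idempSum_of_notMem h, mul_zero,
    smul_zero]

theorem mul_smul_arc_sum_left (f : Γ.Arrow → Γ.Arrow → K) (r : Γ.Arrow → K) (j : Γ.Arrow) :
    (∑ a, ∑ b, f a b • arc K a b) * ∑ b, r b • arc K j b =
      ∑ a, ∑ b, (f a j * r b) • (arc K a j * arc K j b) := by
  rw [alg_sum_mul]
  refine Finset.sum_congr rfl fun a _ => ?_
  rw [alg_sum_mul, Finset.sum_eq_single j]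
  · rw [alg_mul_sum]
    refine Finset.sum_congr rfl fun b _ => ?_
    rw [smul_mul_smul_comm]
  · intro b _ hb
    rw [alg_mul_sum]
    refine Finset.sum_eq_zero fun b' _ => ?_
    rw [smul_mul_smul_comm, arc_mul_arc_of_ne K _ _ hb, smul_zero]
  · simp

theorem smul_arc_sum_mul_right (f : Γ.Arrow → Γ.Arrow → K) (r : Γ.Arrow → K) (i : Γ.Arrow) :
    (∑ a, r a • arc K a i) * ∑ a, ∑ b, f a b • arc K a b =
      ∑ a, ∑ b, (r a * f i b) • (arc K a i * arc K i b) := by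
  rw [alg_sum_mul]
  refine Finset.sum_congr rfl fun a _ => ?_
  rw [alg_mul_sum, Finset.sum_eq_single i]
  · rw [alg_mul_sum]
    refine Finset.sum_congr rfl fun b _ => ?_
    rw [smul_mul_smul_comm]
  · intro b _ hb
    rw [alg_mul_sum]
    refine Finset.sum_eq_zero fun b' _ => ?_
    rw [smul_mul_smul_comm, arc_mul_arc_of_ne K _ _ hb.symm, smul_zero]
  · simp

open Classical in
/-- If the differential has a nonzero component at a vertex of the tree, then all marked vertices
lie in the two branches of a shortest one. -/
theorem IsPresentation.mem_branch_of_pivot (hT : T.IsPresentation) (hd : Disjoint T.I T.J)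
    {i j : Γ.Arrow} (hij : T.c i j ≠ 0)
    (hmin : ∀ a b, a.fst = i.fst → T.c a b ≠ 0 → dist i j ≤ dist a b) :
    ∀ x ∈ T.marked, x ∈ branch i ∪ branch j := by
  obtain ⟨L, hL⟩ : ∃ L, L = branch i ∪ branch j := ⟨_, rfl⟩
  rw [← hL]
  have hLmem : ∀ x, x ∈ L ↔ x ∈ branch i ∨ x ∈ branch j := fun x => by rw [hL]; rfl
  obtain ⟨hf, hne, hi, hj⟩ := mem_of_c_ne_zero hij
  have hIJ : ∀ {x y : Γ.Arrow}, src x ∈ T.I → src y ∈ T.J → x ≠ y := fun hx hy e =>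
    Finset.disjoint_left.1 hd hx (e ▸ hy)
  have hiL : src i ∈ L := (hLmem _).2 (Or.inl (src_mem_branch i))
  have hjL : src j ∈ L := (hLmem _).2 (Or.inr (src_mem_branch j))
  have hout : ∀ a : Γ.Arrow, a.fst = i.fst → a ≠ i → a ≠ j → src a ∉ L := by
    intro a ha hai haj h
    rcases (hLmem _).1 h with h | h
    · exact hai (eq_of_mem_branch ha (src_mem_branch a) h)
    · exact haj (eq_of_mem_branch (ha.trans hf) (src_mem_branch a) h)
  have hcross : ∀ a b : Γ.Arrow, a.fst = b.fst → src a ∈ L → src b ∉ L → a = i ∨ a = j := by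
    intro a b hab h hb
    rcases (hLmem _).1 h with h | h
    · exact Or.inl (eq_of_mem_branch_of_notMem hab h fun h' => hb ((hLmem _).2 (Or.inl h')))
    · exact Or.inr (eq_of_mem_branch_of_notMem hab h fun h' => hb ((hLmem _).2 (Or.inr h')))
  have hcol : ∀ a, T.c a j ≠ 0 → a ≠ i → src a ∉ L := fun a ha hai => by
    obtain ⟨h1, h2, -, -⟩ := mem_of_c_ne_zero ha
    exact hout a (h1.trans hf.symm) hai h2
  have hrow : ∀ b, T.c i b ≠ 0 → b ≠ j → src b ∉ L := fun b hb hbj => by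
    obtain ⟨h1, h2, -, -⟩ := mem_of_c_ne_zero hb
    exact hout b h1.symm h2.symm hbj
  have hrowarc : ∀ b, T.c i b ≠ 0 → b ≠ j → arc K i j * arc K j b = arc K i b := fun b hb hbj => by
    obtain ⟨h1, h2, -, -⟩ := mem_of_c_ne_zero hb
    have h3 := hmin i b rfl hb
    have h4 := dist_sub hf (hf.symm.trans h1) h3
    have h5 := dist_lt i b
    exact arc_mul_arc_of_lt K hf (hf.symm.trans h1) hne hbj.symm (by lia)
  have hcolarc : ∀ a, T.c a j ≠ 0 → a ≠ i → arc K a i * arc K i j = arc K a j := fun a ha hai => by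
    obtain ⟨h1, h2, -, -⟩ := mem_of_c_ne_zero ha
    have hai' : a.fst = i.fst := h1.trans hf.symm
    have h3 := hmin a j hai' ha
    have h4 : dist a i ≤ dist a j := by
      by_contra hlt
      have h5 := dist_sub h1 hf.symm (not_le.1 hlt).le
      have h6 := dist_add_dist_comm hf hne
      have h7 := dist_lt a i
      have h8 := per_eq hai'
      lia
    have h5 := dist_sub hai' hf h4
    have h6 := dist_lt a j
    exact arc_mul_arc_of_lt K hai' hf hai hne (by lia)
  have key := hT.subset_or_disjoint L
    (n := ∑ a, (T.c a j / T.c i j) • arc K a i) (n' := ∑ b, (T.c i b / T.c i j) • arc K j b)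
    ?_ ?_ ?_ ?_ ?_
  · rcases key with h | h
    · exact h
    · exact absurd hiL (h _ (Or.inl hi))
  · rw [alg_mul_sum]
    refine Finset.sum_congr rfl fun a _ => ?_
    by_cases hai : a = i
    · rw [hai, arc_eq_zero K (by simp), smul_zero, mul_zero]
    · refine idempSum_mul_smul_arc fun h => ?_
      have h' : T.c a j ≠ 0 := fun h0 => h (by rw [h0, zero_div])
      exact Finset.mem_filter.2 ⟨(mem_of_c_ne_zero h').2.2.1, hcol a h' hai⟩
  · rw [alg_sum_mul]
    refine Finset.sum_congr rfl fun a _ => ?_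
    exact smul_arc_mul_idempSum fun _ => Finset.mem_filter.2 ⟨hi, hiL⟩
  · rw [alg_mul_sum]
    refine Finset.sum_congr rfl fun b _ => ?_
    exact idempSum_mul_smul_arc fun _ => Finset.mem_filter.2 ⟨hj, hjL⟩
  · rw [alg_sum_mul]
    refine Finset.sum_congr rfl fun b _ => ?_
    by_cases hbj : b = j
    · rw [hbj, arc_eq_zero K (by simp), smul_zero, zero_mul]
    · refine smul_arc_mul_idempSum fun h => ?_
      have h' : T.c i b ≠ 0 := fun h0 => h (by rw [h0, zero_div])
      exact Finset.mem_filter.2 ⟨(mem_of_c_ne_zero h').2.2.2, hrow b h' hbj⟩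
  · have e : idempSum K (T.I.filter (· ∈ L)) * T.F - T.F * idempSum K (T.J.filter (· ∈ L)) =
        T.F * (∑ b, (T.c i b / T.c i j) • arc K j b) -
          (∑ a, (T.c a j / T.c i j) • arc K a i) * T.F := by
      rw [F_eq_sum hd, mul_smul_arc_sum_left, smul_arc_sum_mul_right, alg_mul_sum, alg_sum_mul,
        ← alg_sum_sub, ← alg_sum_sub]
      refine Finset.sum_congr rfl fun a _ => ?_
      rw [alg_mul_sum, alg_sum_mul, ← alg_sum_sub, ← alg_sum_sub]
      refine Finset.sum_congr rfl fun b _ => ?_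
      by_cases hai : a = i
      · by_cases hbj : b = j
        · rw [hai, hbj, idempSum_mul_smul_arc fun _ => Finset.mem_filter.2 ⟨hi, hiL⟩,
            smul_arc_mul_idempSum fun _ => Finset.mem_filter.2 ⟨hj, hjL⟩,
            arc_eq_zero K (a := i) (b := i) (by simp), arc_eq_zero K (a := j) (b := j) (by simp)]
          simp
        · rw [hai]
          by_cases h0 : T.c i b = 0
          · simp [h0]
          · rw [idempSum_mul_smul_arc fun _ => Finset.mem_filter.2 ⟨hi, hiL⟩,
              smul_arc_mul_idempSum_of_notMem fun h => hrow b h0 hbj (Finset.mem_filter.1 h).2,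
              hrowarc b h0 hbj, arc_eq_zero K (a := i) (b := i) (by simp), mul_div_cancel₀ _ hij]
            simp
      · by_cases hbj : b = j
        · rw [hbj]
          by_cases h0 : T.c a j = 0
          · simp [h0]
          · rw [idempSum_mul_smul_arc_of_notMem fun h => hcol a h0 hai (Finset.mem_filter.1 h).2,
              smul_arc_mul_idempSum fun _ => Finset.mem_filter.2 ⟨hj, hjL⟩,
              hcolarc a h0 hai, arc_eq_zero K (a := j) (b := j) (by simp), div_mul_cancel₀ _ hij]
            simp
        · have e1 : idempSum K (T.I.filter (· ∈ L)) * (T.c a b • arc K a b) -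
              T.c a b • arc K a b * idempSum K (T.J.filter (· ∈ L)) = 0 := by
            by_cases h0 : T.c a b = 0
            · simp [h0]
            obtain ⟨h1, h2, h3, h4⟩ := mem_of_c_ne_zero h0
            by_cases haL : src a ∈ L
            · have hbL : src b ∈ L := by
                by_contra hbL
                rcases hcross a b h1 haL hbL with h | h
                · exact hai h
                · exact hIJ h3 hj h
              rw [idempSum_mul_smul_arc fun _ => Finset.mem_filter.2 ⟨h3, haL⟩,
                smul_arc_mul_idempSum fun _ => Finset.mem_filter.2 ⟨h4, hbL⟩, sub_self]
            · have hbL : src b ∉ L := by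
                intro hbL
                rcases hcross b a h1.symm hbL haL with h | h
                · exact hIJ hi h4 h.symm
                · exact hbj h
              rw [idempSum_mul_smul_arc_of_notMem fun h => haL (Finset.mem_filter.1 h).2,
                smul_arc_mul_idempSum_of_notMem fun h => hbL (Finset.mem_filter.1 h).2, sub_zero]
          rw [e1]
          by_cases h0 : T.c a j = 0
          · simp [h0]
          by_cases h1 : T.c i b = 0
          · simp [h1]
          rw [← hcolarc a h0 hai, ← hrowarc b h1 hbj, mul_div_assoc', mul_assoc,
            div_mul_eq_mul_div, sub_self]
    rw [add_mul, mul_add]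
    exact sub_eq_sub_iff_add_eq_add.1 e |>.trans (add_comm _ _)

open Classical in
/-- If the differential has no component at a vertex of the tree, then all marked vertices lie in
one branch. -/
theorem IsPresentation.mem_branch_of_forall_eq_zero (hT : T.IsPresentation)
    (hd : Disjoint T.I T.J) {d : Γ.Arrow} (hdm : src d ∈ T.marked)
    (h0 : ∀ a b, a.fst = d.fst → T.c a b = 0) :
    ∀ x ∈ T.marked, x ∈ branch d := by
  have key := hT.subset_or_disjoint (branch d) (n := 0) (n' := 0) (mul_zero _) (zero_mul _)
    (mul_zero _) (zero_mul _) ?_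
  · rcases key with h | h
    · exact h
    · exact absurd (src_mem_branch d) (h _ hdm)
  · rw [add_zero, add_zero, F_eq_sum hd, alg_mul_sum, alg_sum_mul]
    refine Finset.sum_congr rfl fun a _ => ?_
    rw [alg_mul_sum, alg_sum_mul]
    refine Finset.sum_congr rfl fun b _ => ?_
    by_cases hab : T.c a b = 0
    · simp [hab]
    obtain ⟨h1, h2, h3, h4⟩ := mem_of_c_ne_zero hab
    by_cases haL : src a ∈ branch d
    · have hbL : src b ∈ branch d := by
        by_contra hbL
        exact hab (h0 a b (by rw [eq_of_mem_branch_of_notMem h1 haL hbL]))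
      rw [idempSum_mul_smul_arc fun _ => Finset.mem_filter.2 ⟨h3, haL⟩,
        smul_arc_mul_idempSum fun _ => Finset.mem_filter.2 ⟨h4, hbL⟩]
    · have hbL : src b ∉ branch d := by
        intro hbL
        exact hab (h0 a b (by rw [h1, eq_of_mem_branch_of_notMem h1.symm hbL haL]))
      rw [idempSum_mul_smul_arc_of_notMem fun h => haL (Finset.mem_filter.1 h).2,
        smul_arc_mul_idempSum_of_notMem fun h => hbL (Finset.mem_filter.1 h).2]

/-- The marked vertices of `T` are the edges of a walk in the tree, alternately in `I`
and in `J`. -/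
structure IsAlternating (T : Γ.TwoTerm K) : Prop where
  disjoint : Disjoint T.I T.J
  eq_of_mem_I : ∀ a b : Γ.Arrow, a.fst = b.fst → src a ∈ T.I → src b ∈ T.I → a = b
  eq_of_mem_J : ∀ a b : Γ.Arrow, a.fst = b.fst → src a ∈ T.J → src b ∈ T.J → a = b
  c_ne_zero : ∀ a b : Γ.Arrow, a.fst = b.fst → src a ∈ T.I → src b ∈ T.J → T.c a b ≠ 0
  exists_branch : ∀ d : Γ.Arrow, src d ∈ T.marked → ∀ x ∈ T.marked,
    ∃ a : Γ.Arrow, a.fst = d.fst ∧ src a ∈ T.marked ∧ x ∈ branch a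

theorem IsPresentation.branch_at (hT : T.IsPresentation)
    (hd : Disjoint T.I T.J) (d : Γ.Arrow) (hdm : src d ∈ T.marked) :
    (∃ i j : Γ.Arrow, i.fst = d.fst ∧ T.c i j ≠ 0 ∧ ∀ x ∈ T.marked, x ∈ branch i ∪ branch j) ∨
      ∀ x ∈ T.marked, x ∈ branch d := by
  classical
  by_cases h : ∃ p : Γ.Arrow × Γ.Arrow, p.1.fst = d.fst ∧ T.c p.1 p.2 ≠ 0
  · left
    obtain ⟨p, hp, hmin⟩ := Finset.exists_min_image
      (Finset.univ.filter fun p : Γ.Arrow × Γ.Arrow => p.1.fst = d.fst ∧ T.c p.1 p.2 ≠ 0)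
      (fun p => dist p.1 p.2) (by obtain ⟨p, hp⟩ := h; exact ⟨p, by simpa using hp⟩)
    rw [Finset.mem_filter] at hp
    refine ⟨p.1, p.2, hp.2.1, hp.2.2, hT.mem_branch_of_pivot hd hp.2.2 fun a b ha hab => ?_⟩
    exact hmin (a, b) (Finset.mem_filter.2 ⟨Finset.mem_univ _, ha.trans hp.2.1, hab⟩)
  · right
    refine hT.mem_branch_of_forall_eq_zero hd hdm fun a b ha => ?_
    by_contra hab
    exact h ⟨(a, b), ha, hab⟩

theorem IsPresentation.isAlternating (hT : T.IsPresentation) (hd : Disjoint T.I T.J) :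
    T.IsAlternating := by
  have hIJ : ∀ {x y : Γ.Arrow}, src x ∈ T.I → src y ∈ T.J → x ≠ y := fun hx hy e =>
    Finset.disjoint_left.1 hd hx (e ▸ hy)
  have key : ∀ d : Γ.Arrow, src d ∈ T.marked →
      (∃ i j : Γ.Arrow, T.c i j ≠ 0 ∧
        ∀ a : Γ.Arrow, a.fst = d.fst → src a ∈ T.marked → a = i ∨ a = j) ∨
      ∀ a : Γ.Arrow, a.fst = d.fst → src a ∈ T.marked → a = d := by
    intro d hdm
    rcases hT.branch_at hd d hdm with ⟨i, j, hi, hij, h⟩ | h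
    · refine Or.inl ⟨i, j, hij, fun a ha ham => ?_⟩
      rcases h _ ham with h | h
      · exact Or.inl (eq_of_mem_branch (ha.trans hi.symm) (src_mem_branch a) h)
      · have := (mem_of_c_ne_zero hij).1
        exact Or.inr (eq_of_mem_branch (ha.trans (hi.symm.trans this)) (src_mem_branch a) h)
    · exact Or.inr fun a ha ham => eq_of_mem_branch ha (src_mem_branch a) (h _ ham)
  refine ⟨hd, fun a b hab ha hb => ?_, fun a b hab ha hb => ?_, fun a b hab ha hb => ?_,
    fun d hdm x hx => ?_⟩
  · rcases key b (Or.inl hb) with ⟨i, j, hij, h⟩ | h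
    · have hm := mem_of_c_ne_zero hij
      rw [(h a hab (Or.inl ha)).resolve_right (hIJ ha hm.2.2.2),
        (h b rfl (Or.inl hb)).resolve_right (hIJ hb hm.2.2.2)]
    · exact h a hab (Or.inl ha)
  · rcases key b (Or.inr hb) with ⟨i, j, hij, h⟩ | h
    · have hm := mem_of_c_ne_zero hij
      rw [(h a hab (Or.inr ha)).resolve_left (hIJ hm.2.2.1 ha).symm,
        (h b rfl (Or.inr hb)).resolve_left (hIJ hm.2.2.1 hb).symm]
    · exact h a hab (Or.inr ha)
  · rcases key b (Or.inr hb) with ⟨i, j, hij, h⟩ | h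
    · have hm := mem_of_c_ne_zero hij
      rwa [(h a hab (Or.inl ha)).resolve_right (hIJ ha hm.2.2.2),
        (h b rfl (Or.inr hb)).resolve_left (hIJ hm.2.2.1 hb).symm]
    · exact absurd (h a hab (Or.inl ha)) (hIJ ha hb)
  · rcases hT.branch_at hd d hdm with ⟨i, j, hi, hij, h⟩ | h
    · have hm := mem_of_c_ne_zero hij
      rcases h x hx with h | h
      · exact ⟨i, hi, Or.inl hm.2.2.1, h⟩
      · exact ⟨j, hm.1.symm.trans hi, Or.inr hm.2.2.2, h⟩
    · exact ⟨d, rfl, hdm, h x hx⟩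

/-- The sets `I` and `J` of an indecomposable partial tilting complex are disjoint. -/
theorem IsPresentation.disjoint_of_hom_eq_zero
    [HasDerivedCategory.{w} (ModuleCat (Γ.Alg K))] (hT : T.IsPresentation)
    (h : ∀ φ : T.obj ⟶ T.obj⟦(-1 : ℤ)⟧, φ = 0) : Disjoint T.I T.J := by
  rw [hom_shift_eq_zero_iff] at h
  rw [Finset.disjoint_left]
  intro i hi hj
  have hF : character K i T.F = 0 := by
    rw [F, elt, map_sum]
    exact Finset.sum_eq_zero fun j _ => hT.character_range ⟨gen j, rfl⟩ i
  refine soc_ne_zero K i (h (soc K i) ?_ ?_ ?_ ?_)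
  · rw [← idemp_mul_soc, ← mul_assoc, idempSum_mul_idemp hj]
  · rw [← soc_mul_idemp, mul_assoc, idemp_mul_idempSum hi]
  · rw [mul_soc, hF, zero_smul]
  · rw [soc_mul, hF, zero_smul]

end TwoTerm

end BrauerTree

namespace BrauerTree

section Arcs

variable {V : Type v} {Γ : BrauerTree V}

theorem exists_next_eq (a : Γ.Arrow) : ∃ b, Γ.next b = a ∧ b.fst = a.fst := by
  refine ⟨Γ.next.symm a, by simp, ?_⟩
  rw [← Γ.next_fst, Equiv.apply_symm_apply]

variable [Finite V]

theorem dist_self (a : Γ.Arrow) : dist a a = 0 := dist_eq (per_pos a) rfl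

theorem dist_sub_right {a b c : Γ.Arrow} (h : a.fst = b.fst) (h' : b.fst = c.fst)
    (hle : dist b c ≤ dist a c) : dist a b = dist a c - dist b c := by
  have hlt := dist_lt a c
  apply dist_eq (by lia)
  apply (Γ.next ^ dist b c).injective
  rw [next_pow_add, next_pow_dist h', Nat.sub_add_cancel hle, next_pow_dist (h.trans h')]

theorem dist_right_inj {a b c : Γ.Arrow} (h : a.fst = b.fst) (h' : a.fst = c.fst)
    (he : dist a b = dist a c) : b = c := by
  rw [← next_pow_dist h, he, next_pow_dist h']

theorem dist_next {a b : Γ.Arrow} (h : a.fst = b.fst) (hne : Γ.next b ≠ a) :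
    dist a (Γ.next b) = dist a b + 1 := by
  have hb : (Γ.next ^ (dist a b + 1)) a = Γ.next b := by
    rw [next_pow_succ, next_pow_dist h]
  have hlt := dist_lt a b
  apply dist_eq _ hb
  rcases Nat.lt_or_ge (dist a b + 1) (per a) with h1 | h1
  · exact h1
  · have : dist a b + 1 = per a := by lia
    rw [this, next_pow_per] at hb
    exact absurd hb.symm hne

end Arcs

namespace TwoTerm

variable {V : Type v} {Γ : BrauerTree V} {K : Type u} [Field K] {T U : Γ.TwoTerm K}

theorem diagram_inter_comm (T U : Γ.TwoTerm K) : T.diagram ∩ U.diagram = U.diagram ∩ T.diagram := by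
  ext1
  · exact Set.inter_comm _ _
  · exact Set.inter_comm _ _

variable [Finite V]

theorem coords_idemp_mul_same (y : Γ.RepIndex) (x : Γ.Alg K) :
    coords Γ K (idemp K y.source * x) y = coords Γ K x y := by
  induction x using path_induction with
  | hpath d k =>
    by_cases hi : y.source = src d
    · rw [hi, idemp_src_mul_path]
    · rw [idemp_mul_path K hi, map_zero, coords_path]
      by_contra h
      exact hi (source_of_repPath_ne_zero K (Ne.symm h)).1
  | h0 => rw [mul_zero]
  | hadd x y hx hy => rw [mul_add, map_add, map_add, Finsupp.add_apply, Finsupp.add_apply, hx, hy]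
  | hsmul c x hx =>
    rw [mul_smul_comm, map_smul, map_smul, Finsupp.smul_apply, Finsupp.smul_apply, hx]

theorem coords_mul_idemp_same (y : Γ.RepIndex) (x : Γ.Alg K) :
    coords Γ K (x * idemp K y.target) y = coords Γ K x y := by
  induction x using path_induction with
  | hpath d k =>
    by_cases hi : src ((Γ.next ^ k) d) = y.target
    · rw [← hi, path_mul_idemp_src]
    · rw [path_mul_idemp K hi, map_zero, coords_path]
      by_contra h
      exact hi (source_of_repPath_ne_zero K (Ne.symm h)).2.symm
  | h0 => rw [zero_mul]
  | hadd x y hx hy => rw [add_mul, map_add, map_add, Finsupp.add_apply, Finsupp.add_apply, hx, hy]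
  | hsmul c x hx =>
    rw [smul_mul_assoc, map_smul, map_smul, Finsupp.smul_apply, Finsupp.smul_apply, hx]

theorem component_ne_zero_of_c_ne_zero {i a : Γ.Arrow} (h : T.c i a ≠ 0) (hi : src i ∈ T.I)
    (ha : src a ∈ T.J) : T.component ⟨src i, hi⟩ ⟨src a, ha⟩ ≠ 0 := by
  rw [component_ne_zero_iff]
  obtain ⟨h1, h2, -, -⟩ := mem_of_c_ne_zero h
  intro h0
  apply h
  rw [c, coef_apply K h1 h2, ← coords_idemp_mul_same, ← coords_mul_idemp_same]
  have ht : RepIndex.target (Sum.inr (Sum.inr (i, dist i a)) : Γ.RepIndex) = src a := by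
    simp only [RepIndex.target]; rw [next_pow_dist h1]
  rw [ht]
  change coords Γ K (idemp K (src i) * T.F * idemp K (src a)) _ = 0
  rw [h0, map_zero]
  rfl

namespace IsAlternating

theorem ne_of_mem (hT : T.IsAlternating)
    {x y : Γ.Arrow} (hx : src x ∈ T.I) (hy : src y ∈ T.J) : x ≠ y := fun e =>
  Finset.disjoint_left.1 hT.disjoint hx (e ▸ hy)

/-- The arrows of the diagram are those on the arcs from a vertex in `I` to a vertex in `J` around
a common vertex of the tree. -/
theorem mem_diagramArrows_iff (hT : T.IsAlternating) {d : Γ.Arrow} : d ∈ T.diagramArrows ↔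
    ∃ i a : Γ.Arrow, i.fst = d.fst ∧ a.fst = d.fst ∧ src i ∈ T.I ∧ src a ∈ T.J ∧
      dist i d < dist i a := by
  constructor
  · rintro ⟨i, j, -, d₀, k, m, hkm, hm, hi, hj, rfl⟩
    refine ⟨d₀, (Γ.next ^ m) d₀, (fst_next_pow _ _).symm, by rw [fst_next_pow, fst_next_pow],
      hi ▸ i.2, hj ▸ j.2, ?_⟩
    rw [dist_eq (hkm.trans hm) rfl, dist_eq hm rfl]
    exact hkm
  · rintro ⟨i, a, hi, ha, hiI, haJ, hlt⟩
    refine ⟨⟨src i, hiI⟩, ⟨src a, haJ⟩, ?_, i, dist i d, dist i a, hlt, dist_lt i a, rfl, ?_, ?_⟩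
    · exact component_ne_zero_of_c_ne_zero (hT.c_ne_zero i a (hi.trans ha.symm) hiI haJ) hiI haJ
    · rw [next_pow_dist (hi.trans ha.symm)]
    · rw [next_pow_dist hi]

theorem mem_diagramArrows_iff_dist (hT : T.IsAlternating)
    {i a d : Γ.Arrow} (hi : i.fst = d.fst) (ha : a.fst = d.fst)
    (hiI : src i ∈ T.I) (haJ : src a ∈ T.J) : d ∈ T.diagramArrows ↔ dist i d < dist i a := by
  rw [hT.mem_diagramArrows_iff]
  constructor
  · rintro ⟨i', a', hi', ha', hiI', haJ', h⟩
    rwa [hT.eq_of_mem_I i i' (hi.trans hi'.symm) hiI hiI',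
      hT.eq_of_mem_J a a' (ha.trans ha'.symm) haJ haJ']
  · exact fun h => ⟨i, a, hi, ha, hiI, haJ, h⟩

theorem source_mem (hT : T.IsAlternating)
    {i a : Γ.Arrow} (h : i.fst = a.fst) (hi : src i ∈ T.I) (ha : src a ∈ T.J) :
    i ∈ T.diagramArrows := by
  rw [hT.mem_diagramArrows_iff_dist rfl h.symm hi ha, dist_self]
  exact dist_pos h (hT.ne_of_mem hi ha)

theorem prev_mem (hT : T.IsAlternating)
    {i a d : Γ.Arrow} (h : i.fst = a.fst) (hi : src i ∈ T.I) (ha : src a ∈ T.J)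
    (hd : Γ.next d = a) : d ∈ T.diagramArrows := by
  have hda : a.fst = d.fst := by rw [← hd, Γ.next_fst]
  rw [hT.mem_diagramArrows_iff_dist (h.trans hda) hda hi ha, ← hd,
    dist_next (h.trans hda) (by rw [hd]; exact (hT.ne_of_mem hi ha).symm)]
  exact Nat.lt_succ_self _

theorem notMem_J (hT : T.IsAlternating) {d : Γ.Arrow} (hd : d ∈ T.diagramArrows) : src d ∉ T.J := by
  obtain ⟨i, a, hi, ha, hiI, haJ, hlt⟩ := hT.mem_diagramArrows_iff.1 hd
  intro h
  rw [hT.eq_of_mem_J a d ha haJ h] at hlt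
  exact lt_irrefl _ hlt

theorem next_notMem_I (hT : T.IsAlternating)
    {d : Γ.Arrow} (hd : d ∈ T.diagramArrows) : tgt d ∉ T.I := by
  obtain ⟨i, a, hi, ha, hiI, haJ, hlt⟩ := hT.mem_diagramArrows_iff.1 hd
  intro h
  have hn : i = Γ.next d := hT.eq_of_mem_I i (Γ.next d) (by rw [Γ.next_fst, hi]) hiI h
  have hk : (Γ.next ^ (dist i d + 1)) i = i := by
    rw [next_pow_succ, next_pow_dist hi, ← hn]
  have := dist_lt i a
  exact next_pow_ne (Nat.succ_pos _) (by lia) hk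

/-- An arrow of the diagram whose target is unmarked is followed by an arrow of the diagram. -/
theorem next_mem (hT : T.IsAlternating) {d : Γ.Arrow} (hd : d ∈ T.diagramArrows) (h : tgt d ∉ T.J) :
    Γ.next d ∈ T.diagramArrows := by
  obtain ⟨i, a, hi, ha, hiI, haJ, hlt⟩ := hT.mem_diagramArrows_iff.1 hd
  have hn : (Γ.next d).fst = d.fst := Γ.next_fst d
  rw [hT.mem_diagramArrows_iff_dist (hi.trans hn.symm) (ha.trans hn.symm) hiI haJ]
  have hne : Γ.next d ≠ i := fun e => hT.next_notMem_I hd (by rw [tgt, e]; exact hiI)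
  have := dist_next hi hne
  have hne' : dist i (Γ.next d) ≠ dist i a := fun e => h (by
    rw [tgt, dist_right_inj (hi.trans hn.symm) (hi.trans ha.symm) e]; exact haJ)
  lia

/-- If both ends of an edge of the tree lie on the walk of `T`, then so does the edge. -/
theorem src_mem_marked (hT : T.IsAlternating)
    {a b b' : Γ.Arrow} (hb : b.fst = a.fst) (hb' : b'.fst = a.snd)
    (hbm : src b ∈ T.marked) (hbm' : src b' ∈ T.marked) : src a ∈ T.marked := by
  obtain ⟨y, hy, hym, h⟩ := hT.exists_branch b hbm _ hbm'
  have : src b' ∈ branch a := src_mem_branch_of_fst (by rw [hb']; exact snd_mem_side a)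
  rwa [← eq_of_mem_branch (hy.trans hb) h this]

theorem exists_marked (hT : T.IsAlternating) {d : Γ.Arrow} (hd : d ∈ T.diagramArrows) :
    ∃ b : Γ.Arrow, b.fst = d.fst ∧ src b ∈ T.marked := by
  obtain ⟨i, a, hi, ha, hiI, haJ, hlt⟩ := hT.mem_diagramArrows_iff.1 hd
  exact ⟨i, hi, Or.inl hiI⟩

end IsAlternating

/-- Two complexes whose diagrams have a connected intersection with more than one vertex, both
ends of which are sinks. -/
structure IsSinkPair (T U : Γ.TwoTerm K) : Prop where
  left : T.IsAlternating
  right : U.IsAlternating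
  connected : (T.diagram ∩ U.diagram).Connected
  nontrivial : (T.diagram ∩ U.diagram).verts.Nontrivial
  sinks : ∀ x, (T.diagram ∩ U.diagram).IsDegreeOne x → (T.diagram ∩ U.diagram).IsSink x

theorem exists_of_eqvGen {α : Type*} {r : α → α → Prop} {x y : α} (h : Relation.EqvGen r x y) :
    x = y ∨ ((∃ z, r x z ∨ r z x) ∧ ∃ z, r y z ∨ r z y) := by
  induction h with
  | rel x y h => exact Or.inr ⟨⟨y, Or.inl h⟩, x, Or.inr h⟩
  | refl x => exact Or.inl rfl
  | symm x y _ ih => exact ih.imp Eq.symm And.symm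
  | trans x y z _ _ ih1 ih2 =>
    rcases ih1 with rfl | h1
    · exact ih2
    · rcases ih2 with rfl | h2
      · exact Or.inr h1
      · exact Or.inr ⟨h1.1, h2.2⟩

/-- The arrow `d` belongs to both diagrams. -/
def Common (T U : Γ.TwoTerm K) (d : Γ.Arrow) : Prop := d ∈ T.diagramArrows ∧ d ∈ U.diagramArrows

namespace IsSinkPair

theorem symm (h : IsSinkPair T U) : IsSinkPair U T := by
  have e := diagram_inter_comm T U
  exact ⟨h.right, h.left, e ▸ h.connected, e ▸ h.nontrivial, e ▸ h.sinks⟩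

/-- Every vertex of the intersection is incident to one of its arrows. -/
theorem exists_common (h : IsSinkPair T U)
    {x : Γ.Edge} (hx : x ∈ T.diagram.verts) (hx' : x ∈ U.diagram.verts) :
    ∃ d, Common T U d ∧ (src d = x ∨ tgt d = x) := by
  obtain ⟨y, hy, hne⟩ := h.nontrivial.exists_ne x
  rcases exists_of_eqvGen (h.connected.2 x ⟨hx, hx'⟩ y hy) with e | ⟨⟨z, hz⟩, -⟩
  · exact absurd e.symm hne
  · rcases hz with ⟨d, hd, h1, h2⟩ | ⟨d, hd, h1, h2⟩
    · exact ⟨d, hd, Or.inl h1⟩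
    · exact ⟨d, hd, Or.inr h2⟩

theorem exists_common_of_marked (h : IsSinkPair T U)
    {x : Γ.Edge} (hx : x ∈ T.marked) (hx' : x ∈ U.marked) :
    ∃ d, Common T U d ∧ (src d = x ∨ tgt d = x) :=
  h.exists_common (Or.inl hx) (Or.inl hx')

/-- No vertex is a source of one diagram and a sink of the other one. -/
theorem notMem_J (h : IsSinkPair T U) {x : Γ.Edge} (hx : x ∈ T.I) : x ∉ U.J := by
  intro hx'
  obtain ⟨d, hd, h1 | h1⟩ := h.exists_common_of_marked (Or.inl hx) (Or.inr hx')
  · exact h.right.notMem_J hd.2 (h1 ▸ hx')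
  · exact h.left.next_notMem_I hd.1 (h1 ▸ hx)

theorem mem_I_of_marked (h : IsSinkPair T U)
    {x : Γ.Edge} (hx : x ∈ T.I) (hx' : x ∈ U.marked) : x ∈ U.I :=
  hx'.resolve_right (h.notMem_J hx)

theorem mem_J_of_marked (h : IsSinkPair T U)
    {x : Γ.Edge} (hx : x ∈ T.J) (hx' : x ∈ U.marked) : x ∈ U.J :=
  hx'.resolve_left fun hI => h.symm.notMem_J hI hx

/-- A vertex that is the source of a common arrow and incident to no other one is impossible. -/
theorem exists_ne_of_src (h : IsSinkPair T U) {d : Γ.Arrow} (hd : Common T U d) :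
    ∃ e, Common T U e ∧ e ≠ d ∧ (src e = src d ∨ tgt e = src d) := by
  by_contra hcon
  have hset : {e ∈ (T.diagram ∩ U.diagram).arrows | src e = src d ∨ tgt e = src d} = {d} := by
    ext e
    constructor
    · rintro ⟨he, hs⟩
      by_contra hne
      exact hcon ⟨e, he, hne, hs⟩
    · rintro rfl
      exact ⟨hd, Or.inl rfl⟩
  have hdeg : (T.diagram ∩ U.diagram).IsDegreeOne (src d) := by
    refine ⟨⟨Or.inr ⟨d, hd.1, Or.inl rfl⟩, Or.inr ⟨d, hd.2, Or.inl rfl⟩⟩, ?_⟩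
    rw [hset, Set.ncard_singleton]
  exact (h.sinks _ hdeg).2.2 d hd rfl

theorem source_eq_of_dist_le (h : IsSinkPair T U)
    {d i i' a' : Γ.Arrow} (hd : Common T U d) (hi : i.fst = d.fst)
    (hiI : src i ∈ T.I) (hi' : i'.fst = d.fst) (hiI' : src i' ∈ U.I) (ha' : a'.fst = d.fst)
    (haJ' : src a' ∈ U.J) (hle : dist i d ≤ dist i' d) : i = i' := by
  by_contra hne
  obtain ⟨i₀, a, hi₀, ha, hiI₀, haJ, -⟩ := h.left.mem_diagramArrows_iff.1 hd.1
  have hlt := (h.right.mem_diagramArrows_iff_dist hi' ha' hiI' haJ').1 hd.2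
  have hci : Common T U i := by
    refine ⟨h.left.source_mem (hi.trans ha.symm) hiI haJ, ?_⟩
    rw [h.right.mem_diagramArrows_iff_dist (hi'.trans hi.symm) (ha'.trans hi.symm) hiI' haJ',
      dist_sub_right (hi'.trans hi.symm) hi hle]
    lia
  have hUm : src i ∉ U.marked := fun hm =>
    hne (h.right.eq_of_mem_I i i' (hi.trans hi'.symm) (h.mem_I_of_marked hiI hm) hiI')
  have hother : ∀ e, Common T U e → e.fst ≠ i.snd := by
    intro e he hfst
    obtain ⟨b, hb, hbm⟩ := h.right.exists_marked he.2
    exact hUm (h.right.src_mem_marked (hi'.trans hi.symm) (hb.trans hfst) (Or.inl hiI') hbm)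
  obtain ⟨e, he, hne', hs | hs⟩ := h.exists_ne_of_src hci
  · rcases src_eq_src_iff.1 hs with rfl | rfl
    · exact hne' rfl
    · exact hother _ he rfl
  · exact h.left.next_notMem_I he.1 (hs ▸ hiI)

/-- At a vertex of the tree with a common arrow, the two diagrams have the same source. -/
theorem source_eq (h : IsSinkPair T U) {d i i' : Γ.Arrow} (hd : Common T U d) (hi : i.fst = d.fst)
    (hiI : src i ∈ T.I) (hi' : i'.fst = d.fst) (hiI' : src i' ∈ U.I) : i = i' := by
  obtain ⟨_, a, -, ha, -, haJ, -⟩ := h.left.mem_diagramArrows_iff.1 hd.1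
  obtain ⟨_, a', -, ha', -, haJ', -⟩ := h.right.mem_diagramArrows_iff.1 hd.2
  rcases le_total (dist i d) (dist i' d) with hle | hle
  · exact h.source_eq_of_dist_le hd hi hiI hi' hiI' ha' haJ' hle
  · exact (h.symm.source_eq_of_dist_le hd.symm hi' hiI' hi hiI ha haJ hle).symm

theorem exists_source (h : IsSinkPair T U) {d : Γ.Arrow} (hd : Common T U d) :
    ∃ i a a' : Γ.Arrow, i.fst = d.fst ∧ a.fst = d.fst ∧ a'.fst = d.fst ∧ src i ∈ T.I ∧
      src i ∈ U.I ∧ src a ∈ T.J ∧ src a' ∈ U.J := by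
  obtain ⟨i, a, hi, ha, hiI, haJ, -⟩ := h.left.mem_diagramArrows_iff.1 hd.1
  obtain ⟨i', a', hi', ha', hiI', haJ', -⟩ := h.right.mem_diagramArrows_iff.1 hd.2
  have e := h.source_eq hd hi hiI hi' hiI'
  exact ⟨i, a, a', hi, ha, ha', hiI, e ▸ hiI', haJ, haJ'⟩

/-- The arrows leaving a common source belong to both diagrams. -/
theorem common_of_mem_I (h : IsSinkPair T U) {i : Γ.Arrow} (hi : src i ∈ T.I) (hi' : src i ∈ U.I) :
    Common T U i := by
  have key : ∀ d, Common T U d → src d = src i ∨ tgt d = src i → src d = src i := by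
    rintro d hd (hs | hs)
    · exact hs
    · exact absurd hi (hs ▸ h.left.next_notMem_I hd.1)
  obtain ⟨d, hd, hs⟩ := h.exists_common_of_marked (Or.inl hi) (Or.inl hi')
  replace hs := key d hd hs
  obtain ⟨e, he, hne, hse⟩ := h.exists_ne_of_src hd
  replace hse := key e he (by rwa [hs] at hse)
  rcases src_eq_src_iff.1 hs with rfl | rfl
  · exact hd
  · rcases src_eq_src_iff.1 hse with rfl | rfl
    · exact he
    · exact absurd rfl hne

theorem exists_J (h : IsSinkPair T U) {i : Γ.Arrow} (hi : src i ∈ T.I) (hi' : src i ∈ U.I) :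
    ∃ a : Γ.Arrow, a.fst = i.fst ∧ src a ∈ T.J := by
  obtain ⟨_, a, -, ha, -, haJ, -⟩ :=
    h.left.mem_diagramArrows_iff.1 (h.common_of_mem_I hi hi').1
  exact ⟨a, ha, haJ⟩

/-- A common sink is the target of a common arrow. -/
theorem exists_common_of_mem_J (h : IsSinkPair T U)
    {j : Γ.Arrow} (hj : src j ∈ T.J) (hj' : src j ∈ U.J) :
    ∃ d, Common T U d ∧ (Γ.next d = j ∨ Γ.next d = j.symm) := by
  obtain ⟨d, hd, hs | hs⟩ := h.exists_common_of_marked (Or.inr hj) (Or.inr hj')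
  · exact absurd (hs ▸ hj) (h.left.notMem_J hd.1)
  · exact ⟨d, hd, src_eq_src_iff.1 hs⟩

theorem exists_marked (h : IsSinkPair T U) : ∃ x, x ∈ T.I ∧ x ∈ U.I := by
  obtain ⟨x, hx⟩ := h.connected.1
  obtain ⟨d, hd, -⟩ := h.exists_common hx.1 hx.2
  obtain ⟨i, -, -, -, -, -, hi, hi', -⟩ := h.exists_source hd
  exact ⟨src i, hi, hi'⟩

/-- At a vertex of the tree on both walks there is a common marked vertex. -/
theorem exists_marked_at (h : IsSinkPair T U)
    {b b' : Γ.Arrow} (hbb : b.fst = b'.fst) (hb : src b ∈ T.marked)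
    (hb' : src b' ∈ U.marked) : ∃ e : Γ.Arrow, e.fst = b.fst ∧
      ((src e ∈ T.I ∧ src e ∈ U.I) ∨ (src e ∈ T.J ∧ src e ∈ U.J)) := by
  obtain ⟨x, hx, hx'⟩ := h.exists_marked
  obtain ⟨y, hy, hym, hyx⟩ := h.left.exists_branch b hb x (Or.inl hx)
  obtain ⟨y', hy', hym', hyx'⟩ := h.right.exists_branch b' hb' x (Or.inl hx')
  obtain rfl := eq_of_mem_branch (hy.trans (hbb.trans hy'.symm)) hyx hyx'
  refine ⟨y, hy, ?_⟩
  rcases hym with hI | hJ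
  · exact Or.inl ⟨hI, h.mem_I_of_marked hI hym'⟩
  · exact Or.inr ⟨hJ, h.mem_J_of_marked hJ hym'⟩

end IsSinkPair

end TwoTerm

end BrauerTree

namespace BrauerTree

variable {V : Type v} {Γ : BrauerTree V} {K : Type u} [Field K]

theorem IsArrowChain.fst_eq {L : List Γ.Arrow} (h : IsArrowChain K L) {a b : Γ.Arrow}
    (ha : a ∈ L) (hb : b ∈ L) : a.fst = b.fst := by
  have hc : L.IsChain fun d d' : Γ.Arrow => d.fst = d'.fst := h.2.2.imp fun d d' hd => by
    by_cases e : d' = Γ.next d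
    · rw [e, Γ.next_fst]
    · exact absurd (arrow_mul_arrow K e) hd
  have : IsTrans Γ.Arrow fun d d' : Γ.Arrow => d.fst = d'.fst := ⟨fun _ _ _ => Eq.trans⟩
  have hp := List.isChain_iff_pairwise.1 hc
  have : Std.Symm fun d d' : Γ.Arrow => d.fst = d'.fst := ⟨fun _ _ => Eq.symm⟩
  exact List.Pairwise.forall_of_forall (R := fun d d' : Γ.Arrow => d.fst = d'.fst) (fun _ _ => rfl) hp ha hb

theorem IsACycle.exists_fst_eq {L : List Γ.Arrow} (hL : IsACycle K L) {m : Γ.Edge} {a : Γ.Arrow}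
    (ha : a ∈ L) (h : ∃ d ∈ L, src d = m ∨ tgt d = m) : ∃ b, src b = m ∧ b.fst = a.fst := by
  obtain ⟨d, hd, h | h⟩ := h
  · exact ⟨d, h, hL.1.fst_eq hd ha⟩
  · exact ⟨Γ.next d, h, (Γ.next_fst d).trans (hL.1.fst_eq hd ha)⟩

variable [Finite V]

theorem arrow_mul_arrow_next_ne_zero {d : Γ.Arrow} (h : 2 ≤ per d) :
    arrow K d * arrow K (Γ.next d) ≠ 0 := by
  intro h0
  have hp : path K d 2 = 0 := by rw [path_succ, path_one, pow_one, h0]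
  have hc : repPath K d 2 = 0 := by rw [← coords_path, hp, map_zero]
  rcases h.lt_or_eq with h | h
  · rw [repPath_of_lt K two_pos h] at hc
    exact one_ne_zero (Finsupp.single_eq_zero.1 hc)
  · rw [h, repPath_per] at hc
    exact one_ne_zero (Finsupp.single_eq_zero.1 hc)

/-- The arrows around a vertex of the tree form an `A`-cycle. -/
theorem exists_isACycle (d : Γ.Arrow) :
    ∃ L : List Γ.Arrow, IsACycle K L ∧ ∀ b : Γ.Arrow, b.fst = d.fst → b ∈ L := by
  classical
  set L := (List.range (per d)).map fun k => (Γ.next ^ k) d with hL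
  have hmem : ∀ b : Γ.Arrow, b.fst = d.fst → b ∈ L := fun b hb => by
    obtain ⟨k, hk, hkb⟩ := exists_next_pow_eq hb.symm
    exact List.mem_map.2 ⟨k, List.mem_range.2 hk, hkb⟩
  have hlen : L.length = per d := by rw [hL, List.length_map, List.length_range]
  have hchain : IsArrowChain K L := by
    refine ⟨List.ne_nil_of_mem (hmem d rfl), ?_, ?_⟩
    · refine List.Nodup.map_on (fun k hk l hl e => ?_) List.nodup_range
      exact next_pow_inj (List.mem_range.1 hk) (List.mem_range.1 hl) e
    · rw [List.isChain_iff_getElem]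
      intro k hk
      rw [hlen] at hk
      simp only [hL, List.getElem_map, List.getElem_range]
      rw [next_pow_succ]
      exact arrow_mul_arrow_next_ne_zero (by rw [per_next_pow]; lia)
  refine ⟨L, ⟨hchain, fun L' hL' hinf => ?_⟩, hmem⟩
  refine (hinf.eq_of_length (le_antisymm hinf.length_le ?_)).symm
  refine (hL'.2.1.subperm fun b hb => hmem b ?_).length_le
  exact hL'.fst_eq hb (hinf.subset (hmem d rfl))

namespace TwoTerm

variable {T S : Γ.TwoTerm K}

theorem mem_restriction_arrows_iff {a : Γ.Arrow} : a ∈ (T.restriction S).arrows ↔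
    a ∈ T.diagramArrows ∧ ∃ b : Γ.Arrow, src b ∈ S.marked ∧ b.fst = a.fst := by
  refine and_congr_right fun _ => ⟨?_, ?_⟩
  · rintro ⟨L, hL, ⟨m, hm, h⟩, ha⟩
    obtain ⟨b, rfl, hb⟩ := hL.exists_fst_eq ha h
    exact ⟨b, hm, hb⟩
  · rintro ⟨b, hb, hba⟩
    obtain ⟨L, hL, h⟩ := exists_isACycle (K := K) a
    exact ⟨L, hL, ⟨_, hb, b, h b hba, Or.inl rfl⟩, h a rfl⟩

theorem mem_restriction_verts_iff {x : Γ.Edge} : x ∈ (T.restriction S).verts ↔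
    x ∈ T.diagram.verts ∧ ∃ b b' : Γ.Arrow, src b ∈ S.marked ∧ src b' = x ∧ b.fst = b'.fst := by
  refine and_congr_right fun _ => ⟨?_, ?_⟩
  · rintro ⟨L, hL, ⟨m, hm, h⟩, h'⟩
    obtain ⟨a, ha⟩ := List.exists_mem_of_ne_nil L hL.1.1
    obtain ⟨b, rfl, hb⟩ := hL.exists_fst_eq ha h
    obtain ⟨b', hx, hb'⟩ := hL.exists_fst_eq ha h'
    exact ⟨b, b', hm, hx, hb.trans hb'.symm⟩
  · rintro ⟨b, b', hb, hb', hf⟩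
    obtain ⟨L, hL, h⟩ := exists_isACycle (K := K) b
    exact ⟨L, hL, ⟨_, hb, b, h b rfl, Or.inl rfl⟩, b', h b' hf.symm, Or.inl hb'⟩

end TwoTerm

end BrauerTree

namespace BrauerTree

namespace TwoTerm

variable {V : Type v} {Γ : BrauerTree V} {K : Type u} [Field K] [Finite V] {T U : Γ.TwoTerm K}

/-- At every common source the arc of `T` is contained in the arc of `U`, and at a common sink the
walk of `U` continues whenever that of `T` may. -/
structure Precedes (T U : Γ.TwoTerm K) : Prop where
  dist_le : ∀ i a a' : Γ.Arrow, a.fst = i.fst → a'.fst = i.fst → src i ∈ T.I → src i ∈ U.I →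
    src a ∈ T.J → src a' ∈ U.J → dist i a ≤ dist i a'
  exists_source : ∀ j : Γ.Arrow, src j ∈ T.J → src j ∈ U.J →
    ∃ b : Γ.Arrow, b.fst = j.fst ∧ src b ∈ U.I

theorem IsAlternating.isDegreeOne (hT : T.IsAlternating) {d j : Γ.Arrow}
    (hd : d ∈ T.diagramArrows) (hdj : Γ.next d = j.symm) (hj : src j ∈ T.J)
    (hI : ∀ b : Γ.Arrow, b.fst = j.fst → src b ∉ T.I) : T.diagram.IsDegreeOne (src j) := by
  refine ⟨Or.inl (Or.inr hj), Set.ncard_eq_one.2 ⟨d, ?_⟩⟩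
  ext e
  constructor
  · rintro ⟨he, hs | hs⟩
    · exact absurd (hs ▸ hj) (hT.notMem_J he)
    · rcases src_eq_src_iff.1 hs with hn | hn
      · obtain ⟨i, -, hi, -, hiI, -⟩ := hT.mem_diagramArrows_iff.1 he
        exact absurd hiI (hI i (by rw [hi, ← hn, Γ.next_fst]))
      · exact Γ.next.injective (hn.trans hdj.symm)
  · rintro rfl
    exact ⟨hd, Or.inr (by rw [tgt, hdj, src_symm])⟩

theorem IsAlternating.next_ne (hT : T.IsAlternating) {d : Γ.Arrow}
    (hd : d ∈ T.diagramArrows) : Γ.next d ≠ d := by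
  intro hn
  obtain ⟨i, a, hi, -, -, -, hlt⟩ := hT.mem_diagramArrows_iff.1 hd
  have h1 := dist_lt i a
  have h2 := per_eq hi
  have h3 : ¬ 1 < per d := fun h => next_pow_ne one_pos h (by rw [pow_one, hn])
  lia

theorem IsAlternating.mem_J_of_unique (hT : T.IsAlternating) {d : Γ.Arrow}
    (hd : d ∈ T.diagramArrows)
    (hu : ∀ e ∈ T.diagramArrows, src e = tgt d ∨ tgt e = tgt d → e = d) :
    tgt d ∈ T.J ∧ ∀ b : Γ.Arrow, b.fst = (Γ.next d).symm.fst → src b ∉ T.I := by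
  have hJ : tgt d ∈ T.J := by
    by_contra h
    exact hT.next_ne hd (hu _ (hT.next_mem hd h) (Or.inl rfl))
  refine ⟨hJ, fun b hb hbI => ?_⟩
  obtain ⟨e, he, -⟩ := exists_next_eq (Γ.next d).symm
  have heT := hT.prev_mem hb hbI (by rw [src_symm]; exact hJ) he
  have hed := hu e heT (Or.inr (by rw [tgt, he, src_symm]; rfl))
  rw [hed] at he
  exact SimpleGraph.Dart.symm_ne _ he.symm

theorem IsSinkPair.exists_isDegreeOne_iff (h : IsSinkPair T U) :
    (∃ x, T.diagram.IsDegreeOne x ∧ U.diagram.IsDegreeOne x) ↔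
      ∃ j : Γ.Arrow, src j ∈ T.J ∧ src j ∈ U.J ∧
        (∀ b : Γ.Arrow, b.fst = j.fst → src b ∉ T.I) ∧
        ∀ b : Γ.Arrow, b.fst = j.fst → src b ∉ U.I := by
  constructor
  · rintro ⟨x, ⟨hx, hT⟩, hx', hU⟩
    obtain ⟨d, hd, hs⟩ := h.exists_common hx hx'
    obtain ⟨t, ht⟩ := Set.ncard_eq_one.1 hT
    obtain ⟨t', ht'⟩ := Set.ncard_eq_one.1 hU
    have huT : ∀ e ∈ T.diagramArrows, src e = x ∨ tgt e = x → e = d := by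
      intro e he hes
      have h1 : e ∈ ({t} : Set Γ.Arrow) := ht ▸ ⟨he, hes⟩
      have h2 : d ∈ ({t} : Set Γ.Arrow) := ht ▸ ⟨hd.1, hs⟩
      rw [Set.mem_singleton_iff.1 h1, Set.mem_singleton_iff.1 h2]
    have huU : ∀ e ∈ U.diagramArrows, src e = x ∨ tgt e = x → e = d := by
      intro e he hes
      have h1 : e ∈ ({t'} : Set Γ.Arrow) := ht' ▸ ⟨he, hes⟩
      have h2 : d ∈ ({t'} : Set Γ.Arrow) := ht' ▸ ⟨hd.2, hs⟩
      rw [Set.mem_singleton_iff.1 h1, Set.mem_singleton_iff.1 h2]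
    rcases hs with rfl | rfl
    · obtain ⟨e, he, hne, hes⟩ := h.exists_ne_of_src hd
      exact absurd (huT e he.1 hes) hne
    · obtain ⟨h1, h2⟩ := h.left.mem_J_of_unique hd.1 huT
      obtain ⟨h3, h4⟩ := h.right.mem_J_of_unique hd.2 huU
      exact ⟨(Γ.next d).symm, by rwa [src_symm], by rwa [src_symm], h2, h4⟩
  · rintro ⟨j, hj, hj', hT, hU⟩
    obtain ⟨d, hd, hn | hn⟩ := h.exists_common_of_mem_J hj hj'
    · obtain ⟨i, -, -, hi, -, -, hiI, -⟩ := h.exists_source hd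
      exact absurd hiI (hT i (by rw [hi, ← hn, Γ.next_fst]))
    · exact ⟨src j, h.left.isDegreeOne hd.1 hn hj hT, h.right.isDegreeOne hd.2 hn hj' hU⟩

theorem IsSinkPair.mem_of_precedes (h : IsSinkPair T U) (hp : Precedes T U) {d b : Γ.Arrow}
    (hd : d ∈ T.diagramArrows) (hb : b.fst = d.fst) (hbm : src b ∈ U.marked) :
    d ∈ U.diagramArrows := by
  obtain ⟨i, a, hi, ha, hiI, haJ, hlt⟩ := h.left.mem_diagramArrows_iff.1 hd
  obtain ⟨e, he, ⟨heT, heU⟩ | ⟨heT, heU⟩⟩ :=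
    h.exists_marked_at (hi.trans hb.symm) (Or.inl hiI) hbm
  · obtain rfl := h.left.eq_of_mem_I e i he heT hiI
    obtain ⟨a', ha', haJ'⟩ := h.symm.exists_J heU heT
    rw [h.right.mem_diagramArrows_iff_dist hi (ha'.trans hi) heU haJ']
    exact hlt.trans_le (hp.dist_le e a a' (ha.trans hi.symm) ha' hiI heU haJ haJ')
  · obtain rfl := h.left.eq_of_mem_J e a ((he.trans hi).trans ha.symm) heT haJ
    obtain ⟨b', hb', hbI'⟩ := hp.exists_source e heT heU
    obtain ⟨p, hp, hpf⟩ := exists_next_eq e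
    have hpc : Common T U p :=
      ⟨h.left.prev_mem he.symm hiI heT hp, h.right.prev_mem hb' hbI' heU hp⟩
    obtain rfl := h.source_eq hpc (he.symm.trans hpf.symm) hiI (hb'.trans hpf.symm) hbI'
    rwa [h.right.mem_diagramArrows_iff_dist hi ha hbI' heU]

theorem IsSinkPair.precedes_of_restriction_subset (h : IsSinkPair T U)
    (hend : ¬ ∃ x, T.diagram.IsDegreeOne x ∧ U.diagram.IsDegreeOne x)
    (hsub : T.restriction U ⊆ U.restriction T) : Precedes T U := by
  have key : ∀ d b : Γ.Arrow, d ∈ T.diagramArrows → b.fst = d.fst → src b ∈ U.marked →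
      d ∈ U.diagramArrows := fun d b hd hb hbm =>
    (mem_restriction_arrows_iff.1 (hsub.2 (mem_restriction_arrows_iff.2 ⟨hd, b, hbm, hb⟩))).1
  constructor
  · intro i a a' ha ha' hi hi' haJ haJ'
    by_contra hlt
    have hd := (h.left.mem_diagramArrows_iff_dist ha'.symm (ha.trans ha'.symm) hi haJ).2
      (not_le.1 hlt)
    exact h.right.notMem_J (key a' a' hd rfl (Or.inr haJ')) haJ'
  · intro j hj hj'
    by_contra hcon
    refine hend (h.exists_isDegreeOne_iff.2 ⟨j, hj, hj', fun b hb hbI => ?_, fun b hb hbI =>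
      hcon ⟨b, hb, hbI⟩⟩)
    obtain ⟨p, hp, hpf⟩ := exists_next_eq j
    have hpU := key p j (h.left.prev_mem hb hbI hj hp) hpf.symm (Or.inr hj')
    obtain ⟨i, -, hi, -, hiI, -⟩ := h.right.mem_diagramArrows_iff.1 hpU
    exact hcon ⟨i, hi.trans hpf, hiI⟩

theorem IsSinkPair.mem_verts_of_marked (h : IsSinkPair T U) (hp : Precedes T U) {b b' : Γ.Arrow}
    (hbm : src b ∈ U.marked) (hbb : b.fst = b'.fst) (hbm' : src b' ∈ T.marked) :
    src b' ∈ U.diagram.verts := by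
  obtain ⟨e, he, ⟨heT, heU⟩ | ⟨heT, heU⟩⟩ := h.exists_marked_at hbb.symm hbm' hbm
  · rcases hbm' with hI | hJ
    · obtain rfl := h.left.eq_of_mem_I e b' he heT hI
      exact Or.inl (Or.inl heU)
    · obtain ⟨p, hpn, hpf⟩ := exists_next_eq b'
      refine Or.inr ⟨p, h.mem_of_precedes hp (h.left.prev_mem he heT hJ hpn)
        (hbb.trans hpf.symm) hbm, Or.inr (by rw [tgt, hpn])⟩
  · rcases hbm' with hI | hJ
    · exact Or.inr ⟨b', h.mem_of_precedes hp (h.left.source_mem he.symm hI heT) hbb hbm,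
        Or.inl rfl⟩
    · obtain rfl := h.left.eq_of_mem_J e b' he heT hJ
      exact Or.inl (Or.inr heU)

/-- An edge of the tree that joins the two walks is marked in one of them. -/
theorem IsSinkPair.mem_marked_or (h : IsSinkPair T U) {a b c : Γ.Arrow}
    (hb : b.fst = a.fst) (hbm : src b ∈ U.marked) (hc : c.fst = a.snd) (hcm : src c ∈ T.marked) :
    src a ∈ T.marked ∨ src a ∈ U.marked := by
  obtain ⟨x, hx, hx'⟩ := h.exists_marked
  obtain ⟨y, hy, hym, hyx⟩ := h.left.exists_branch c hcm x (Or.inl hx)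
  obtain ⟨z, hz, hzm, hzx⟩ := h.right.exists_branch b hbm x (Or.inl hx')
  rcases mem_branch_or_symm a x with hax | hax
  · rw [← eq_of_mem_branch (hz.trans hb) hzx hax]
    exact Or.inr hzm
  · rw [← src_symm a, ← eq_of_mem_branch (hy.trans hc) hyx hax]
    exact Or.inl hym

theorem IsSinkPair.restriction_subset_iff (h : IsSinkPair T U)
    (hend : ¬ ∃ x, T.diagram.IsDegreeOne x ∧ U.diagram.IsDegreeOne x) :
    T.restriction U ⊆ U.restriction T ↔ Precedes T U := by
  refine ⟨h.precedes_of_restriction_subset hend, fun hp => ⟨fun x hx => ?_, fun d hd => ?_⟩⟩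
  · obtain ⟨hxT, b, b', hbm, rfl, hbb⟩ := mem_restriction_verts_iff.1 hx
    rw [mem_restriction_verts_iff]
    by_cases hm : src b' ∈ T.marked
    · exact ⟨h.mem_verts_of_marked hp hbm hbb hm, b', b', hm, rfl, rfl⟩
    obtain ⟨d, hd, hs⟩ := hxT.resolve_left hm
    obtain ⟨d', hd', hdf⟩ : ∃ d' : Γ.Arrow, src d' = src b' ∧ d'.fst = d.fst := by
      rcases hs with hs | hs
      · exact ⟨d, hs, rfl⟩
      · exact ⟨Γ.next d, hs, Γ.next_fst d⟩
    obtain ⟨c, hc, hcm⟩ := h.left.exists_marked hd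
    refine ⟨?_, c, d', hcm, hd', hc.trans hdf.symm⟩
    rcases src_eq_src_iff.1 hd' with rfl | rfl
    · exact Or.inr ⟨d, h.mem_of_precedes hp hd (hbb.trans hdf) hbm, hs⟩
    · exact Or.inl ((h.mem_marked_or hbb hbm (hc.trans hdf.symm) hcm).resolve_left hm)
  · obtain ⟨hdT, b, hbm, hb⟩ := mem_restriction_arrows_iff.1 hd
    obtain ⟨c, hc, hcm⟩ := h.left.exists_marked hdT
    exact mem_restriction_arrows_iff.2 ⟨h.mem_of_precedes hp hdT hb hbm, c, hcm, hc⟩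

end TwoTerm

end BrauerTree

namespace BrauerTree

section Potential

variable {V : Type v} {Γ : BrauerTree V} {K : Type u} [Field K] [Finite V]

/-- A system of linear equations with nonzero coefficients, one for each edge of the tree and
involving its two end points, has a solution without zeros. -/
theorem exists_potential (x : Γ.Arrow → K) (hx : ∀ d, x d ≠ 0) :
    ∃ z : V → K, (∀ v, z v ≠ 0) ∧ ∀ d : Γ.Arrow, x d * z d.fst + x d.symm * z d.snd = 0 := by
  classical
  have := Fintype.ofFinite V
  choose δ hδ using exists_src_eq (Γ := Γ)
  let L : (V → K) →ₗ[K] (Γ.Edge → K) := LinearMap.pi fun e =>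
    x (δ e) • LinearMap.proj (δ e).fst + x (δ e).symm • LinearMap.proj (δ e).snd
  have hL : ∀ z e, L z e = x (δ e) * z (δ e).fst + x (δ e).symm * z (δ e).snd := fun z e => rfl
  have hcard : Module.finrank K (Γ.Edge → K) < Module.finrank K (V → K) := by
    rw [Module.finrank_fintype_fun_eq_card, Module.finrank_fintype_fun_eq_card,
      ← Γ.isTree.card_edgeFinset, ← SimpleGraph.card_edgeSet]
    convert Nat.lt_succ_self _
  obtain ⟨z, hz, hz0⟩ := Submodule.exists_mem_ne_zero_of_ne_bot
    (LinearMap.ker_ne_bot_of_finrank_lt hcard (f := L))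
  have heq : ∀ d : Γ.Arrow, x d * z d.fst + x d.symm * z d.snd = 0 := by
    intro d
    have h0 : L z (src d) = 0 := by rw [LinearMap.mem_ker.1 hz]; rfl
    rw [hL] at h0
    rcases src_eq_src_iff.1 (hδ (src d)) with h | h
    · rwa [h] at h0
    · rw [h, SimpleGraph.Dart.symm_symm, add_comm] at h0
      exact h0
  have hstep : ∀ u v, Γ.graph.Adj u v → z u = 0 → z v = 0 := by
    intro u v huv h0
    have := heq ⟨(u, v), huv⟩
    change x _ * z u + x _ * z v = 0 at this
    rw [h0, mul_zero, zero_add] at this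
    exact (mul_eq_zero.1 this).resolve_left (hx _)
  refine ⟨z, fun v hv => hz0 (funext fun u => ?_), heq⟩
  obtain ⟨p⟩ := Γ.isTree.connected v u
  induction p with
  | nil => exact hv
  | cons hadj _ ih => exact ih (hstep _ _ hadj hv)

end Potential

section Arcs

variable {V : Type v} {Γ : BrauerTree V} {K : Type u} [Field K] [Finite V]

theorem sum_arc_mul_sum_arc (p q : Γ.Arrow → Γ.Arrow → K) :
    (∑ a, ∑ b, p a b • arc K a b) * ∑ b, ∑ c, q b c • arc K b c =
      ∑ a, ∑ b, ∑ c, (p a b * q b c) • (arc K a b * arc K b c) := by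
  classical
  rw [alg_sum_mul]
  refine Finset.sum_congr rfl fun a _ => ?_
  rw [alg_sum_mul]
  refine Finset.sum_congr rfl fun b _ => ?_
  rw [alg_mul_sum, Finset.sum_eq_single b]
  · rw [alg_mul_sum]
    refine Finset.sum_congr rfl fun c _ => ?_
    rw [smul_mul_smul_comm]
  · intro b' _ hb
    rw [alg_mul_sum]
    refine Finset.sum_eq_zero fun c _ => ?_
    rw [smul_mul_smul_comm, arc_mul_arc_of_ne K _ _ hb.symm, smul_zero]
  · simp

theorem sum_smul_soc_eq_zero {r : Γ.Arrow → K} (h : ∀ d, r d + r d.symm = 0) :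
    ∑ d, r d • soc K (src d) = 0 := by
  refine Finset.sum_involution (fun d _ => d.symm) (fun d _ => ?_)
    (fun d _ _ => SimpleGraph.Dart.symm_ne d) (fun d _ => Finset.mem_univ _)
    (fun d _ => SimpleGraph.Dart.symm_symm d)
  rw [src_symm, ← add_smul, h, zero_smul]

/-- A product of combinations of arcs vanishes if the products of arcs that occur in it are full
turns whose coefficients cancel, or zero. -/
theorem sum_arc_mul_sum_arc_eq_zero {p q : Γ.Arrow → Γ.Arrow → K}
    (hp : ∀ a b, p a b ≠ 0 → a.fst = b.fst ∧ a ≠ b)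
    (h : ∀ a b c, p a b ≠ 0 → q b c ≠ 0 → a ≠ c → arc K a b * arc K b c = 0)
    (hr : ∀ d, ∑ b, p d b * q b d + ∑ b, p d.symm b * q b d.symm = 0) :
    (∑ a, ∑ b, p a b • arc K a b) * ∑ b, ∑ c, q b c • arc K b c = 0 := by
  classical
  rw [sum_arc_mul_sum_arc, ← sum_smul_soc_eq_zero (r := fun d => ∑ b, p d b * q b d) hr]
  refine Finset.sum_congr rfl fun a _ => ?_
  rw [Finset.sum_smul]
  refine Finset.sum_congr rfl fun b _ => ?_
  rw [Finset.sum_eq_single a]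
  · by_cases hab : p a b = 0
    · rw [hab, zero_mul, zero_smul, zero_smul]
    · rw [arc_mul_arc_self K (hp a b hab).1 (hp a b hab).2]
  · intro c _ hc
    by_cases hab : p a b = 0
    · rw [hab, zero_mul, zero_smul]
    by_cases hbc : q b c = 0
    · rw [hbc, mul_zero, zero_smul]
    rw [h a b c hab hbc hc.symm, smul_zero]
  · simp

theorem coefSoc_arc_mul_arc {a b c : Γ.Arrow} (hac : a ≠ c) (i : Γ.Edge) :
    coefSoc K i (arc K a b * arc K b c) = 0 := by
  by_cases h : a.fst = b.fst ∧ a ≠ b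
  · by_cases h' : b.fst = c.fst ∧ b ≠ c
    · rcases lt_trichotomy (dist a b + dist b c) (per a) with hlt | heq | hgt
      · rw [arc_mul_arc_of_lt K h.1 h'.1 h.2 h'.2 hlt, coefSoc_arc]
      · have h1 := dist_add_dist_comm h.1 h.2
        exact absurd (dist_right_inj h.1.symm h'.1 (by lia)) hac
      · rw [arc_mul_arc_of_gt K h.1 h'.1 h.2 h'.2 hgt, map_zero]
    · rw [arc_eq_zero K h', mul_zero, map_zero]
  · rw [arc_eq_zero K h, zero_mul, map_zero]

/-- The coefficient of the full turn at an edge of the tree in a product of arcs. -/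
theorem coefSoc_sum_arc_mul_sum_arc {p q : Γ.Arrow → Γ.Arrow → K}
    (hp : ∀ a b, p a b ≠ 0 → a.fst = b.fst ∧ a ≠ b) (d : Γ.Arrow) :
    coefSoc K (src d) ((∑ a, ∑ b, p a b • arc K a b) * ∑ b, ∑ c, q b c • arc K b c) =
      ∑ b, p d b * q b d + ∑ b, p d.symm b * q b d.symm := by
  classical
  have key : ∀ a b, coefSoc K (src d) (∑ c, (p a b * q b c) • (arc K a b * arc K b c)) =
      if src a = src d then p a b * q b a else 0 := by
    intro a b
    rw [map_sum, Finset.sum_eq_single a]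
    · by_cases hab : p a b = 0
      · simp [hab]
      rw [map_smul, arc_mul_arc_self K (hp a b hab).1 (hp a b hab).2]
      split_ifs with h
      · rw [h, coefSoc_soc_self, smul_eq_mul, mul_one]
      · rw [coefSoc_soc_of_ne K (Ne.symm h), smul_zero]
    · intro c _ hc
      rw [map_smul, coefSoc_arc_mul_arc hc.symm, smul_zero]
    · simp
  rw [sum_arc_mul_sum_arc, map_sum]
  have hfil : Finset.univ.filter (fun a : Γ.Arrow => src a = src d) = {d, d.symm} := by
    ext a
    simp [src_eq_src_iff]
  rw [← Finset.sum_pair (f := fun a => ∑ b, p a b * q b a) (SimpleGraph.Dart.symm_ne d).symm,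
    ← hfil, Finset.sum_filter]
  refine Finset.sum_congr rfl fun a _ => ?_
  rw [map_sum, Finset.sum_congr rfl fun b _ => key a b]
  split_ifs <;> simp

theorem coef_arc_mul_arc_of_ne {a b c a' c' : Γ.Arrow} (h : a' ≠ a ∨ c' ≠ c) :
    coef K a' c' (arc K a b * arc K b c) = 0 := by
  by_cases h1 : a.fst = b.fst ∧ a ≠ b
  · by_cases h2 : b.fst = c.fst ∧ b ≠ c
    · by_cases hac : a = c
      · rw [← hac, arc_mul_arc_self K h1.1 h1.2, coef_soc]
      rcases lt_trichotomy (dist a b + dist b c) (per a) with hlt | heq | hgt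
      · rw [arc_mul_arc_of_lt K h1.1 h2.1 h1.2 h2.2 hlt, coef_arc_of_ne K h]
      · have h3 := dist_add_dist_comm h1.1 h1.2
        exact absurd (dist_right_inj h1.1.symm h2.1 (by lia)) hac
      · rw [arc_mul_arc_of_gt K h1.1 h2.1 h1.2 h2.2 hgt, map_zero]
    · rw [arc_eq_zero K h2, mul_zero, map_zero]
  · rw [arc_eq_zero K h1, zero_mul, map_zero]

theorem coef_sum_arc_mul_sum_arc (p q : Γ.Arrow → Γ.Arrow → K) (a c : Γ.Arrow) :
    coef K a c ((∑ a, ∑ b, p a b • arc K a b) * ∑ b, ∑ c, q b c • arc K b c) =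
      ∑ b, p a b * q b c * coef K a c (arc K a b * arc K b c) := by
  classical
  rw [sum_arc_mul_sum_arc, map_sum, Finset.sum_eq_single a]
  · rw [map_sum]
    refine Finset.sum_congr rfl fun b _ => ?_
    rw [map_sum, Finset.sum_eq_single c]
    · rw [map_smul, smul_eq_mul]
    · intro c' _ hc
      rw [map_smul, coef_arc_mul_arc_of_ne (Or.inr hc.symm), smul_zero]
    · simp
  · intro a' _ ha
    rw [map_sum]
    refine Finset.sum_eq_zero fun b _ => ?_
    rw [map_sum]
    refine Finset.sum_eq_zero fun c' _ => ?_
    rw [map_smul, coef_arc_mul_arc_of_ne (Or.inl ha.symm), smul_zero]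
  · simp

end Arcs

end BrauerTree

namespace BrauerTree

variable {V : Type v} {Γ : BrauerTree V} {K : Type u} [Field K] [Finite V]

theorem coef_sum_arc (m : Γ.Arrow → Γ.Arrow → K) {a b : Γ.Arrow} (h : a.fst = b.fst)
    (hne : a ≠ b) : coef K a b (∑ a, ∑ b, m a b • arc K a b) = m a b := by
  rw [map_sum, Finset.sum_eq_single a]
  · rw [map_sum, Finset.sum_eq_single b]
    · rw [map_smul, coef_arc_self K h hne, smul_eq_mul, mul_one]
    · intro b' _ hb
      rw [map_smul, coef_arc_of_ne K (Or.inr hb.symm), smul_zero]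
    · simp
  · intro a' _ ha
    rw [map_sum]
    refine Finset.sum_eq_zero fun b' _ => ?_
    rw [map_smul, coef_arc_of_ne K (Or.inl ha.symm), smul_zero]
  · simp

namespace TwoTerm

variable {T U : Γ.TwoTerm K}

theorem IsAlternating.sum_c_mul (hT : T.IsAlternating) {d a : Γ.Arrow} (hda : a.fst = d.fst)
    (ha : src a ∈ T.J) (g : Γ.Arrow → K) : ∑ b, T.c d b * g b = T.c d a * g a := by
  refine Finset.sum_eq_single a (fun b _ hb => ?_) (by simp)
  by_contra h
  obtain ⟨h1, -, -, h2⟩ := mem_of_c_ne_zero (left_ne_zero_of_mul h)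
  exact hb (hT.eq_of_mem_J b a (h1.symm.trans hda.symm) h2 ha)

theorem IsAlternating.sum_mul_c (hT : T.IsAlternating) {d i : Γ.Arrow} (hdi : i.fst = d.fst)
    (hi : src i ∈ T.I) (g : Γ.Arrow → K) : ∑ b, g b * T.c b d = g i * T.c i d := by
  refine Finset.sum_eq_single i (fun b _ hb => ?_) (by simp)
  by_contra h
  obtain ⟨h1, -, h2, -⟩ := mem_of_c_ne_zero (right_ne_zero_of_mul h)
  exact hb (hT.eq_of_mem_I b i (h1.trans hdi.symm) h2 hi)

theorem IsSinkPair.source_eq_of_precedes (h : IsSinkPair T U) (hp : Precedes T U)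
    {i a i' : Γ.Arrow} (hia : i.fst = a.fst) (hia' : i'.fst = a.fst) (hi : src i ∈ T.I)
    (ha : src a ∈ T.J) (hi' : src i' ∈ U.I) : i = i' := by
  have hc : Common T U i := by
    have hd := h.left.source_mem hia hi ha
    exact ⟨hd, h.mem_of_precedes hp hd (hia'.trans hia.symm) (Or.inl hi')⟩
  exact h.source_eq hc rfl hi (hia'.trans hia.symm) hi'

theorem IsSinkPair.arc_mul_arc_eq_zero (h : IsSinkPair T U) (hp : Precedes T U)
    {a i a' : Γ.Arrow} (hai : a.fst = i.fst) (hia : i.fst = a'.fst) (ha : src a ∈ T.J)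
    (hi : src i ∈ U.I) (ha' : src a' ∈ U.J) (hne : a ≠ a') : arc K a i * arc K i a' = 0 := by
  obtain ⟨e, he, ⟨heT, heU⟩ | ⟨heT, heU⟩⟩ := h.exists_marked_at hai (Or.inr ha) (Or.inl hi)
  · obtain rfl := h.right.eq_of_mem_I e i (he.trans hai) heU hi
    have h1 : a ≠ e := (h.left.ne_of_mem heT ha).symm
    have h2 : e ≠ a' := h.right.ne_of_mem hi ha'
    refine arc_mul_arc_of_gt K hai hia h1 h2 ?_
    have h3 := hp.dist_le e a a' hai hia.symm heT heU ha ha'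
    have h4 := dist_add_dist_comm hai h1
    have h5 : dist e a ≠ dist e a' := fun he => hne (dist_right_inj hai.symm hia he)
    lia
  · refine absurd ?_ hne
    rw [← h.left.eq_of_mem_J e a he heT ha,
      h.right.eq_of_mem_J e a' ((he.trans hai).trans hia) heU ha']

/-- If `T` precedes `U`, then there is a nonzero morphism from `T` to `U[-1]`. -/
theorem IsSinkPair.exists_ne_zero_of_precedes (h : IsSinkPair T U) (hp : Precedes T U) :
    ∃ α : Γ.Alg K, idempSum K T.J * α = α ∧ α * idempSum K U.I = α ∧ T.F * α = 0 ∧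
      α * U.F = 0 ∧ α ≠ 0 := by
  classical
  let y : Γ.Arrow → K := fun d => if src d ∈ T.I then ∑ b, T.c d b * 1 else ∑ b, 1 * U.c b d
  obtain ⟨z, hz, hzy⟩ := exists_potential (fun d => if y d = 0 then 1 else y d) fun d => by
    split_ifs with h0
    · exact one_ne_zero
    · exact h0
  replace hzy : ∀ d, y d ≠ 0 → y d.symm ≠ 0 → y d * z d.fst + y d.symm * z d.snd = 0 := by
    intro d h1 h2
    have := hzy d
    rwa [if_neg h1, if_neg h2] at this
  let m : Γ.Arrow → Γ.Arrow → K := fun a b =>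
    if a.fst = b.fst ∧ src a ∈ T.J ∧ src b ∈ U.I then z a.fst else 0
  have hm : ∀ {a b}, a.fst = b.fst → src a ∈ T.J → src b ∈ U.I → m a b = z a.fst :=
    fun h1 h2 h3 => if_pos ⟨h1, h2, h3⟩
  have hm0 : ∀ {a b}, m a b ≠ 0 → a.fst = b.fst ∧ src a ∈ T.J ∧ src b ∈ U.I := fun h0 => by
    by_contra hcon
    exact h0 (if_neg hcon)
  have hne : ∀ {a b : Γ.Arrow}, src a ∈ T.J → src b ∈ U.I → a ≠ b := fun ha hb e =>
    h.symm.notMem_J hb (e ▸ ha)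
  refine ⟨∑ a, ∑ b, m a b • arc K a b, ?_, ?_, ?_, ?_, ?_⟩
  · rw [alg_mul_sum]
    refine Finset.sum_congr rfl fun a _ => ?_
    rw [alg_mul_sum]
    exact Finset.sum_congr rfl fun b _ => idempSum_mul_smul_arc fun h0 => (hm0 h0).2.1
  · rw [alg_sum_mul]
    refine Finset.sum_congr rfl fun a _ => ?_
    rw [alg_sum_mul]
    exact Finset.sum_congr rfl fun b _ => smul_arc_mul_idempSum fun h0 => (hm0 h0).2.2
  · rw [F_eq_sum h.left.disjoint]
    refine sum_arc_mul_sum_arc_eq_zero (fun a b h0 => ?_) (fun a b c h1 h2 hac => ?_) fun d => ?_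
    · exact ⟨(mem_of_c_ne_zero h0).1, (mem_of_c_ne_zero h0).2.1⟩
    · obtain ⟨h3, -, h4, h5⟩ := mem_of_c_ne_zero h1
      obtain ⟨h6, -, h7⟩ := hm0 h2
      exact absurd (h.source_eq_of_precedes hp h3 h6.symm h4 h5 h7) hac
    · have key : ∀ e : Γ.Arrow, src e ∈ T.I → src e ∈ U.I →
          y e ≠ 0 ∧ ∑ b, T.c e b * m b e = y e * z e.fst := by
        intro e he he'
        obtain ⟨a, ha, haJ⟩ := h.exists_J he he'
        have hy : y e = T.c e a := by
          simp only [y]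
          rw [if_pos he, h.left.sum_c_mul ha haJ, mul_one]
        rw [hy, h.left.sum_c_mul ha haJ, hm ha haJ he', ha]
        exact ⟨h.left.c_ne_zero e a ha.symm he haJ, rfl⟩
      by_cases hd : src d ∈ T.I ∧ src d ∈ U.I
      · obtain ⟨h1, h2⟩ := key d hd.1 hd.2
        obtain ⟨h3, h4⟩ := key d.symm (by rw [src_symm]; exact hd.1) (by rw [src_symm]; exact hd.2)
        rw [h2, h4]
        exact hzy d h1 h3
      · have h0 : ∀ e : Γ.Arrow, src e = src d → ∑ b, T.c e b * m b e = 0 := by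
          intro e he
          refine Finset.sum_eq_zero fun b _ => ?_
          by_contra hcon
          refine hd ⟨?_, ?_⟩
          · rw [← he]
            exact (mem_of_c_ne_zero (left_ne_zero_of_mul hcon)).2.2.1
          · rw [← he]
            exact (hm0 (right_ne_zero_of_mul hcon)).2.2
        rw [h0 d rfl, h0 d.symm (src_symm d), add_zero]
  · rw [F_eq_sum h.right.disjoint]
    refine sum_arc_mul_sum_arc_eq_zero (fun a b h0 => ?_) (fun a b c h1 h2 hac => ?_) fun d => ?_
    · exact ⟨(hm0 h0).1, hne (hm0 h0).2.1 (hm0 h0).2.2⟩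
    · obtain ⟨h3, h4, h5⟩ := hm0 h1
      obtain ⟨h6, -, -, h7⟩ := mem_of_c_ne_zero h2
      exact h.arc_mul_arc_eq_zero hp h3 h6 h4 h5 h7 hac
    · have key : ∀ e : Γ.Arrow, src e ∈ T.J → src e ∈ U.J →
          y e ≠ 0 ∧ ∑ b, m e b * U.c b e = y e * z e.fst := by
        intro e he he'
        obtain ⟨b, hb, hbI⟩ := hp.exists_source e he he'
        have hy : y e = U.c b e := by
          simp only [y]
          rw [if_neg fun hI => h.notMem_J hI he', h.right.sum_mul_c hb hbI, one_mul]
        rw [hy, h.right.sum_mul_c hb hbI, hm hb.symm he hbI, mul_comm]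
        exact ⟨h.right.c_ne_zero b e hb hbI he', rfl⟩
      by_cases hd : src d ∈ T.J ∧ src d ∈ U.J
      · obtain ⟨h1, h2⟩ := key d hd.1 hd.2
        obtain ⟨h3, h4⟩ := key d.symm (by rw [src_symm]; exact hd.1) (by rw [src_symm]; exact hd.2)
        rw [h2, h4]
        exact hzy d h1 h3
      · have h0 : ∀ e : Γ.Arrow, src e = src d → ∑ b, m e b * U.c b e = 0 := by
          intro e he
          refine Finset.sum_eq_zero fun b _ => ?_
          by_contra hcon
          refine hd ⟨?_, ?_⟩
          · rw [← he]
            exact (hm0 (left_ne_zero_of_mul hcon)).2.1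
          · rw [← he]
            exact (mem_of_c_ne_zero (right_ne_zero_of_mul hcon)).2.2.2
        rw [h0 d rfl, h0 d.symm (src_symm d), add_zero]
  · intro h0
    obtain ⟨x, hx, hx'⟩ := h.exists_marked
    obtain ⟨i, rfl⟩ := exists_src_eq x
    obtain ⟨a, ha, haJ⟩ := h.exists_J hx hx'
    apply hz a.fst
    rw [← hm ha haJ hx', ← coef_sum_arc m ha (hne haJ hx'), h0, map_zero]

/-- A property of vertices of the tree that passes along the common marked edges holds at all ends
of such edges if it holds at one of them. -/
theorem IsSinkPair.propagate (h : IsSinkPair T U) {Z : V → Prop}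
    (hZ : ∀ d : Γ.Arrow, src d ∈ T.marked → src d ∈ U.marked → Z d.fst → Z d.snd)
    {d e : Γ.Arrow} (hd : src d ∈ T.marked) (hd' : src d ∈ U.marked) (he : src e ∈ T.marked)
    (he' : src e ∈ U.marked) (h0 : Z d.fst) : Z e.fst := by
  have hZs : ∀ a b : Γ.Arrow, src a ∈ T.marked → src a ∈ U.marked → src a = src b →
      Z a.fst → Z b.fst := by
    intro a b ha ha' hab hza
    rcases src_eq_src_iff.1 hab with rfl | rfl
    · exact hza
    · exact hZ b.symm ha ha' hza
  have hinc : ∀ (a : Γ.Arrow) (x : Γ.Edge), src a = x ∨ tgt a = x →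
      ∃ a' : Γ.Arrow, src a' = x ∧ a'.fst = a.fst := by
    rintro a x (hs | hs)
    · exact ⟨a, hs, rfl⟩
    · exact ⟨Γ.next a, hs, Γ.next_fst a⟩
  have hstep : ∀ (a b : Γ.Arrow) (x : Γ.Edge), Common T U a → Common T U b →
      (src a = x ∨ tgt a = x) → (src b = x ∨ tgt b = x) → Z a.fst → Z b.fst := by
    intro a b x ha hb hax hbx hza
    obtain ⟨a', rfl, haf⟩ := hinc a x hax
    obtain ⟨b', hab, hbf⟩ := hinc b _ hbx
    rw [← haf] at hza
    rw [← hbf]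
    rcases src_eq_src_iff.1 hab with rfl | rfl
    · exact hza
    obtain ⟨c, hc, hcm⟩ := h.left.exists_marked ha.1
    obtain ⟨c', hc', hcm'⟩ := h.left.exists_marked hb.1
    obtain ⟨f, hf, hfm⟩ := h.right.exists_marked ha.2
    obtain ⟨f', hf', hfm'⟩ := h.right.exists_marked hb.2
    exact hZ a' (h.left.src_mem_marked (hc.trans haf.symm) (hc'.trans hbf.symm) hcm hcm')
      (h.right.src_mem_marked (hf.trans haf.symm) (hf'.trans hbf.symm) hfm hfm') hza
  have hgen : ∀ x y, Relation.EqvGen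
      (fun a b => ∃ d ∈ (T.diagram ∩ U.diagram).arrows, src d = a ∧ tgt d = b) x y →
      ((∀ a, Common T U a → src a = x ∨ tgt a = x → Z a.fst) ↔
        ∀ a, Common T U a → src a = y ∨ tgt a = y → Z a.fst) := by
    intro x y hxy
    induction hxy with
    | rel x y hr =>
      obtain ⟨a, ha, hax, hay⟩ := hr
      exact ⟨fun hw b hb hby => hstep a b y ha hb (Or.inr hay) hby (hw a ha (Or.inl hax)),
        fun hw b hb hbx => hstep a b x ha hb (Or.inl hax) hbx (hw a ha (Or.inr hay))⟩
    | refl x => exact Iff.rfl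
    | symm x y _ ih => exact ih.symm
    | trans x y z _ _ ih1 ih2 => exact ih1.trans ih2
  have hw := (hgen (src d) (src e) (h.connected.2 _ ⟨Or.inl hd, Or.inl hd'⟩ _
    ⟨Or.inl he, Or.inl he'⟩)).1 fun a ha has => by
      obtain ⟨a', haa, haf⟩ := hinc a _ has
      rw [← haf]
      exact hZs d a' hd hd' haa.symm h0
  obtain ⟨a, ha, has⟩ := h.exists_common_of_marked he he'
  obtain ⟨a', haa, haf⟩ := hinc a _ has
  exact hZs a' e (haa ▸ he) (haa ▸ he') haa (haf ▸ hw a ha has)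

/-- If there is a nonzero morphism from `T` to `U[-1]`, then `T` precedes `U`. -/
theorem IsSinkPair.precedes_of_ne_zero (h : IsSinkPair T U) {α : Γ.Alg K}
    (hl : idempSum K T.J * α = α) (hr : α * idempSum K U.I = α) (hTα : T.F * α = 0)
    (hαU : α * U.F = 0) (hα : α ≠ 0) : Precedes T U := by
  have hdisj : Disjoint T.J U.I :=
    Finset.disjoint_left.2 fun x hx hx' => h.symm.notMem_J hx' hx
  obtain ⟨m, hmdef⟩ : ∃ m : Γ.Arrow → Γ.Arrow → K, m = fun a b => coef K a b α := ⟨_, rfl⟩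
  have hm : ∀ {a b}, m a b ≠ 0 → a.fst = b.fst ∧ a ≠ b ∧ src a ∈ T.J ∧ src b ∈ U.I := by
    rw [hmdef]
    exact fun h0 => mem_of_coef_ne_zero hl hr h0
  have hsum : α = ∑ a, ∑ b, m a b • arc K a b := by
    rw [hmdef]
    exact eq_sum_arc hdisj hl hr
  have hc : ∀ {S : Γ.TwoTerm K} (a b : Γ.Arrow), S.c a b ≠ 0 → a.fst = b.fst ∧ a ≠ b :=
    fun a b h0 => ⟨(mem_of_c_ne_zero h0).1, (mem_of_c_ne_zero h0).2.1⟩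
  have eT : ∀ d, ∑ b, T.c d b * m b d + ∑ b, T.c d.symm b * m b d.symm = 0 := fun d => by
    rw [← coefSoc_sum_arc_mul_sum_arc hc, ← F_eq_sum h.left.disjoint, ← hsum, hTα, map_zero]
  have eU : ∀ d, ∑ b, m d b * U.c b d + ∑ b, m d.symm b * U.c b d.symm = 0 := fun d => by
    rw [← coefSoc_sum_arc_mul_sum_arc fun a b h0 => ⟨(hm h0).1, (hm h0).2.1⟩,
      ← F_eq_sum h.right.disjoint, ← hsum, hαU, map_zero]
  by_contra hnp
  have hpass : ∀ d : Γ.Arrow, src d ∈ T.marked → src d ∈ U.marked →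
      (∀ a b, a.fst = d.fst → m a b = 0) → ∀ a b, a.fst = d.snd → m a b = 0 := by
    intro d hdT hdU hz a b ha
    by_contra hab
    obtain ⟨h1, h2, h3, h4⟩ := hm hab
    have hmem : ∀ {S : Finset Γ.Edge}, src d ∈ S → src d.symm ∈ S := fun hS => by rwa [src_symm]
    rcases hdT with hI | hJ
    · have hI' := h.mem_I_of_marked hI hdU
      have hb : b = d.symm := h.right.eq_of_mem_I b d.symm (h1.symm.trans ha) h4 (hmem hI')
      have e := eT d
      rw [Finset.sum_eq_zero fun b' _ => ?_, zero_add,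
        h.left.sum_c_mul (d := d.symm) (a := a) ha h3, ← hb] at e
      · exact mul_ne_zero (h.left.c_ne_zero b a h1.symm (hb ▸ hmem hI) h3) hab e
      · by_contra h0
        exact right_ne_zero_of_mul h0 (hz b' d (hm (right_ne_zero_of_mul h0)).1)
    · have hJ' := h.mem_J_of_marked hJ hdU
      have hb : a = d.symm := h.left.eq_of_mem_J a d.symm ha h3 (hmem hJ)
      have e := eU d
      rw [Finset.sum_eq_zero fun b' _ => ?_, zero_add, ← hb, h.right.sum_mul_c h1.symm h4] at e
      · exact mul_ne_zero hab (h.right.c_ne_zero b a h1.symm h4 (hb ▸ hmem hJ')) e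
      · rw [hz d b' rfl, zero_mul]
  have hstart : ∃ d : Γ.Arrow, src d ∈ T.marked ∧ src d ∈ U.marked ∧
      ∀ a b, a.fst = d.fst → m a b = 0 := by
    by_contra hcon
    refine hnp ⟨fun i a a' ha ha' hi hi' haJ haJ' => ?_, fun j hj hj' => ?_⟩
    · by_contra hlt
      refine hcon ⟨i, Or.inl hi, Or.inl hi', fun a₁ b hab => ?_⟩
      by_contra h0
      obtain ⟨h1, h2, h3, h4⟩ := hm h0
      obtain rfl := h.left.eq_of_mem_J a₁ a (hab.trans ha.symm) h3 haJ
      obtain rfl := h.right.eq_of_mem_I b i (h1.symm.trans hab) h4 hi'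
      have hne := h.right.ne_of_mem hi' haJ'
      have hlt' : dist a₁ b + dist b a' < per a₁ := by
        have := dist_add_dist_comm h1 h2
        lia
      have hne' : a₁ ≠ a' := fun e => hlt (by rw [e])
      have e := coef_sum_arc_mul_sum_arc m U.c a₁ a'
      rw [← hsum, ← F_eq_sum h.right.disjoint, hαU, map_zero, Finset.sum_eq_single b,
        arc_mul_arc_of_lt K h1 ha'.symm h2 hne hlt', coef_arc_self K (hab.trans ha'.symm) hne',
        mul_one] at e
      · exact mul_ne_zero h0 (h.right.c_ne_zero b a' ha'.symm hi' haJ') e.symm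
      · intro b' _ hb'
        by_contra hcon'
        have h5 := hm (left_ne_zero_of_mul (left_ne_zero_of_mul hcon'))
        exact hb' (h.right.eq_of_mem_I b' b (h5.1.symm.trans hab) h5.2.2.2 hi')
      · simp
    · by_contra hno
      refine hcon ⟨j, Or.inr hj, Or.inr hj', fun a b hab => ?_⟩
      by_contra h0
      exact hno ⟨b, (hm h0).1.symm.trans hab, (hm h0).2.2.2⟩
  obtain ⟨d, hdT, hdU, hd⟩ := hstart
  apply hα
  rw [hsum]
  refine Finset.sum_eq_zero fun a _ => Finset.sum_eq_zero fun b _ => ?_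
  by_contra hcon
  have hab : m a b ≠ 0 := fun h0 => hcon (by rw [h0, zero_smul])
  obtain ⟨h1, -, h3, h4⟩ := hm hab
  obtain ⟨e, he, hem⟩ := h.exists_marked_at h1 (Or.inr h3) (Or.inl h4)
  refine hab (h.propagate (Z := fun v => ∀ a b : Γ.Arrow, a.fst = v → m a b = 0) hpass
    hdT hdU (e := e) ?_ ?_ hd a b he.symm)
  · exact hem.imp And.left And.left
  · exact hem.imp And.right And.right

theorem IsSinkPair.hom_shift_eq_zero_iff [HasDerivedCategory.{w} (ModuleCat (Γ.Alg K))]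
    (h : IsSinkPair T U) : (∀ φ : T.obj ⟶ U.obj⟦(-1 : ℤ)⟧, φ = 0) ↔ ¬ Precedes T U := by
  rw [TwoTerm.hom_shift_eq_zero_iff]
  constructor
  · intro h0 hp
    obtain ⟨α, h1, h2, h3, h4, h5⟩ := h.exists_ne_zero_of_precedes hp
    exact h5 (h0 α h1 h2 h3 h4)
  · intro hp α h1 h2 h3 h4
    by_contra h5
    exact hp (h.precedes_of_ne_zero h1 h2 h3 h4 h5)

theorem IsSinkPair.not_precedes (h : IsSinkPair T U)
    (hend : ∃ x, T.diagram.IsDegreeOne x ∧ U.diagram.IsDegreeOne x) : ¬ Precedes T U := by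
  intro hp
  obtain ⟨j, hj, hj', -, hU⟩ := h.exists_isDegreeOne_iff.1 hend
  obtain ⟨b, hb, hbI⟩ := hp.exists_source j hj hj'
  exact hU b hb hbI

end TwoTerm

end BrauerTree

theorem hom_vanishes_iff_both_ends_sinks {K : Type u} [Field K] [IsAlgClosed K]
    {V : Type v} [Finite V] (Γ : BrauerTree V)
    [HasDerivedCategory.{w} (ModuleCat (Γ.Alg K))]
    (Ti Tj : Γ.TwoTerm K)
    (hi : Ti.IsIndecPartialTilting) (hj : Tj.IsIndecPartialTilting)
    (hpi : Ti.IsPresentation) (hpj : Tj.IsPresentation)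
    (hconn : (Ti.diagram ∩ Tj.diagram).Connected)
    (hmany : (Ti.diagram ∩ Tj.diagram).verts.Nontrivial)
    (hsinks : ∀ x, (Ti.diagram ∩ Tj.diagram).IsDegreeOne x →
      (Ti.diagram ∩ Tj.diagram).IsSink x) :
    ((∀ φ : Ti.obj ⟶ Tj.obj⟦(-1 : ℤ)⟧, φ = 0) ∧
      (∀ φ : Tj.obj ⟶ Ti.obj⟦(-1 : ℤ)⟧, φ = 0)) ↔
    ((¬ Ti.restriction Tj ⊆ Tj.restriction Ti ∧ ¬ Tj.restriction Ti ⊆ Ti.restriction Tj) ∨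
      ∃ x, Ti.diagram.IsDegreeOne x ∧ Tj.diagram.IsDegreeOne x) := by
  have hTi := hpi.isAlternating (hpi.disjoint_of_hom_eq_zero (hi.2 (-1) (by decide)))
  have hTj := hpj.isAlternating (hpj.disjoint_of_hom_eq_zero (hj.2 (-1) (by decide)))
  have h : BrauerTree.TwoTerm.IsSinkPair Ti Tj := ⟨hTi, hTj, hconn, hmany, hsinks⟩
  rw [h.hom_shift_eq_zero_iff, h.symm.hom_shift_eq_zero_iff]
  by_cases hend : ∃ x, Ti.diagram.IsDegreeOne x ∧ Tj.diagram.IsDegreeOne x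
  · have hend' : ∃ x, Tj.diagram.IsDegreeOne x ∧ Ti.diagram.IsDegreeOne x :=
      hend.imp fun _ => And.symm
    exact iff_of_true ⟨h.not_precedes hend, h.symm.not_precedes hend'⟩ (Or.inr hend)
  · have hend' : ¬ ∃ x, Tj.diagram.IsDegreeOne x ∧ Ti.diagram.IsDegreeOne x := fun hx =>
      hend (hx.imp fun _ => And.symm)
    rw [h.restriction_subset_iff hend, h.symm.restriction_subset_iff hend', or_iff_left hend]
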